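/- Let S be an unramified regular local ring of mixed characteristic p ≥ 3. Assume S[ω] and S[μ] are integrally closed (i.e. f,g ∉ S^{p∧p²}), h₁ ≠ 0, h₂ ≠ 0, and fg ∈ S^{p∧p²}. Then R is a Cohen-Macaulay ring if and only if the ideal Q := (p, h₁, h₂) of S can be generated by two elements or equals S. Moreover, the projective dimension of R as an S-module satisfies pd_S(R) ≤ 1. -/

import Mathlib

/-- A height one prime ideal of a commutative ring. -/
def IsHeightOnePrime {S : Type*} [CommRing S] (P : Ideal S) : Prop :=
  ∃ hP : P.IsPrime, Order.height (⟨P, hP⟩ : PrimeSpectrum S) = 1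

/-- `c ∈ S` is square free if `P S_P = c S_P` for every height one prime `P` containing `c`. -/
def PaperSquarefree {S : Type*} [CommRing S] (c : S) : Prop :=
  ∀ (P : Ideal S) (hP : P.IsPrime), Order.height (⟨P, hP⟩ : PrimeSpectrum S) = 1 → c ∈ P →
    haveI := hP
    Ideal.map (algebraMap S (Localization.AtPrime P)) P =
      Ideal.span {algebraMap S (Localization.AtPrime P) c}

/-- Two elements satisfy `𝒜₁` if no height one prime contains both of them. -/
def SatisfiesA1 {S : Type*} [CommRing S] (f g : S) : Prop :=
  ∀ P : Ideal S, IsHeightOnePrime P → ¬(f ∈ P ∧ g ∈ P)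

/-- The depth of a module over a local ring: the supremum of the lengths of
regular sequences on `M` contained in the maximal ideal. -/
noncomputable def modDepth (S : Type*) [CommRing S] [IsLocalRing S]
    (M : Type*) [AddCommGroup M] [Module S M] : ℕ∞ :=
  sSup {n : ℕ∞ | ∃ rs : List S, (rs.length : ℕ∞) = n ∧
    (∀ r ∈ rs, r ∈ IsLocalRing.maximalIdeal S) ∧ RingTheory.Sequence.IsRegular M rs}

/-- A commutative ring is Cohen-Macaulay if each of its localizations at a prime
has depth equal to its Krull dimension. -/
def IsCMRing (R : Type*) [CommRing R] : Prop :=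
  ∀ (Q : Ideal R) (hQ : Q.IsPrime),
    haveI := hQ
    (modDepth (Localization.AtPrime Q) (Localization.AtPrime Q) : WithBot ℕ∞) =
      ringKrullDim (Localization.AtPrime Q)

/-- The `n`-th symbolic power of a prime ideal `P`, i.e. `Pⁿ A_P ∩ A`. -/
noncomputable def symbPow {A : Type*} [CommRing A] (P : Ideal A) (hP : P.IsPrime) (n : ℕ) :
    Ideal A :=
  haveI := hP
  Ideal.comap (algebraMap A (Localization.AtPrime P))
    (Ideal.map (algebraMap A (Localization.AtPrime P)) (P ^ n))

/-- `ω`, as an element of the subalgebra `A = S[ω,μ]`. -/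
noncomputable def omegaA {S : Type*} [CommRing S] {K : Type*} [Field K] [Algebra S K]
    (ω μ : K) : Algebra.adjoin S ({ω, μ} : Set K) :=
  ⟨ω, Algebra.subset_adjoin (Set.mem_insert _ _)⟩

/-- `μ`, as an element of the subalgebra `A = S[ω,μ]`. -/
noncomputable def muA {S : Type*} [CommRing S] {K : Type*} [Field K] [Algebra S K]
    (ω μ : K) : Algebra.adjoin S ({ω, μ} : Set K) :=
  ⟨μ, Algebra.subset_adjoin (Set.mem_insert_of_mem _ rfl)⟩

/-- The ideal `P = (p, ω−h₁, μ−h₂)` of `A = S[ω,μ]`. -/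
noncomputable def Pid {S : Type*} [CommRing S] {K : Type*} [Field K] [Algebra S K]
    (p : ℕ) (ω μ : K) (h₁ h₂ : S) : Ideal (Algebra.adjoin S ({ω, μ} : Set K)) :=
  Ideal.span {(p : Algebra.adjoin S ({ω, μ} : Set K)),
    omegaA ω μ - algebraMap S _ h₁, muA ω μ - algebraMap S _ h₂}

/-- The colon module `(A :_K N) = {x ∈ K : x·N ⊆ A}`, as an `S`-submodule of `K`. -/
noncomputable def colonSubmodule (S : Type*) [CommRing S] (K : Type*) [Field K] [Algebra S K]
    (A : Subalgebra S K) (N : Set K) : Submodule S K where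
  carrier := {x : K | ∀ z ∈ N, x * z ∈ A}
  add_mem' := fun hx hy z hz => by
    simpa [add_mul] using add_mem (hx z hz) (hy z hz)
  zero_mem' := fun z hz => by simpa using A.zero_mem
  smul_mem' := fun c x hx z hz => by
    rw [Algebra.smul_def, mul_assoc]
    exact mul_mem (A.algebraMap_mem c) (hx z hz)

/-- `M` admits a free resolution `0 → Sⁿ → Sᵐ → M → 0`; for a finitely generated
module over a Noetherian local ring this says exactly `pd_S(M) ≤ 1`. -/
def HasFreeResLengthLE1 (S : Type*) [CommRing S] (M : Type*) [AddCommGroup M] [Module S M] :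
    Prop :=
  ∃ (n m : ℕ) (φ : (Fin n → S) →ₗ[S] (Fin m → S)) (ψ : (Fin m → S) →ₗ[S] M),
    Function.Injective φ ∧ Function.Surjective ψ ∧ LinearMap.range φ = LinearMap.ker ψ

/-- The ideal `Q` contains an `S`-regular sequence of length three, i.e. `Q` has grade
(at least) three. -/
def ContainsRegSeq3 (S : Type*) [CommRing S] (Q : Ideal S) : Prop :=
  ∃ rs : List S, rs.length = 3 ∧ (∀ r ∈ rs, r ∈ Q) ∧ RingTheory.Sequence.IsRegular S rs

section

open scoped Pointwise in
open IsLocalRing RingTheory.Sequence in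
theorem d_ass_depth {S : Type*} [CommRing S] [IsLocalRing S] [IsNoetherianRing S]
    (rs : List S) : ∀ (M : Type*) [AddCommGroup M] [Module S M] [Module.Finite S M],
    (∀ r ∈ rs, r ∈ maximalIdeal S) → IsWeaklyRegular M rs →
    ∀ P ∈ associatedPrimes S M, (rs.length : WithBot ℕ∞) ≤ ringKrullDim (S ⧸ P) := by
  induction rs with
  | nil =>
    intro M _ _ _ _ _ P hP
    have := hP.1
    simpa using ringKrullDim_nonneg_of_nontrivial
  | cons x rs ih =>
    intro M _ _ _ hm hreg P hP
    rw [isWeaklyRegular_cons_iff] at hreg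
    obtain ⟨hx, hrs⟩ := hreg
    have hxm : x ∈ maximalIdeal S := hm x (by simp)
    have hPp := hP.1
    obtain ⟨-, y, hy⟩ := isAssociatedPrime_iff.1 hP
    have hyP : ∀ r : S, r ∈ P ↔ r • y = 0 := by
      intro r; rw [hy]; simp [Submodule.mem_colon_singleton]
    have hy0 : y ≠ 0 := by
      rintro rfl
      exact hPp.ne_top (Ideal.eq_top_iff_one _ |>.2 ((hyP 1).2 (by simp)))
    have hxP : x ∉ P := by
      intro h
      exact hy0 (hx.right_eq_zero_of_smul ((hyP x).1 h))
    let N : Submodule S M := Submodule.torsionBySet S M (P : Set S)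
    have hyN : y ∈ N := by
      rw [Submodule.mem_torsionBySet_iff]
      intro r
      exact (hyP r).1 r.2
    obtain ⟨z, hzN, hzx⟩ : ∃ z ∈ N, z ∉ x • (⊤ : Submodule S M) := by
      by_contra! hcon
      have : N ≤ (maximalIdeal S) • N := by
        intro z hz
        obtain ⟨z', -, hz'⟩ := Submodule.mem_smul_pointwise_iff_exists _ _ _ |>.1 (hcon z hz)
        rw [← hz']
        refine Submodule.smul_mem_smul hxm ?_
        rw [Submodule.mem_torsionBySet_iff] at hz ⊢
        intro r
        have h1 := hz r
        rw [← hz', smul_comm] at h1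
        exact hx.right_eq_zero_of_smul h1
      have hb := Submodule.eq_bot_of_le_smul_of_le_jacobson_bot (maximalIdeal S) N
        (IsNoetherian.noetherian _) this (IsLocalRing.maximalIdeal_le_jacobson _)
      rw [hb] at hyN
      exact hy0 (by simpa using hyN)
    have hz0 : (Submodule.Quotient.mk z : QuotSMulTop x M) ≠ 0 := by
      intro h
      exact hzx ((Submodule.Quotient.mk_eq_zero _).1 h)
    obtain ⟨P', hP', hle⟩ := exists_le_isAssociatedPrime_of_isNoetherianRing S _ hz0
    have hPP' : P ≤ P' := by
      intro r hr
      apply hle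
      rw [Submodule.mem_colon_singleton, ← Submodule.Quotient.mk_smul]
      rw [Submodule.mem_torsionBySet_iff] at hzN
      simp [hzN ⟨r, hr⟩]
    have hxP' : x ∈ P' := by
      apply hle
      rw [Submodule.mem_colon_singleton, ← Submodule.Quotient.mk_smul]
      simp only [Submodule.mem_bot]
      rw [Submodule.Quotient.mk_eq_zero]
      exact Submodule.smul_mem_pointwise_smul _ _ _ trivial
    have h1 := ih (QuotSMulTop x M) (fun r hr => hm r (by simp [hr])) hrs P' hP'
    have h2 : ringKrullDim (S ⧸ P') + 1 ≤ ringKrullDim (S ⧸ P) := by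
      refine ringKrullDim_succ_le_of_surjective (Ideal.Quotient.factor hPP')
        (Ideal.Quotient.factor_surjective hPP') (r := Ideal.Quotient.mk P x) ?_ ?_
      · rw [mem_nonZeroDivisors_iff_ne_zero]
        rwa [Ne, Ideal.Quotient.eq_zero_iff_mem]
      · simpa [Ideal.Quotient.eq_zero_iff_mem] using hxP'
    rw [List.length_cons]
    push_cast
    exact le_trans (by gcongr) h2

open IsLocalRing RingTheory.Sequence CategoryTheory CategoryTheory.Abelian in
theorem d_exchange {S : Type u} [CommRing S] [IsLocalRing S] [IsNoetherianRing S]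
    (M : Type u) [AddCommGroup M] [Module S M] [Module.Finite S M] (n : ℕ)
    (h : ∃ rs : List S, rs.length = n + 1 ∧ (∀ r ∈ rs, r ∈ maximalIdeal S) ∧ IsRegular M rs)
    (y : S) (hy : y ∈ maximalIdeal S) (hyr : IsSMulRegular M y) :
    ∃ rs : List S, rs.length = n ∧ (∀ r ∈ rs, r ∈ maximalIdeal S) ∧
      IsRegular (QuotSMulTop y M) rs := by
  have hnt : Nontrivial M := by obtain ⟨rs, -, -, h⟩ := h; exact h.nontrivial
  have key : ∀ (M' : Type u) [AddCommGroup M'] [Module S M'] [Module.Finite S M'] [Nontrivial M'],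
      maximalIdeal S • (⊤ : Submodule S M') < ⊤ := by
    intro M' _ _ _ _
    refine lt_top_iff_ne_top.2 (fun h => ?_)
    have := Submodule.eq_bot_of_le_smul_of_le_jacobson_bot (maximalIdeal S) (⊤ : Submodule S M')
      Module.Finite.fg_top h.ge (IsLocalRing.maximalIdeal_le_jacobson _)
    exact absurd this top_ne_bot
  have : Nontrivial (QuotSMulTop y M) := nontrivial_quotSMulTop_of_mem_maximalIdeal M hy
  have e1 := ModuleCat.exists_isRegular_tfae (maximalIdeal S) (n + 1) (ModuleCat.of S M) (key M)
  have e2 := ModuleCat.exists_isRegular_tfae (maximalIdeal S) n (ModuleCat.of S (QuotSMulTop y M))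
    (key _)
  have h1 := (e1.out 3 1).1 h
  refine (e2.out 1 3).1 ?_
  intro i hi
  have zero1 := AddCommGrpCat.isZero_of_iff_subsingleton.mpr (h1 i (by omega))
  have zero2 := AddCommGrpCat.isZero_of_iff_subsingleton.mpr (h1 (i + 1) (by omega))
  exact AddCommGrpCat.subsingleton_of_isZero <| ShortComplex.Exact.isZero_of_both_zeros
    ((Ext.covariant_sequence_exact₃' _ (IsSMulRegular.smulShortComplex_shortExact
      (M := ModuleCat.of S M) hyr)) i (i + 1) rfl)
    (zero1.eq_zero_of_src _) (zero2.eq_zero_of_tgt _)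

open IsLocalRing RingTheory.Sequence in
theorem d_exists_regular {S : Type u} [CommRing S] [IsLocalRing S] [IsNoetherianRing S]
    (M : Type u) [AddCommGroup M] [Module S M] [Module.Finite S M] (n : ℕ)
    (h : ∃ rs : List S, rs.length = n + 1 ∧ (∀ r ∈ rs, r ∈ maximalIdeal S) ∧ IsRegular M rs)
    (q : Ideal S) (hq : ringKrullDim (S ⧸ q) ≤ n) : ∃ y ∈ q, IsSMulRegular M y := by
  by_contra! hcon
  have hsub : (q : Set S) ⊆ ⋃ P ∈ associatedPrimes S M, (P : Set S) := by
    rw [biUnion_associatedPrimes_eq_compl_regular]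
    intro y hy
    exact hcon y hy
  have hfin := associatedPrimes.finite S M
  rw [Ideal.subset_union_prime_finite hfin ⊥ ⊥ (fun P hP _ _ => hP.1)] at hsub
  obtain ⟨P, hP, hle⟩ := hsub
  obtain ⟨rs, hlen, hmem, hr⟩ := h
  have h1 := d_ass_depth rs M hmem hr.toIsWeaklyRegular P hP
  have h2 : ringKrullDim (S ⧸ P) ≤ ringKrullDim (S ⧸ q) :=
    ringKrullDim_le_of_surjective (Ideal.Quotient.factor hle) (Ideal.Quotient.factor_surjective hle)
  have h3 := (h1.trans h2).trans hq
  rw [hlen] at h3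
  have : n + 1 ≤ n := by exact_mod_cast h3
  omega

open IsLocalRing RingTheory.Sequence in
theorem d_grade {S : Type u} [CommRing S] [IsLocalRing S] [IsNoetherianRing S]
    (q : Ideal S) (hqt : q ≤ maximalIdeal S) (e : ℕ) (hq : ringKrullDim (S ⧸ q) ≤ e) (t : ℕ) :
    ∀ (M : Type u) [AddCommGroup M] [Module S M] [Module.Finite S M] (n : ℕ)
    (_ : ∃ rs : List S, rs.length = n ∧ (∀ r ∈ rs, r ∈ maximalIdeal S) ∧ IsRegular M rs)
    (_ : t + e ≤ n), ∃ rs : List S, rs.length = t ∧ (∀ r ∈ rs, r ∈ q) ∧ IsWeaklyRegular M rs := by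
  induction t with
  | zero => intro M _ _ _ n _ _; exact ⟨[], by simp⟩
  | succ t ih =>
    intro M _ _ _ n h hn
    obtain ⟨n, rfl⟩ : ∃ k, n = k + 1 := ⟨n - 1, by omega⟩
    obtain ⟨y, hyq, hy⟩ := d_exists_regular M n h q (hq.trans (by exact_mod_cast (by omega : e ≤ n)))
    obtain ⟨rs, hl, hm, hr⟩ := ih (QuotSMulTop y M) n (d_exchange M n h y (hqt hyq) hy) (by omega)
    refine ⟨y :: rs, by simp [hl], by simpa [hyq] using hm, ?_⟩
    rw [isWeaklyRegular_cons_iff]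
    exact ⟨hy, hr⟩

end

section

open IsLocalRing in
/-- Regular local of dimension `d`. -/
def RegD (T : Type u) [CommRing T] [IsLocalRing T] (d : ℕ) : Prop :=
  (∃ s : Finset T, Ideal.span (s : Set T) = maximalIdeal T ∧ s.card ≤ d) ∧
    (d : WithBot ℕ∞) ≤ ringKrullDim T

theorem quot_local {T : Type u} [CommRing T] [IsLocalRing T] {x : T}
    (hx : x ∈ IsLocalRing.maximalIdeal T) : IsLocalRing (T ⧸ Ideal.span {x}) := by
  have : Nontrivial (T ⧸ Ideal.span {x}) := by
    rw [Ideal.Quotient.nontrivial_iff, Ne, Ideal.span_singleton_eq_top]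
    simpa using hx
  exact IsLocalRing.of_surjective' (Ideal.Quotient.mk _) Ideal.Quotient.mk_surjective

theorem withBot_le_of_succ {d : ℕ} {a : WithBot ℕ∞} (h : (d : WithBot ℕ∞) + 1 ≤ a + 1) :
    (d : WithBot ℕ∞) ≤ a := by
  induction a using WithBot.recBotCoe with
  | bot =>
    rw [WithBot.bot_add] at h
    have h' := le_bot_iff.1 h
    exact absurd h' (by exact_mod_cast WithBot.coe_ne_bot (a := ((d + 1 : ℕ) : ℕ∞)))
  | coe a =>
    have : ((d : ℕ∞) + 1) ≤ a + 1 := by exact_mod_cast h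
    have h2 : (d : ℕ∞) ≤ a := (ENat.add_le_add_iff_right (by simp)).1 this
    exact_mod_cast h2

open IsLocalRing in
theorem regD_step {T : Type u} [CommRing T] [IsLocalRing T] [IsNoetherianRing T] {d : ℕ}
    (h : RegD T (d + 1)) {x : T} (hx : x ∈ maximalIdeal T) (hx2 : x ∉ maximalIdeal T ^ 2)
    [IsLocalRing (T ⧸ Ideal.span {x})] : RegD (T ⧸ Ideal.span {x}) d := by
  classical
  obtain ⟨⟨s, hs, hsc⟩, hd⟩ := h
  constructor
  · have hx' := hx
    rw [← hs] at hx'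
    obtain ⟨c, -, hc⟩ := Submodule.mem_span_finset.1 hx'
    have hsm : ∀ y ∈ s, y ∈ maximalIdeal T := fun y hy => hs ▸ Ideal.subset_span hy
    obtain ⟨y, hys, hyu⟩ : ∃ y ∈ s, IsUnit (c y) := by
      by_contra! hcon
      apply hx2
      rw [← hc]
      refine Ideal.sum_mem _ fun y hy => ?_
      rw [smul_eq_mul, pow_two]
      exact Ideal.mul_mem_mul ((mem_maximalIdeal _).2 (hcon y hy)) (hsm y hy)
    obtain ⟨u, hu⟩ := hyu
    refine ⟨(s.erase y).image (Ideal.Quotient.mk _), ?_, ?_⟩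
    · rw [← map_maximalIdeal_of_surjective (Ideal.Quotient.mk (Ideal.span {x}))
        Ideal.Quotient.mk_surjective, ← hs, Ideal.map_span, Finset.coe_image]
      apply le_antisymm
      · exact Ideal.span_mono (Set.image_mono (by simp))
      · rw [Ideal.span_le]
        rintro _ ⟨w, hw, rfl⟩
        by_cases hwy : w = y
        · subst hwy
          rw [← Finset.add_sum_erase _ _ hys, ← hu] at hc
          have h0 : Ideal.Quotient.mk (Ideal.span {x}) x = 0 :=
            Ideal.Quotient.eq_zero_iff_mem.2 (Ideal.mem_span_singleton_self x)
          have h1 : w = ↑u⁻¹ * (x - ∑ y ∈ s.erase w, c y • y) := by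
            rw [← hc]; simp
          have h2 : Ideal.Quotient.mk (Ideal.span {x}) w = Ideal.Quotient.mk _ (↑u⁻¹ : T) *
              -(∑ y ∈ s.erase w, Ideal.Quotient.mk (Ideal.span {x}) (c y • y)) := by
            conv_lhs => rw [h1]
            rw [map_mul, map_sub, h0, zero_sub, map_sum]
          rw [SetLike.mem_coe, h2]
          refine Ideal.mul_mem_left _ _ (neg_mem (Ideal.sum_mem _ fun z hz => ?_))
          rw [smul_eq_mul, map_mul]
          exact Ideal.mul_mem_left _ _ (Ideal.subset_span ⟨z, hz, rfl⟩)
        · refine Ideal.subset_span ⟨w, ?_, rfl⟩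
          simpa [hwy] using hw
    · have h1 := Finset.card_erase_of_mem hys
      have := Finset.card_image_le (s := s.erase y) (f := Ideal.Quotient.mk (Ideal.span {x}))
      omega
  · have h1 := ringKrullDim_le_ringKrullDim_quotient_add_card ({x} : Finset T) (by
      simpa [IsLocalRing.ringJacobson_eq_maximalIdeal] using hx)
    simp only [Finset.card_singleton, Finset.coe_singleton] at h1
    have h2 := hd.trans h1
    push_cast at h2
    rw [Finset.coe_singleton] at h2
    exact withBot_le_of_succ h2

open IsLocalRing in
theorem regD_not_field {T : Type u} [CommRing T] [IsLocalRing T] [IsNoetherianRing T] {d : ℕ}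
    (h : RegD T (d + 1)) {P : Ideal T} (hP : P ∈ minimalPrimes T) : ¬ maximalIdeal T ≤ P := by
  intro hle
  have := hP.1.1
  have heq : maximalIdeal T = P := le_antisymm hle (le_maximalIdeal hP.1.1.ne_top)
  have h2 : (maximalIdeal T).height = 0 := by
    rw [heq]
    exact Ideal.height_eq_zero_iff.2 hP
  have h1 := maximalIdeal_height_eq_ringKrullDim (R := T)
  rw [h2] at h1
  have h3 := h.2
  rw [← h1] at h3
  have : d + 1 ≤ 0 := by exact_mod_cast h3
  omega

open IsLocalRing in
theorem regD_exists {T : Type u} [CommRing T] [IsLocalRing T] [IsNoetherianRing T] {d : ℕ}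
    (h : RegD T (d + 1)) : ∃ x ∈ maximalIdeal T, x ∉ maximalIdeal T ^ 2 ∧
      ∀ P ∈ minimalPrimes T, x ∉ P := by
  classical
  by_contra! hcon
  have hfin := (minimalPrimes.finite_of_isNoetherianRing T).insert (maximalIdeal T ^ 2)
  have hsub : (maximalIdeal T : Set T) ⊆ ⋃ P ∈ insert (maximalIdeal T ^ 2) (minimalPrimes T),
      (P : Set T) := by
    intro x hx
    by_cases h2 : x ∈ maximalIdeal T ^ 2
    · exact Set.mem_biUnion (Set.mem_insert _ _) h2
    · obtain ⟨P, hP, hxP⟩ := hcon x hx h2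
      exact Set.mem_biUnion (Set.mem_insert_of_mem _ hP) hxP
  rw [Ideal.subset_union_prime_finite hfin (f := fun P => P) (maximalIdeal T ^ 2) (maximalIdeal T ^ 2)] at hsub
  · obtain ⟨P, hP, hle⟩ := hsub
    rcases hP with rfl | hP
    · have hb : maximalIdeal T = ⊥ := by
        apply Submodule.eq_bot_of_le_smul_of_le_jacobson_bot (maximalIdeal T) _
          (IsNoetherian.noetherian _) _ (IsLocalRing.maximalIdeal_le_jacobson _)
        simpa [pow_two] using hle
      obtain ⟨P, hP⟩ := Ideal.nonempty_minimalPrimes (I := (⊥ : Ideal T)) bot_ne_top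
      exact regD_not_field h hP (by rw [hb]; exact bot_le)
    · exact regD_not_field h hP hle
  · rintro P (rfl | hP) h1 h2
    · exact absurd rfl h1
    · exact hP.1.1

open IsLocalRing in
theorem regD_domain (d : ℕ) : ∀ (T : Type u) [CommRing T] [IsLocalRing T] [IsNoetherianRing T],
    RegD T d → IsDomain T := by
  induction d with
  | zero =>
    intro T _ _ _ h
    obtain ⟨⟨s, hs, hsc⟩, -⟩ := h
    have : s = ∅ := by simpa using hsc
    rw [this] at hs
    have hf : IsField T := isField_iff_maximalIdeal_eq.2 (by rw [← hs]; simp)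
    exact hf.isDomain
  | succ d ih =>
    intro T _ _ _ h
    obtain ⟨x, hx, hx2, hxP⟩ := regD_exists h
    have := quot_local hx
    have hd := ih _ (regD_step h hx hx2)
    have hpr : (Ideal.span {x}).IsPrime := (Ideal.Quotient.isDomain_iff_prime _).1 hd
    obtain ⟨P, hP, hle⟩ := Ideal.exists_minimalPrimes_le (J := Ideal.span {x}) (I := ⊥) bot_le
    have hPp := hP.1.1
    have hb : P = ⊥ := by
      apply Submodule.eq_bot_of_le_smul_of_le_jacobson_bot (maximalIdeal T) _
          (IsNoetherian.noetherian _) _ (IsLocalRing.maximalIdeal_le_jacobson _)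
      intro y hy
      obtain ⟨z, rfl⟩ := Ideal.mem_span_singleton'.1 (hle hy)
      rw [mul_comm, ← smul_eq_mul]
      exact Submodule.smul_mem_smul hx ((hPp.mem_or_mem hy).resolve_right (hxP P hP))
    rw [hb] at hPp
    exact IsDomain.of_bot_isPrime T

open scoped Pointwise in
/-- Auxiliary identification. -/
noncomputable def quotSMulTopSelf {T : Type u} [CommRing T] (x : T) :
    QuotSMulTop x T ≃ₗ[T] (T ⧸ Ideal.span {x}) :=
  Submodule.quotEquivOfEq _ _ (by
    ext y
    simp only [Submodule.mem_smul_pointwise_iff_exists, Ideal.mem_span_singleton', smul_eq_mul]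
    constructor
    · rintro ⟨b, -, rfl⟩; exact ⟨b, mul_comm _ _⟩
    · rintro ⟨b, rfl⟩; exact ⟨b, trivial, mul_comm _ _⟩)

open IsLocalRing RingTheory.Sequence in
theorem regD_regular (d : ℕ) : ∀ (T : Type u) [CommRing T] [IsLocalRing T] [IsNoetherianRing T],
    RegD T d → ∃ rs : List T, rs.length = d ∧ (∀ r ∈ rs, r ∈ maximalIdeal T) ∧ IsRegular T rs := by
  induction d with
  | zero => intro T _ _ _ h; exact ⟨[], by simp, by simp, IsRegular.nil _ _⟩
  | succ d ih =>
    intro T _ _ _ h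
    obtain ⟨x, hx, hx2, hxP⟩ := regD_exists h
    have := quot_local hx
    have hdom := regD_domain _ T h
    obtain ⟨rs, hl, hm, hr⟩ := ih _ (regD_step h hx hx2)
    obtain ⟨rs', hrs'⟩ : ∃ rs' : List T, rs'.map (Ideal.Quotient.mk (Ideal.span {x})) = rs :=
      List.map_surjective_iff.2 Ideal.Quotient.mk_surjective rs
    subst hrs'
    have hmem : ∀ r ∈ rs', r ∈ maximalIdeal T := by
      intro r hr'
      have := hm _ (List.mem_map_of_mem hr')
      rw [mem_maximalIdeal] at this ⊢
      exact fun hu => this (hu.map _)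
    have hall : ∀ r ∈ x :: rs', r ∈ maximalIdeal T := by
      intro r hr
      rcases List.mem_cons.1 hr with rfl | hr
      · exact hx
      · exact hmem r hr
    refine ⟨x :: rs', by simpa using hl, hall, ?_⟩
    rw [isRegular_iff_isWeaklyRegular_of_subset_maximalIdeal hall,
      isWeaklyRegular_cons_iff]
    refine ⟨?_, ?_⟩
    · have hx0 : x ≠ 0 := by rintro rfl; exact hx2 (zero_mem _)
      intro a b hab
      exact mul_left_cancel₀ hx0 hab
    · rw [(quotSMulTopSelf x).isWeaklyRegular_congr, ← isWeaklyRegular_map_algebraMap_iff (T ⧸ Ideal.span {x})]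
      exact hr.toIsWeaklyRegular

end

section

/-- Finite free resolutions of length at most `n`. -/
def PdLE (T : Type u) [CommRing T] : ℕ → ∀ (M : Type u) [AddCommGroup M] [Module T M], Prop
  | 0, M, _, _ => Module.Free T M
  | n + 1, M, _, _ => ∃ (k : ℕ) (φ : (Fin k → T) →ₗ[T] M), Function.Surjective φ ∧
      PdLE T n (LinearMap.ker φ)

theorem PdLE.of_equiv {T : Type u} [CommRing T] (n : ℕ) : ∀ {M N : Type u} [AddCommGroup M]
    [Module T M] [AddCommGroup N] [Module T N] (_ : M ≃ₗ[T] N), PdLE T n M → PdLE T n N := by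
  induction n with
  | zero =>
    intro M N _ _ _ _ e h
    have : Module.Free T M := h
    exact Module.Free.of_equiv e
  | succ n ih =>
    intro M N _ _ _ _ e h
    obtain ⟨k, φ, hs, hk⟩ := h
    refine ⟨k, e.toLinearMap ∘ₗ φ, e.surjective.comp hs, ?_⟩
    rw [LinearEquiv.ker_comp]
    exact hk

theorem PdLE.of_free {T : Type u} [CommRing T] [Nontrivial T] {n : ℕ} {M F : Type u} [AddCommGroup M]
    [Module T M] [AddCommGroup F] [Module T F] [Module.Free T F] [Module.Finite T F]
    (φ : F →ₗ[T] M) (hs : Function.Surjective φ) (h : PdLE T n (LinearMap.ker φ)) :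
    PdLE T (n + 1) M := by
  let e : (Fin (Module.finrank T F) → T) ≃ₗ[T] F := (Module.finBasis T F).equivFun.symm
  refine ⟨_, φ ∘ₗ e.toLinearMap, hs.comp e.surjective, PdLE.of_equiv n ?_ h⟩
  exact LinearEquiv.ofSubmodules e.symm _ _ (by
    ext y
    constructor
    · rintro ⟨z, hz, rfl⟩
      simpa using hz
    · intro hy
      exact ⟨e y, by simpa using hy, by simp⟩)

theorem PdLE.prod {T : Type u} [CommRing T] [Nontrivial T] {n : ℕ} {M F : Type u} [AddCommGroup M]
    [Module T M] [AddCommGroup F] [Module T F] [Module.Free T F] [Module.Finite T F]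
    (h : PdLE T n M) : PdLE T n (M × F) := by
  cases n with
  | zero =>
    have : Module.Free T M := h
    exact (inferInstance : Module.Free T (M × F))
  | succ n =>
    obtain ⟨k, φ, hs, hk⟩ := h
    refine PdLE.of_free (F := (Fin k → T) × F) (φ.prodMap LinearMap.id)
      (Prod.map_surjective.2 ⟨hs, Function.surjective_id⟩) (PdLE.of_equiv n ?_ hk)
    refine LinearEquiv.ofBijective ((LinearMap.inl T (Fin k → T) F).restrict (p := LinearMap.ker φ)
      (q := LinearMap.ker (φ.prodMap LinearMap.id)) ?_) ⟨?_, ?_⟩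
    · intro x hx
      simpa using hx
    · intro x y hxy
      have := congrArg (fun z => z.1.1) hxy
      exact Subtype.ext this
    · rintro ⟨⟨x, y⟩, hxy⟩
      simp only [LinearMap.mem_ker, LinearMap.prodMap_apply, Prod.mk_eq_zero, LinearMap.id_apply] at hxy
      obtain ⟨h1, rfl⟩ := hxy
      exact ⟨⟨x, h1⟩, rfl⟩

open IsLocalRing in
open scoped Pointwise in
theorem PdLE.lift {T : Type u} [CommRing T] [IsDomain T] [IsLocalRing T] [IsNoetherianRing T]
    {x : T} (hx : x ∈ maximalIdeal T) (hx0 : x ≠ 0) (n : ℕ) : ∀ (K : Type u) [AddCommGroup K]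
    [Module T K] [Module.Finite T K], IsSMulRegular K x →
    PdLE (T ⧸ Ideal.span {x}) n (QuotSMulTop x K) → PdLE T n K := by
  induction n with
  | zero =>
    intro K _ _ _ hr h
    have := Module.finitePresentation_of_finite T K
    exact (Module.free_quotSMulTop_iff_free T K (IsLocalRing.maximalIdeal_le_jacobson _ hx) hr).1 h
  | succ n ih =>
    intro K _ _ _ hr h
    obtain ⟨k, φb, hs, hk⟩ := h
    let mk : T →+* T ⧸ Ideal.span {x} := Ideal.Quotient.mk (Ideal.span {x})
    let g : (Fin k → T) →ₗ[T] (Fin k → T ⧸ Ideal.span {x}) :=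
      (Submodule.mkQ (Ideal.span {x})).compLeft (Fin k)
    have hgs : Function.Surjective g := by
      intro y
      choose z hz using fun i => Ideal.Quotient.mk_surjective (y i)
      exact ⟨z, funext hz⟩
    have hgk : ∀ y, g y = 0 → ∃ z, y = x • z := by
      intro y hy
      have : ∀ i, ∃ z, y i = x * z := by
        intro i
        have h1 : Ideal.Quotient.mk (Ideal.span {x}) (y i) = 0 := congrFun hy i
        rw [Ideal.Quotient.eq_zero_iff_mem, Ideal.mem_span_singleton] at h1
        exact h1
      choose z hz using this
      exact ⟨z, funext hz⟩
    have hgx : ∀ z, g (x • z) = 0 := by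
      intro z
      funext i
      change Ideal.Quotient.mk (Ideal.span {x}) (x * z i) = 0
      rw [Ideal.Quotient.eq_zero_iff_mem]
      exact Ideal.mul_mem_right _ _ (Ideal.mem_span_singleton_self x)
    obtain ⟨φ, hφ⟩ := Module.projective_lifting_property
      (Submodule.mkQ (x • (⊤ : Submodule T K))) ((φb.restrictScalars T) ∘ₗ g)
      (Submodule.mkQ_surjective _)
    have hφ' : ∀ y, (Submodule.Quotient.mk (φ y) : QuotSMulTop x K) = φb (g y) :=
      fun y => LinearMap.congr_fun hφ y
    have hxK : ∀ y : K, (Submodule.Quotient.mk y : QuotSMulTop x K) = 0 → ∃ z, y = x • z := by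
      intro y hy
      rw [Submodule.Quotient.mk_eq_zero] at hy
      obtain ⟨z, -, hz⟩ := (Submodule.mem_smul_pointwise_iff_exists _ _ _).1 hy
      exact ⟨z, hz.symm⟩
    have hφs : Function.Surjective φ := by
      rw [← LinearMap.range_eq_top]
      have : (⊤ : Submodule T K) ≤ LinearMap.range φ := by
        apply Submodule.le_of_le_smul_of_le_jacobson_bot (I := maximalIdeal T)
          (Module.Finite.fg_top) (IsLocalRing.maximalIdeal_le_jacobson _)
        intro y _
        obtain ⟨z, hz⟩ := hs (Submodule.Quotient.mk y)
        obtain ⟨w, rfl⟩ := hgs z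
        have h1 : (Submodule.Quotient.mk (y - φ w) : QuotSMulTop x K) = 0 := by
          rw [Submodule.Quotient.mk_sub, hφ', hz, sub_self]
        obtain ⟨v, hv⟩ := hxK _ h1
        have : y = φ w + x • v := by rw [← hv]; abel
        rw [this]
        exact Submodule.add_mem_sup ⟨w, rfl⟩ (Submodule.smul_mem_smul hx trivial)
      exact top_le_iff.1 this
    refine ⟨k, φ, hφs, ?_⟩
    apply ih
    · intro y z hyz
      have h1 : x • (y : Fin k → T) = x • (z : Fin k → T) := congrArg Subtype.val hyz
      exact Subtype.ext (smul_right_injective _ hx0 h1)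
    · let γ : LinearMap.ker φ →ₗ[T] LinearMap.ker φb :=
        { toFun := fun y => ⟨g y, by
            rw [LinearMap.mem_ker, ← hφ', LinearMap.mem_ker.1 y.2]; rfl⟩
          map_add' := fun y z => Subtype.ext (by simp)
          map_smul' := fun r y => Subtype.ext (by simp) }
      have hγs : Function.Surjective γ := by
        rintro ⟨y, hy⟩
        obtain ⟨w, rfl⟩ := hgs y
        rw [LinearMap.mem_ker, ← hφ'] at hy
        obtain ⟨v, hv⟩ := hxK _ hy
        obtain ⟨t, rfl⟩ := hφs v
        refine ⟨⟨w - x • t, ?_⟩, ?_⟩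
        · rw [LinearMap.mem_ker, map_sub, map_smul, hv, sub_self]
        · apply Subtype.ext
          change g (w - x • t) = g w
          rw [map_sub, hgx, sub_zero]
      have hγk : LinearMap.ker γ = x • (⊤ : Submodule T (LinearMap.ker φ)) := by
        ext ⟨y, hy⟩
        rw [Submodule.mem_smul_pointwise_iff_exists]
        constructor
        · intro h
          have h1 : g y = 0 := congrArg Subtype.val (LinearMap.mem_ker.1 h)
          obtain ⟨z, rfl⟩ := hgk y h1
          refine ⟨⟨z, ?_⟩, trivial, rfl⟩
          rw [LinearMap.mem_ker, map_smul] at hy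
          exact hr.right_eq_zero_of_smul hy
        · rintro ⟨z, -, hz⟩
          rw [← hz, LinearMap.mem_ker]
          exact Subtype.ext (hgx z)
      let e : QuotSMulTop x (LinearMap.ker φ) ≃ₗ[T] LinearMap.ker φb :=
        (Submodule.quotEquivOfEq _ _ hγk.symm).trans (γ.quotKerEquivOfSurjective hγs)
      exact PdLE.of_equiv n (LinearEquiv.extendScalarsOfSurjective
        (Ideal.Quotient.mk_surjective (I := Ideal.span {x})) e).symm hk

theorem regD_pd (d : ℕ) : ∀ (T : Type u) [CommRing T] [IsLocalRing T] [IsNoetherianRing T],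
    RegD T d → ∀ (M : Type u) [AddCommGroup M] [Module T M] [Module.Finite T M], PdLE T d M := by
  induction d with
  | zero =>
    intro T _ _ _ h M _ _ _
    obtain ⟨⟨s, hs, hsc⟩, -⟩ := h
    have : s = ∅ := by simpa using hsc
    rw [this] at hs
    have hf : IsField T := IsLocalRing.isField_iff_maximalIdeal_eq.2 (by rw [← hs]; simp)
    let _ := hf.toField
    exact Module.Free.of_divisionRing T M
  | succ d ih =>
    intro T _ _ _ h M _ _ _
    obtain ⟨x, hx, hx2, hxP⟩ := regD_exists h
    have := quot_local hx
    have hdom := regD_domain _ T h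
    have hx0 : x ≠ 0 := by rintro rfl; exact hx2 (zero_mem _)
    obtain ⟨k, φ, hφ⟩ := Module.Finite.exists_fin' T M
    refine ⟨k, φ, hφ, PdLE.lift hx hx0 d _ ?_ ?_⟩
    · intro y z hyz
      have h1 : x • (y : Fin k → T) = x • (z : Fin k → T) := congrArg Subtype.val hyz
      exact Subtype.ext (smul_right_injective _ hx0 h1)
    · have : Module.Finite (T ⧸ Ideal.span {x}) (QuotSMulTop x (LinearMap.ker φ)) :=
        Module.Finite.of_restrictScalars_finite T _ _
      exact ih _ (regD_step h hx hx2) _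

end

section

open Module in
theorem length_coker_det {O : Type*} [CommRing O] [IsDomain O] [IsPrincipalIdealRing O]
    {M : Type*} [AddCommGroup M] [Module O M] [Module.Free O M] [Module.Finite O M]
    (f : M →ₗ[O] M) (hf : Function.Injective f) :
    Module.length O (M ⧸ LinearMap.range f) = Ring.ord O (LinearMap.det f) := by
  classical
  let N := LinearMap.range f
  let b := Module.finBasis O M
  let e0 : M ≃ₗ[O] N := LinearEquiv.ofInjective f hf
  have h : finrank O N = finrank O M := e0.symm.finrank_eq
  rw [(N.quotientEquivPiSpan b h).length_eq, Module.length_pi_of_fintype]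
  let c := Submodule.smithNormalFormCoeffs b h
  let bt := Submodule.smithNormalFormTopBasis b h
  let bb := Submodule.smithNormalFormBotBasis b h
  have hbb : ∀ i, (bb i : M) = c i • bt i := Submodule.smithNormalFormBotBasis_def b h
  have hc : ∀ i, c i ≠ 0 := Submodule.smithNormalFormCoeffs_ne_zero b h
  have hdet : Associated (LinearMap.det f) (∏ i, c i) := by
    rw [← Matrix.det_diagonal, ← LinearMap.det_toLin bt]
    let e : M ≃ₗ[O] M := e0.trans (bb.equiv bt (Equiv.refl _))
    refine LinearMap.associated_det_of_eq_comp e _ _ ?_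
    intro x
    obtain ⟨y, rfl⟩ : ∃ y, x = e0.symm y := ⟨e0 x, by simp⟩
    have h1 : f (e0.symm y) = y := by
      have : (e0 (e0.symm y) : M) = f (e0.symm y) := rfl
      rw [← this, e0.apply_symm_apply]
    rw [h1]
    have h2 : e (e0.symm y) = bb.equiv bt (Equiv.refl _) y := by simp [e]
    rw [h2]
    have h3 : N.subtype = (Matrix.toLin bt bt (Matrix.diagonal c)) ∘ₗ
        (bb.equiv bt (Equiv.refl _)).toLinearMap := by
      refine bb.ext fun i => ?_
      rw [Submodule.subtype_apply, hbb, LinearMap.comp_apply, LinearEquiv.coe_coe,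
        Basis.equiv_apply, Equiv.refl_apply, Matrix.toLin_self]
      simp [Matrix.diagonal_apply]
    exact LinearMap.congr_fun h3 y
  rw [Ring.ord_eq_of_associated hdet]
  have : ∀ s : Finset (Fin (finrank O M)), Ring.ord O (∏ i ∈ s, c i) = ∑ i ∈ s, Ring.ord O (c i) := by
    intro s
    induction s using Finset.induction_on with
    | empty => simp
    | insert a s ha ih =>
      rw [Finset.prod_insert ha, Finset.sum_insert ha, Ring.ord_mul, ih]
      exact mem_nonZeroDivisors_of_ne_zero (Finset.prod_ne_zero_iff.2 fun i _ => hc i)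
  rw [this]
  rfl

open TensorProduct

theorem tens_length {T : Type*} [CommRing T] (O : Type*) [CommRing O] [Algebra T O]
    [Module.Flat T O] {A B C : Type*} [AddCommGroup A] [AddCommGroup B] [AddCommGroup C]
    [Module T A] [Module T B] [Module T C] (i : A →ₗ[T] B) (q : B →ₗ[T] C)
    (hi : Function.Injective i) (hq : Function.Surjective q) (hex : Function.Exact i q) :
    Module.length O (O ⊗[T] B) = Module.length O (O ⊗[T] A) + Module.length O (O ⊗[T] C) := by
  refine Module.length_eq_add_of_exact (i.baseChange O) (q.baseChange O) ?_ ?_ ?_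
  · exact Module.Flat.lTensor_preserves_injective_linearMap i hi
  · exact LinearMap.lTensor_surjective O hq
  · exact lTensor_exact O hex hq

theorem tens_det {T : Type*} [CommRing T] (O : Type*) [CommRing O] [IsDomain O]
    [IsPrincipalIdealRing O] [Algebra T O]
    [Module.Flat T O] {A C : Type*} [AddCommGroup A] [AddCommGroup C]
    [Module T A] [Module T C] [Module.Free T A] [Module.Finite T A] (i : A →ₗ[T] A) (q : A →ₗ[T] C)
    (hi : Function.Injective i) (hq : Function.Surjective q) (hex : Function.Exact i q) :
    Module.length O (O ⊗[T] C) = Ring.ord O (algebraMap T O (LinearMap.det i)) := by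
  rw [← LinearMap.det_baseChange, ← length_coker_det]
  · have hex' : Function.Exact (i.baseChange O) (q.baseChange O) := lTensor_exact O hex hq
    have hs : Function.Surjective (q.baseChange O) := LinearMap.lTensor_surjective O hq
    exact ((Submodule.quotEquivOfEq _ _ hex'.linearMap_ker_eq.symm).trans
      ((q.baseChange O).quotKerEquivOfSurjective hs)).symm.length_eq
  · exact Module.Flat.lTensor_preserves_injective_linearMap i hi

theorem macrae {T : Type u} [CommRing T] [IsDomain T] [IsNoetherianRing T] (n : ℕ) :
    ∀ (N : Type u) [AddCommGroup N] [Module T N] (k : ℕ) (φ : (Fin k → T) →ₗ[T] N)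
    (_ : Function.Surjective φ) (a : T) (_ : a ≠ 0) (_ : ∀ y : N, a • y = 0)
    (_ : PdLE T n (LinearMap.ker φ)), ∃ u v : T, u ≠ 0 ∧ v ≠ 0 ∧
      ∀ (O : Type u) [CommRing O] [IsDomain O] [IsPrincipalIdealRing O] [Algebra T O]
      [Module.Flat T O] (_ : Function.Injective (algebraMap T O)),
      Module.length O (O ⊗[T] N) + Ring.ord O (algebraMap T O u) = Ring.ord O (algebraMap T O v) := by
  induction n with
  | zero =>
    intro N _ _ k φ hφ a ha haN h
    have hfree : Module.Free T (LinearMap.ker φ) := h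
    have hrank : Module.finrank T (LinearMap.ker φ) = Module.finrank T (Fin k → T) := by
      apply le_antisymm (Submodule.finrank_le _)
      let j : (Fin k → T) →ₗ[T] LinearMap.ker φ := LinearMap.codRestrict _ (a • LinearMap.id) (by
        intro y; rw [LinearMap.mem_ker]; simp [haN])
      refine LinearMap.finrank_le_finrank_of_injective (f := j) ?_
      intro y z hyz
      exact smul_right_injective _ ha (congrArg Subtype.val hyz)
    let e : (Fin k → T) ≃ₗ[T] LinearMap.ker φ := LinearEquiv.ofFinrankEq _ _ hrank.symm
    let i : (Fin k → T) →ₗ[T] (Fin k → T) := (LinearMap.ker φ).subtype ∘ₗ e.toLinearMap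
    have hi : Function.Injective i := Subtype.val_injective.comp e.injective
    refine ⟨1, LinearMap.det i, one_ne_zero, ?_, ?_⟩
    · intro h0
      exact (LinearMap.bot_lt_ker_of_det_eq_zero h0).ne' (LinearMap.ker_eq_bot.2 hi)
    · intro O _ _ _ _ _ hinj
      rw [tens_det O i φ hi hφ]
      · simp
      · rw [LinearMap.exact_iff, LinearMap.range_comp, LinearEquiv.range]; simp
  | succ n ih =>
    intro N _ _ k φ hφ a ha haN h
    obtain ⟨l, ψ, hψ, hpd⟩ := h
    let j : (Fin k → T) →ₗ[T] LinearMap.ker φ := LinearMap.codRestrict _ (a • LinearMap.id) (by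
        intro y; rw [LinearMap.mem_ker]; simp [haN])
    have hj : ∀ y, (j y : Fin k → T) = a • y := fun y => rfl
    have hjinj : Function.Injective j := by
      intro y z hyz
      exact smul_right_injective _ ha (congrArg Subtype.val hyz)
    let N' := LinearMap.ker φ ⧸ LinearMap.range j
    let φ' : (Fin l → T) →ₗ[T] N' := (LinearMap.range j).mkQ ∘ₗ ψ
    have hφ' : Function.Surjective φ' := (Submodule.mkQ_surjective _).comp hψ
    have hker : ∀ y, y ∈ LinearMap.ker φ' ↔ ∃ z, j z = ψ y := by
      intro y
      rw [LinearMap.mem_ker]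
      change (Submodule.Quotient.mk (ψ y) : N') = 0 ↔ _
      rw [Submodule.Quotient.mk_eq_zero]
      rfl
    obtain ⟨σ, hσ⟩ := Module.projective_lifting_property ψ j hψ
    have hσ' : ∀ z, ψ (σ z) = j z := fun z => LinearMap.congr_fun hσ z
    let E : (LinearMap.ker ψ × (Fin k → T)) →ₗ[T] LinearMap.ker φ' :=
      LinearMap.codRestrict _ ((LinearMap.ker ψ).subtype.coprod σ) (by
        rintro ⟨y, z⟩
        rw [hker]
        refine ⟨z, ?_⟩
        simp [hσ'])
    have hE : ∀ y z, (E (y, z) : Fin l → T) = y + σ z := fun y z => by simp [E]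
    have hEb : Function.Bijective E := by
      constructor
      · rw [injective_iff_map_eq_zero]
        rintro ⟨y, z⟩ h0
        have h1 : (y : Fin l → T) + σ z = 0 := by rw [← hE, h0]; rfl
        have h2 : j z = 0 := by
          have := congrArg ψ h1
          rw [map_add, hσ', LinearMap.mem_ker.1 y.2, map_zero, zero_add] at this
          exact this
        have h3 : z = 0 := hjinj (by rw [h2, map_zero])
        subst h3
        rw [map_zero, add_zero] at h1
        exact Prod.ext (Subtype.ext h1) rfl
      · rintro ⟨y, hy⟩
        obtain ⟨z, hz⟩ := (hker y).1 hy
        refine ⟨(⟨y - σ z, ?_⟩, z), ?_⟩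
        · rw [LinearMap.mem_ker, map_sub, hσ', hz, sub_self]
        · apply Subtype.ext
          rw [hE]
          simp
    have hpd' : PdLE T n (LinearMap.ker φ') :=
      PdLE.of_equiv n (LinearEquiv.ofBijective E hEb) hpd.prod
    have haN' : ∀ y : N', a • y = 0 := by
      intro y
      obtain ⟨y, rfl⟩ := Submodule.mkQ_surjective _ y
      rw [← map_smul, Submodule.mkQ_apply, Submodule.Quotient.mk_eq_zero]
      exact ⟨y, Subtype.ext rfl⟩
    obtain ⟨u, v, hu, hv, huv⟩ := ih N' l φ' hφ' a ha haN' hpd'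
    refine ⟨v, a ^ k * u, hv, mul_ne_zero (pow_ne_zero _ ha) hu, ?_⟩
    intro O _ _ _ _ _ hinj
    have h1 := huv O hinj
    let A1 : (Fin k → T) →ₗ[T] (Fin k → T) := a • LinearMap.id
    have hA1 : Function.Injective A1 := smul_right_injective _ ha
    let Q := (Fin k → T) ⧸ LinearMap.range A1
    have h2 : Module.length O (O ⊗[T] Q) = Ring.ord O (algebraMap T O (a ^ k)) := by
      rw [tens_det O A1 (LinearMap.range A1).mkQ hA1 (Submodule.mkQ_surjective _)
        (by rw [LinearMap.exact_iff]; simp)]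
      simp [A1]
    have hle : LinearMap.range A1 ≤ LinearMap.ker φ := by
      rintro _ ⟨y, rfl⟩
      simp [A1, haN]
    have h3 : Module.length O (O ⊗[T] Q) =
        Module.length O (O ⊗[T] N') + Module.length O (O ⊗[T] N) := by
      let i' : N' →ₗ[T] Q := Submodule.mapQ _ _ (LinearMap.ker φ).subtype (by
        rintro _ ⟨y, rfl⟩
        exact ⟨y, rfl⟩)
      let q' : Q →ₗ[T] N := Submodule.liftQ _ φ hle
      refine tens_length O i' q' ?_ ?_ ?_
      · rw [injective_iff_map_eq_zero]
        intro y hy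
        obtain ⟨y, rfl⟩ := Submodule.mkQ_surjective _ y
        change (Submodule.Quotient.mk (y : Fin k → T) : Q) = 0 at hy
        rw [Submodule.Quotient.mk_eq_zero] at hy
        change (Submodule.Quotient.mk y : N') = 0
        rw [Submodule.Quotient.mk_eq_zero]
        obtain ⟨z, hz⟩ := hy
        exact ⟨z, Subtype.ext hz⟩
      · intro y
        obtain ⟨z, rfl⟩ := hφ y
        exact ⟨Submodule.Quotient.mk z, rfl⟩
      · intro y
        obtain ⟨y, rfl⟩ := Submodule.mkQ_surjective _ y
        constructor
        · intro hy
          exact ⟨Submodule.Quotient.mk ⟨y, hy⟩, rfl⟩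
        · rintro ⟨z, hz⟩
          obtain ⟨z, rfl⟩ := Submodule.mkQ_surjective _ z
          rw [← hz]
          exact z.2
    have hu' : algebraMap T O u ∈ nonZeroDivisors O := mem_nonZeroDivisors_of_ne_zero
      ((map_ne_zero_iff _ hinj).2 hu)
    rw [map_mul, Ring.ord_mul _ hu', ← h2, h3, ← h1]
    abel

end

section

open TensorProduct IsLocalRing Module in
theorem pir_of_colon (R : Type u) [CommRing R] [IsDomain R] [IsNoetherianRing R] [IsLocalRing R]
    [IsIntegrallyClosed R] (a b : R) (ha₂ : a ≠ 0) (hb₂ : b ∉ Ideal.span {a})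
    (hb₃ : ∀ m ∈ maximalIdeal R, ∃ k : R, k * a = b * m) : IsPrincipalIdealRing R := by
  have ha₁ : a ∈ maximalIdeal R := by
    by_contra h
    rw [IsLocalRing.mem_maximalIdeal, mem_nonunits_iff, not_not] at h
    apply hb₂
    rw [Ideal.span_singleton_eq_top.2 h]
    trivial
  refine ((tfae_of_isNoetherianRing_of_isLocalRing_of_isDomain R).out 0 4).2 ?_
  have hb₄ : b ≠ 0 := by rintro rfl; apply hb₂; exact zero_mem _
  let K := FractionRing R
  let x : K := algebraMap R K b / algebraMap R K a
  let M := Submodule.map (Algebra.linearMap R K) (maximalIdeal R)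
  have ha₃ : algebraMap R K a ≠ 0 := IsFractionRing.to_map_eq_zero_iff.not.mpr ha₂
  by_cases hx : ∀ y ∈ M, x * y ∈ M
  · have := isIntegral_of_smul_mem_submodule M ?_ ?_ x hx
    · obtain ⟨y, e⟩ := IsIntegrallyClosed.algebraMap_eq_of_integral this
      refine (hb₂ (Ideal.mem_span_singleton'.mpr ⟨y, ?_⟩)).elim
      apply IsFractionRing.injective R K
      rw [map_mul, e, div_mul_cancel₀ _ ha₃]
    · rw [Submodule.ne_bot_iff]; refine ⟨_, ⟨a, ha₁, rfl⟩, ?_⟩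
      exact (IsFractionRing.to_map_eq_zero_iff (K := K)).not.mpr ha₂
    · apply Submodule.FG.map; exact IsNoetherian.noetherian _
  · have :
        (M.map (DistribSMul.toLinearMap R K x)).comap (Algebra.linearMap R K) = ⊤ := by
      contrapose! hx with h
      rintro m' ⟨m, hm, rfl : algebraMap R K m = m'⟩
      obtain ⟨k, hk⟩ := hb₃ m hm
      have hk' : x * algebraMap R K m = algebraMap R K k := by
        rw [← mul_div_right_comm, ← map_mul, ← hk, map_mul, mul_div_cancel_right₀ _ ha₃]
      exact ⟨k, le_maximalIdeal h ⟨_, ⟨_, hm, rfl⟩, hk'⟩, hk'.symm⟩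
    obtain ⟨y, hy₁, hy₂⟩ : ∃ y ∈ maximalIdeal R, b * y = a := by
      rw [Ideal.eq_top_iff_one, Submodule.mem_comap] at this
      obtain ⟨_, ⟨y, hy, rfl⟩, hy' : x * algebraMap R K y = algebraMap R K 1⟩ := this
      rw [map_one, ← mul_div_right_comm, div_eq_one_iff_eq ha₃, ← map_mul] at hy'
      exact ⟨y, hy, IsFractionRing.injective R K hy'⟩
    refine ⟨⟨y, ?_⟩⟩
    apply le_antisymm
    · intro m hm
      obtain ⟨k, hk⟩ := hb₃ m hm
      rw [← hy₂, mul_comm, mul_assoc] at hk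
      rw [← mul_left_cancel₀ hb₄ hk, mul_comm]
      exact Ideal.mem_span_singleton'.mpr ⟨_, rfl⟩
    · rwa [Submodule.span_le, Set.singleton_subset_iff]

theorem exists_pir_loc (T : Type u) [CommRing T] [IsDomain T] [IsNoetherianRing T]
    [IsIntegrallyClosed T] (x y : T) (hx : x ≠ 0) (hy : ¬ x ∣ y) :
    ∃ (P : Ideal T) (hP : P.IsPrime), IsPrincipalIdealRing (Localization.AtPrime P) ∧
      ¬ (algebraMap T (Localization.AtPrime P) x ∣ algebraMap T (Localization.AtPrime P) y) := by
  have hne : (Ideal.Quotient.mk (Ideal.span {x}) y : T ⧸ Ideal.span {x}) ≠ 0 := by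
    rw [Ne, Ideal.Quotient.eq_zero_iff_mem, Ideal.mem_span_singleton]; exact hy
  obtain ⟨P, hP, hle⟩ := exists_le_isAssociatedPrime_of_isNoetherianRing T _ hne
  obtain ⟨hPp, z, hz⟩ := isAssociatedPrime_iff.1 hP
  obtain ⟨b, rfl⟩ := Ideal.Quotient.mk_surjective z
  have hmem : ∀ c r : T, r • (Ideal.Quotient.mk (Ideal.span {x}) c) = 0 ↔ x ∣ r * c := by
    intro c r
    rw [Algebra.smul_def, Ideal.Quotient.algebraMap_eq, ← map_mul, Ideal.Quotient.eq_zero_iff_mem,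
      Ideal.mem_span_singleton]
  have hPb : ∀ r, r ∈ P ↔ x ∣ r * b := by
    intro r
    rw [hz, ← hmem]
    simp [Submodule.mem_colon_singleton]
  have hPy : ∀ r, x ∣ r * y → r ∈ P := by
    intro r hr
    apply hle
    rw [← hmem] at hr
    simpa [Submodule.mem_colon_singleton] using hr
  have key : ∀ c : T, (∀ r, x ∣ r * c → r ∈ P) → ¬ (algebraMap T (Localization.AtPrime P) x ∣ algebraMap T (Localization.AtPrime P) c) := by
    rintro c hc ⟨d, hd⟩
    obtain ⟨⟨d, s⟩, rfl⟩ := IsLocalization.mk'_surjective P.primeCompl d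
    have h1 : algebraMap T (Localization.AtPrime P) (s * c) = algebraMap T (Localization.AtPrime P) (x * d) := by
      rw [map_mul, hd, map_mul]
      have := IsLocalization.mk'_spec' (Localization.AtPrime P) d s
      rw [← this]; ring
    have h2 := IsLocalization.injective (Localization.AtPrime P) P.primeCompl_le_nonZeroDivisors h1
    exact s.2 (hc s ⟨d, h2⟩)
  refine ⟨P, hPp, ?_, key y hPy⟩
  have : IsDomain (Localization.AtPrime P) := IsLocalization.isDomain_of_local_atPrime (P := P) hPp
  have : IsIntegrallyClosed (Localization.AtPrime P) :=
    isIntegrallyClosed_of_isLocalization (Localization.AtPrime P) P.primeCompl P.primeCompl_le_nonZeroDivisors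
  have : IsNoetherianRing (Localization.AtPrime P) := IsLocalization.isNoetherianRing P.primeCompl _ inferInstance
  refine pir_of_colon _ (algebraMap T _ x) (algebraMap T _ b) ?_ ?_ ?_
  · exact (map_ne_zero_iff _ (IsLocalization.injective (Localization.AtPrime P) P.primeCompl_le_nonZeroDivisors)).2 hx
  · rw [Ideal.mem_span_singleton]
    exact key b (fun r hr => (hPb r).2 hr)
  · intro m hm
    obtain ⟨⟨m, s⟩, rfl⟩ := IsLocalization.mk'_surjective P.primeCompl m
    rw [IsLocalization.AtPrime.mk'_mem_maximal_iff _ P] at hm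
    obtain ⟨k, hk⟩ := (hPb m).1 hm
    refine ⟨IsLocalization.mk' _ k s, ?_⟩
    rw [IsLocalization.mul_mk'_eq_mk'_of_mul, mul_comm, IsLocalization.mul_mk'_eq_mk'_of_mul, mul_comm b, hk]

theorem pir_dvd (O : Type u) [CommRing O] [IsDomain O] [IsLocalRing O] [IsPrincipalIdealRing O]
    (x y : O) (hx : x ≠ 0) (hy : y ≠ 0) (h : Ring.ord O x ≤ Ring.ord O y) : x ∣ y := by
  have hv : ValuationRing O :=
    ((tfae_of_isNoetherianRing_of_isLocalRing_of_isDomain O).out 0 1 :).1 ‹_›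
  rcases ValuationRing.dvd_total x y with h1 | ⟨c, rfl⟩
  · exact h1
  have hc : c ≠ 0 := right_ne_zero_of_mul hx
  rw [Ring.ord_mul _ (mem_nonZeroDivisors_of_ne_zero hc)] at h
  have hfin : Ring.ord O y ≠ ⊤ := Ring.ord_ne_top (mem_nonZeroDivisors_of_ne_zero hy)
  have h0 : Ring.ord O c = 0 := by
    have : Ring.ord O y + Ring.ord O c ≤ Ring.ord O y + 0 := by simpa using h
    exact le_antisymm ((ENat.add_le_add_iff_left hfin).1 this) bot_le
  have : IsUnit c := by
    unfold Ring.ord at h0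
    rw [Module.length_eq_zero_iff, Submodule.Quotient.subsingleton_iff] at h0
    exact Ideal.span_singleton_eq_top.1 h0
  obtain ⟨w, rfl⟩ := this
  exact ⟨↑w⁻¹, by simp⟩

theorem dvd_of_ord (T : Type u) [CommRing T] [IsDomain T] [IsNoetherianRing T]
    [IsIntegrallyClosed T] (x y : T) (hx : x ≠ 0) (hy : y ≠ 0)
    (h : ∀ (P : Ideal T) (_ : P.IsPrime), IsPrincipalIdealRing (Localization.AtPrime P) →
      Ring.ord (Localization.AtPrime P) (algebraMap T _ x) ≤ Ring.ord (Localization.AtPrime P) (algebraMap T _ y)) :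
    x ∣ y := by
  by_contra hn
  obtain ⟨P, hP, hpir, hnd⟩ := exists_pir_loc T x y hx hn
  have : IsDomain (Localization.AtPrime P) := IsLocalization.isDomain_of_local_atPrime (P := P) ‹_›
  have hinj := IsLocalization.injective (Localization.AtPrime P) P.primeCompl_le_nonZeroDivisors
  exact hnd (pir_dvd _ _ _ ((map_ne_zero_iff _ hinj).2 hx) ((map_ne_zero_iff _ hinj).2 hy) (h P hP hpir))

theorem pir_of_height_one (T : Type u) [CommRing T] [IsDomain T] [IsNoetherianRing T]
    [IsIntegrallyClosed T] (P : Ideal T) [hP : P.IsPrime] (h : P.height = 1) :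
    IsPrincipalIdealRing (Localization.AtPrime P) := by
  have : IsDomain (Localization.AtPrime P) := IsLocalization.isDomain_of_local_atPrime (P := P) ‹_›
  have : IsIntegrallyClosed (Localization.AtPrime P) :=
    isIntegrallyClosed_of_isLocalization (Localization.AtPrime P) P.primeCompl P.primeCompl_le_nonZeroDivisors
  have : IsNoetherianRing (Localization.AtPrime P) := IsLocalization.isNoetherianRing P.primeCompl _ inferInstance
  refine ((tfae_of_isNoetherianRing_of_isLocalRing_of_isDomain (Localization.AtPrime P)).out 0 3 :).2 ⟨‹_›, ?_⟩
  have h1 : Ring.KrullDimLE 1 (Localization.AtPrime P) := by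
    rw [Ring.krullDimLE_iff, IsLocalization.AtPrime.ringKrullDim_eq_height P, h]
    rfl
  intro I hI hIp
  exact IsLocalRing.eq_maximalIdeal (Ring.krullDimLE_one_iff_of_noZeroDivisors.1 h1 I hI hIp)

open TensorProduct in
theorem regD_UFD (d : ℕ) (T : Type u) [CommRing T] [IsDomain T] [IsNoetherianRing T] [IsLocalRing T]
    [IsIntegrallyClosed T] (h : RegD T d) : UniqueFactorizationMonoid T := by
  apply UniqueFactorizationMonoid.of_forall_isPrincipal_of_height_eq_one
  intro P hP hht
  have hP0 : P ≠ ⊥ := P.ne_bot_of_height_eq_one hht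
  obtain ⟨a, haP, ha⟩ := P.ne_bot_iff.1 hP0
  obtain ⟨k, φ, hφ⟩ := Module.Finite.exists_fin' T (T ⧸ P)
  have haN : ∀ y : T ⧸ P, a • y = 0 := by
    intro y
    rw [Algebra.smul_def, Ideal.Quotient.algebraMap_eq, Ideal.Quotient.eq_zero_iff_mem.2 haP, zero_mul]
  obtain ⟨u, v, hu, hv, H⟩ := macrae d (T ⧸ P) k φ hφ a ha haN (regD_pd d T h _)
  have hfl : ∀ (q : Ideal T) (_ : q.IsPrime), IsPrincipalIdealRing (Localization.AtPrime q) →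
      Module.length (Localization.AtPrime q) ((Localization.AtPrime q) ⊗[T] (T ⧸ P)) +
        Ring.ord (Localization.AtPrime q) (algebraMap T _ u) =
        Ring.ord (Localization.AtPrime q) (algebraMap T _ v) := by
    intro q hq hpir
    have : IsDomain (Localization.AtPrime q) := IsLocalization.isDomain_of_local_atPrime (P := q) hq
    have : Module.Flat T (Localization.AtPrime q) := IsLocalization.flat _ q.primeCompl
    exact H _ (IsLocalization.injective (Localization.AtPrime q) q.primeCompl_le_nonZeroDivisors)
  obtain ⟨w, rfl⟩ : u ∣ v := by
    apply dvd_of_ord T u v hu hv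
    intro q hq hpir
    rw [← hfl q hq hpir]
    exact le_add_self
  have hw : w ≠ 0 := right_ne_zero_of_mul hv
  have hlen : ∀ (q : Ideal T) (_ : q.IsPrime), IsPrincipalIdealRing (Localization.AtPrime q) →
      Module.length (Localization.AtPrime q) ((Localization.AtPrime q) ⊗[T] (T ⧸ P)) =
        Ring.ord (Localization.AtPrime q) (algebraMap T _ w) := by
    intro q hq hpir
    have : IsDomain (Localization.AtPrime q) := IsLocalization.isDomain_of_local_atPrime (P := q) hq
    have h1 := hfl q hq hpir
    have hinj := IsLocalization.injective (Localization.AtPrime q) q.primeCompl_le_nonZeroDivisors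
    have hu' := mem_nonZeroDivisors_of_ne_zero ((map_ne_zero_iff _ hinj).2 hu)
    rw [map_mul, Ring.ord_mul' _ hu', add_comm] at h1
    exact (ENat.add_right_injective_of_ne_top (Ring.ord_ne_top hu')) h1
  have hwP : w ∈ P := by
    by_contra hwP
    have hpir := pir_of_height_one T P hht
    have h1 := hlen P hP hpir
    rw [Ring.ord_of_isUnit ((IsLocalization.AtPrime.isUnit_to_map_iff (Localization.AtPrime P) P w).2 hwP),
      Module.length_eq_zero_iff] at h1
    let κ := P.ResidueField
    let j : (T ⧸ P) →ₗ[T] κ := (Ideal.Quotient.liftₐ P (Algebra.ofId T κ) (by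
      intro x hx
      exact Ideal.algebraMap_residueField_eq_zero.2 hx)).toLinearMap
    let F : (Localization.AtPrime P) ⊗[T] (T ⧸ P) →ₗ[T] κ :=
      TensorProduct.lift (((LinearMap.mul T κ).comp (IsScalarTower.toAlgHom T (Localization.AtPrime P) κ).toLinearMap).compl₂ j)
    have h2 : F (1 ⊗ₜ 1) = 1 := by
      simp [F, j]
    rw [Subsingleton.elim (1 ⊗ₜ 1 : (Localization.AtPrime P) ⊗[T] (T ⧸ P)) 0, map_zero] at h2
    exact zero_ne_one h2
  refine ⟨⟨w, le_antisymm ?_ ?_⟩⟩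
  · intro x hx
    rw [← Ideal.span, Ideal.mem_span_singleton]
    by_cases hx0 : x = 0
    · rw [hx0]; exact dvd_zero _
    apply dvd_of_ord T w x hw hx0
    intro q hq hpir
    rw [← hlen q hq hpir]
    have : IsDomain (Localization.AtPrime q) := IsLocalization.isDomain_of_local_atPrime (P := q) hq
    let O := Localization.AtPrime q
    let F : O →ₗ[O] O ⊗[T] (T ⧸ P) := LinearMap.toSpanSingleton O _ (1 ⊗ₜ 1)
    have hF : Function.Surjective F := by
      intro y
      induction y with
      | zero => exact ⟨0, map_zero _⟩
      | add y z hy hz =>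
        obtain ⟨y, rfl⟩ := hy
        obtain ⟨z, rfl⟩ := hz
        exact ⟨y + z, map_add _ _ _⟩
      | tmul y z =>
        obtain ⟨z, rfl⟩ := Ideal.Quotient.mk_surjective z
        refine ⟨z • y, ?_⟩
        have : Ideal.Quotient.mk P z = z • (1 : T ⧸ P) := by
          rw [Algebra.smul_def, mul_one]; rfl
        rw [this, TensorProduct.tmul_smul]
        simp [F, TensorProduct.smul_tmul']
    have hFx : Ideal.span {algebraMap T O x} ≤ LinearMap.ker F := by
      rw [Ideal.span_le, Set.singleton_subset_iff]
      change F _ = 0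
      have : algebraMap T O x = x • (1 : O) := by rw [Algebra.smul_def, mul_one]
      have h1 : x • (1 : T ⧸ P) = 0 := by
        rw [Algebra.smul_def, Ideal.Quotient.algebraMap_eq, Ideal.Quotient.eq_zero_iff_mem.2 hx, zero_mul]
      simp only [F, LinearMap.toSpanSingleton_apply, TensorProduct.smul_tmul', smul_eq_mul, mul_one]
      rw [this, TensorProduct.smul_tmul, h1, TensorProduct.tmul_zero]
    refine Module.length_le_of_surjective (Submodule.liftQ _ F hFx) ?_
    intro y
    obtain ⟨z, rfl⟩ := hF y
    exact ⟨Submodule.Quotient.mk z, rfl⟩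
  · rw [Submodule.span_le, Set.singleton_subset_iff]
    exact hwP

end

section

/-- The arithmetic core of the situation. -/
structure Core (S K : Type*) [CommRing S] [IsDomain S] [Field K] [Algebra S K]
    (p : ℕ) (h₁ h₂ y : S) (c₁ c₂ : ℕ → S) (π ρ s : K) : Prop where
  hp : p.Prime
  hp3 : 3 ≤ p
  hpS : Prime (p : S)
  inj : Function.Injective (algebraMap S K)
  h1 : ¬ (p : S) ∣ h₁
  h2 : ¬ (p : S) ∣ h₂
  c1 : ¬ (p : S) ∣ c₁ 0
  c2 : ¬ (p : S) ∣ c₂ 0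
  hπ : π ^ p = (p : S) • ∑ k ∈ Finset.range p, c₁ k • π ^ k
  hρ : ρ ^ p = (p : S) • ∑ k ∈ Finset.range p, c₂ k • ρ ^ k
  hs : s ∈ Algebra.adjoin S ({π, ρ} : Set K)
  hz : (h₂ • π + h₁ • ρ + π * ρ) ^ p = ((p : S) ^ 2 * y) • (1 : K) + (p : S) • ((h₂ • π + h₁ • ρ + π * ρ) *
    (-((h₁ * h₂) ^ (p - 1)) • (1 : K) - (h₂ • π + h₁ • ρ + π * ρ) * s))
  indep : ∀ α : ℕ → ℕ → S, ∑ i ∈ Finset.range p, ∑ j ∈ Finset.range p, α i j • (π ^ i * ρ ^ j) = 0 →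
    ∀ i < p, ∀ j < p, α i j = 0
  den : ∀ r : K, IsIntegral S r → ∃ α : ℕ → ℕ → S,
    (p : S) • r = ∑ i ∈ Finset.range p, ∑ j ∈ Finset.range p, α i j • (π ^ i * ρ ^ j)

/-- evaluation of a coefficient family -/
def evK {S K : Type*} [CommRing S] [Field K] [Algebra S K] (p : ℕ) (π ρ : K) (α : ℕ → ℕ → S) : K :=
  ∑ i ∈ Finset.range p, ∑ j ∈ Finset.range p, α i j • (π ^ i * ρ ^ j)

/-- the filtration -/
def DD (S : Type*) {K : Type*} [CommRing S] [Field K] [Algebra S K] (p : ℕ) (π ρ : K) (m : ℕ) :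
    Submodule S K :=
  Submodule.span S ({x | ∃ i < p, ∃ j < p, x = (p : S) • (π ^ i * ρ ^ j)} ∪
    {x | ∃ i < p, ∃ j < p, m ≤ i + j ∧ x = π ^ i * ρ ^ j})

theorem evK_single {S K : Type*} [CommRing S] [Field K] [Algebra S K] (p : ℕ) (π ρ : K) (i j : ℕ)
    (hi : i < p) (hj : j < p) (t : S) :
    evK p π ρ (fun k l => if k = i ∧ l = j then t else 0) = t • (π ^ i * ρ ^ j) := by
  unfold evK
  rw [Finset.sum_eq_single i, Finset.sum_eq_single j]
  · simp
  · intro l _ hl; simp [hl]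
  · intro h; simp at h; omega
  · intro k _ hk; simp [hk]
  · intro h; simp at h; omega

theorem evK_add {S K : Type*} [CommRing S] [Field K] [Algebra S K] (p : ℕ) (π ρ : K)
    (α β : ℕ → ℕ → S) : evK p π ρ (fun i j => α i j + β i j) = evK p π ρ α + evK p π ρ β := by
  simp [evK, add_smul, Finset.sum_add_distrib]

theorem evK_smul {S K : Type*} [CommRing S] [Field K] [Algebra S K] (p : ℕ) (π ρ : K)
    (α : ℕ → ℕ → S) (t : S) : evK p π ρ (fun i j => t * α i j) = t • evK p π ρ α := by
  simp [evK, mul_smul, Finset.smul_sum]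

theorem evK_mem {S K : Type*} [CommRing S] [Field K] [Algebra S K] (p : ℕ) (π ρ : K) (m : ℕ)
    (α : ℕ → ℕ → S) (h : ∀ i < p, ∀ j < p, i + j < m → (p : S) ∣ α i j) :
    evK p π ρ α ∈ DD S p π ρ m := by
  refine Submodule.sum_mem _ fun i hi => Submodule.sum_mem _ fun j hj => ?_
  rw [Finset.mem_range] at hi hj
  by_cases hm : i + j < m
  · obtain ⟨t, ht⟩ := h i hi j hj hm
    rw [ht, mul_comm, mul_smul]
    exact Submodule.smul_mem _ _ (Submodule.subset_span (Or.inl ⟨i, hi, j, hj, rfl⟩))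
  · exact Submodule.smul_mem _ _ (Submodule.subset_span (Or.inr ⟨i, hi, j, hj, by omega, rfl⟩))

theorem DD_coeff {S K : Type*} [CommRing S] [Field K] [Algebra S K] (p : ℕ) (π ρ : K) (m : ℕ)
    (x : K) (hx : x ∈ DD S p π ρ m) : ∃ α : ℕ → ℕ → S, x = evK p π ρ α ∧
      ∀ i < p, ∀ j < p, i + j < m → (p : S) ∣ α i j := by
  induction hx using Submodule.span_induction with
  | mem x hx =>
    rcases hx with ⟨i, hi, j, hj, rfl⟩ | ⟨i, hi, j, hj, hm, rfl⟩
    · refine ⟨_, (evK_single p π ρ i j hi hj _).symm, ?_⟩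
      intro k _ l _ _
      split_ifs <;> simp
    · refine ⟨_, ((evK_single p π ρ i j hi hj (1 : S)).trans (one_smul _ _)).symm, ?_⟩
      intro k _ l _ hkl
      rw [if_neg (by omega)]; simp
  | zero => exact ⟨fun _ _ => 0, by simp [evK], by simp⟩
  | add x y _ _ hx hy =>
    obtain ⟨α, rfl, hα⟩ := hx
    obtain ⟨β, rfl, hβ⟩ := hy
    exact ⟨_, (evK_add p π ρ α β).symm, fun i hi j hj h => dvd_add (hα i hi j hj h) (hβ i hi j hj h)⟩
  | smul t x _ hx =>
    obtain ⟨α, rfl, hα⟩ := hx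
    exact ⟨_, (evK_smul p π ρ α t).symm, fun i hi j hj h => (hα i hi j hj h).mul_left _⟩

theorem DD_anti {S K : Type*} [CommRing S] [Field K] [Algebra S K] (p : ℕ) (π ρ : K) (m n : ℕ)
    (h : m ≤ n) : DD S p π ρ n ≤ DD S p π ρ m := by
  apply Submodule.span_mono
  apply Set.union_subset_union_right
  rintro x ⟨i, hi, j, hj, hm, rfl⟩
  exact ⟨i, hi, j, hj, by omega, rfl⟩

theorem DD_p {S K : Type*} [CommRing S] [Field K] [Algebra S K] (p : ℕ) (π ρ : K) (m n : ℕ) (x : K)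
    (h : x ∈ DD S p π ρ m) : (p : S) • x ∈ DD S p π ρ n := by
  obtain ⟨α, rfl, -⟩ := DD_coeff _ _ _ _ _ h
  rw [← evK_smul]
  exact evK_mem _ _ _ _ _ (fun i _ j _ _ => Dvd.intro _ rfl)

section
variable {S K : Type*} [CommRing S] [IsDomain S] [Field K] [Algebra S K]
    {p : ℕ} {h₁ h₂ y : S} {c₁ c₂ : ℕ → S} {π ρ s : K}

theorem Core.D_pi (H : Core S K p h₁ h₂ y c₁ c₂ π ρ s) (m : ℕ) (x : K) (hx : x ∈ DD S p π ρ m) :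
    π * x ∈ DD S p π ρ (m + 1) := by
  have key : ∀ i < p, ∀ j < p, ∀ n, (p : S) • (π * (π ^ i * ρ ^ j)) ∈ DD S p π ρ n := by
    intro i hi j hj n
    by_cases h : i + 1 < p
    · rw [← mul_assoc, ← pow_succ']
      exact Submodule.subset_span (Or.inl ⟨i + 1, h, j, hj, rfl⟩)
    · have hip : i + 1 = p := by omega
      rw [← mul_assoc, ← pow_succ', hip, H.hπ, smul_mul_assoc, Finset.sum_mul]
      refine Submodule.smul_mem _ _ ?_
      rw [Finset.smul_sum]
      refine Submodule.sum_mem _ fun k hk => ?_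
      rw [smul_mul_assoc, smul_comm]
      exact Submodule.smul_mem _ _ (Submodule.subset_span (Or.inl ⟨k, by simpa using hk, j, hj, rfl⟩))
  induction hx using Submodule.span_induction with
  | mem x hx =>
    rcases hx with ⟨i, hi, j, hj, rfl⟩ | ⟨i, hi, j, hj, hm, rfl⟩
    · rw [mul_smul_comm]
      exact key i hi j hj _
    · by_cases h : i + 1 < p
      · rw [← mul_assoc, ← pow_succ']
        exact Submodule.subset_span (Or.inr ⟨i + 1, h, j, hj, by omega, rfl⟩)
      · have hip : i + 1 = p := by omega
        rw [← mul_assoc, ← pow_succ', hip, H.hπ, smul_mul_assoc, Finset.sum_mul, Finset.smul_sum]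
        refine Submodule.sum_mem _ fun k hk => ?_
        rw [smul_mul_assoc, smul_comm]
        exact Submodule.smul_mem _ _ (Submodule.subset_span (Or.inl ⟨k, by simpa using hk, j, hj, rfl⟩))
  | zero => simp
  | add x y _ _ hx hy => rw [mul_add]; exact add_mem hx hy
  | smul t x _ hx => rw [mul_smul_comm]; exact Submodule.smul_mem _ _ hx

theorem Core.D_rho (H : Core S K p h₁ h₂ y c₁ c₂ π ρ s) (m : ℕ) (x : K) (hx : x ∈ DD S p π ρ m) :
    ρ * x ∈ DD S p π ρ (m + 1) := by
  have key : ∀ i < p, ∀ j < p, ∀ n, (p : S) • (ρ * (π ^ i * ρ ^ j)) ∈ DD S p π ρ n := by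
    intro i hi j hj n
    rw [mul_left_comm, ← pow_succ']
    by_cases h : j + 1 < p
    · exact Submodule.subset_span (Or.inl ⟨i, hi, j + 1, h, rfl⟩)
    · have hip : j + 1 = p := by omega
      rw [hip, H.hρ, mul_smul_comm, Finset.mul_sum]
      refine Submodule.smul_mem _ _ ?_
      rw [Finset.smul_sum]
      refine Submodule.sum_mem _ fun k hk => ?_
      rw [mul_smul_comm, smul_comm]
      exact Submodule.smul_mem _ _ (Submodule.subset_span (Or.inl ⟨i, hi, k, by simpa using hk, rfl⟩))
  induction hx using Submodule.span_induction with
  | mem x hx =>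
    rcases hx with ⟨i, hi, j, hj, rfl⟩ | ⟨i, hi, j, hj, hm, rfl⟩
    · rw [mul_smul_comm]
      exact key i hi j hj _
    · rw [mul_left_comm, ← pow_succ']
      by_cases h : j + 1 < p
      · exact Submodule.subset_span (Or.inr ⟨i, hi, j + 1, h, by omega, rfl⟩)
      · have hip : j + 1 = p := by omega
        rw [hip, H.hρ, mul_smul_comm, Finset.mul_sum, Finset.smul_sum]
        refine Submodule.sum_mem _ fun k hk => ?_
        rw [mul_smul_comm, smul_comm]
        exact Submodule.smul_mem _ _ (Submodule.subset_span (Or.inl ⟨i, hi, k, by simpa using hk, rfl⟩))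
  | zero => simp
  | add x y _ _ hx hy => rw [mul_add]; exact add_mem hx hy
  | smul t x _ hx => rw [mul_smul_comm]; exact Submodule.smul_mem _ _ hx

theorem Core.D_mon (H : Core S K p h₁ h₂ y c₁ c₂ π ρ s) (m i j : ℕ) (x : K) (hx : x ∈ DD S p π ρ m) :
    π ^ i * ρ ^ j * x ∈ DD S p π ρ (m + (i + j)) := by
  induction i with
  | zero =>
    induction j with
    | zero => simpa using hx
    | succ j ih =>
      have := H.D_rho _ _ ih
      rw [show π ^ 0 * ρ ^ (j + 1) * x = ρ * (π ^ 0 * ρ ^ j * x) by ring]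
      exact this
  | succ i ih =>
    have := H.D_pi _ _ ih
    rw [show π ^ (i + 1) * ρ ^ j * x = π * (π ^ i * ρ ^ j * x) by ring]
    convert this using 2
    omega

theorem Core.D_one (H : Core S K p h₁ h₂ y c₁ c₂ π ρ s) : (1 : K) ∈ DD S p π ρ 0 :=
  Submodule.subset_span (Or.inr ⟨0, H.hp.pos, 0, H.hp.pos, le_refl _, by simp⟩)

theorem Core.D_mul (H : Core S K p h₁ h₂ y c₁ c₂ π ρ s) {m n : ℕ} {x x' : K} (hx : x ∈ DD S p π ρ m)
    (hx' : x' ∈ DD S p π ρ n) : x * x' ∈ DD S p π ρ (m + n) := by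
  induction hx using Submodule.span_induction with
  | mem x hx =>
    rcases hx with ⟨i, hi, j, hj, rfl⟩ | ⟨i, hi, j, hj, hm, rfl⟩
    · rw [smul_mul_assoc]
      exact DD_p _ _ _ _ _ _ (H.D_mon _ i j _ hx')
    · exact DD_anti _ _ _ _ _ (by omega) (H.D_mon _ i j _ hx')
  | zero => simp
  | add x y _ _ hx hy => rw [add_mul]; exact add_mem hx hy
  | smul t x _ hx => rw [smul_mul_assoc]; exact Submodule.smul_mem _ _ hx

theorem Core.D_pi1 (H : Core S K p h₁ h₂ y c₁ c₂ π ρ s) : π ∈ DD S p π ρ 1 := by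
  simpa using H.D_pi 0 1 H.D_one

theorem Core.D_rho1 (H : Core S K p h₁ h₂ y c₁ c₂ π ρ s) : ρ ∈ DD S p π ρ 1 := by
  simpa using H.D_rho 0 1 H.D_one

theorem Core.adjoin_le (H : Core S K p h₁ h₂ y c₁ c₂ π ρ s) (x : K)
    (hx : x ∈ Algebra.adjoin S ({π, ρ} : Set K)) : x ∈ DD S p π ρ 0 := by
  induction hx using Algebra.adjoin_induction with
  | mem x hx =>
    rcases hx with rfl | rfl
    · exact DD_anti _ _ _ 0 1 (by omega) H.D_pi1
    · exact DD_anti _ _ _ 0 1 (by omega) H.D_rho1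
  | algebraMap r => rw [Algebra.algebraMap_eq_smul_one]; exact Submodule.smul_mem _ _ H.D_one
  | add x y _ _ hx hy => exact add_mem hx hy
  | mul x x' _ _ hx hx' =>
    have h := H.D_mul (m := 0) (n := 0) hx hx'
    rw [Nat.zero_add] at h
    exact h

theorem Core.pow_mem (H : Core S K p h₁ h₂ y c₁ c₂ π ρ s) (m n : ℕ) (x : K) (hx : x ∈ DD S p π ρ m) :
    x ^ n ∈ DD S p π ρ (n * m) := by
  induction n with
  | zero => simpa using H.D_one
  | succ n ih =>
    rw [pow_succ, add_mul, one_mul]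
    exact H.D_mul ih hx

theorem Core.pow_sub_mem (H : Core S K p h₁ h₂ y c₁ c₂ π ρ s) (m n : ℕ) (x x' : K) (hx : x ∈ DD S p π ρ m)
    (hx' : x' ∈ DD S p π ρ m) (h : x - x' ∈ DD S p π ρ (m + 1)) :
    x ^ n - x' ^ n ∈ DD S p π ρ (n * m + 1) := by
  induction n with
  | zero => simp
  | succ n ih =>
    have h1 : x ^ (n + 1) - x' ^ (n + 1) = x ^ n * (x - x') + (x ^ n - x' ^ n) * x' := by ring
    rw [h1]
    refine add_mem ?_ ?_
    · exact DD_anti _ _ _ _ _ (by ring_nf; omega) (H.D_mul (H.pow_mem m n x hx) h)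
    · exact DD_anti _ _ _ _ _ (by ring_nf; omega) (H.D_mul ih hx')

theorem Core.evK_inj (H : Core S K p h₁ h₂ y c₁ c₂ π ρ s) (α β : ℕ → ℕ → S)
    (h : evK p π ρ α = evK p π ρ β) : ∀ i < p, ∀ j < p, α i j = β i j := by
  intro i hi j hj
  have := H.indep (fun i j => α i j + (-1) * β i j) (by
    change evK p π ρ (fun i j => α i j + (-1) * β i j) = 0
    rw [evK_add, evK_smul, h]
    simp) i hi j hj
  linear_combination this

theorem Core.mem_coeff (H : Core S K p h₁ h₂ y c₁ c₂ π ρ s) (m : ℕ) (α : ℕ → ℕ → S)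
    (h : evK p π ρ α ∈ DD S p π ρ m) : ∀ i < p, ∀ j < p, i + j < m → (p : S) ∣ α i j := by
  obtain ⟨β, hβ, hd⟩ := DD_coeff _ _ _ _ _ h
  intro i hi j hj hm
  rw [H.evK_inj _ _ hβ i hi j hj]
  exact hd i hi j hj hm

/-- antidiagonal form -/
theorem evK_anti {S K : Type*} [CommRing S] [Field K] [Algebra S K] (p : ℕ) (π ρ : K) (φ : ℕ → S) :
    evK p π ρ (fun i j => if i + j = p - 1 then φ i else 0) =
      ∑ i ∈ Finset.range p, φ i • (π ^ i * ρ ^ (p - 1 - i)) := by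
  unfold evK
  refine Finset.sum_congr rfl fun i hi => ?_
  rw [Finset.mem_range] at hi
  rw [Finset.sum_eq_single (p - 1 - i)]
  · simp only []; rw [if_pos (by omega)]
  · intro j _ hj; simp only []; rw [if_neg (by omega), zero_smul]
  · intro h; simp at h; omega

theorem Core.ell_pow (H : Core S K p h₁ h₂ y c₁ c₂ π ρ s) (u v : S) : (u • π + v • ρ) ^ (p - 1) =
    ∑ i ∈ Finset.range p, (((p - 1).choose i : S) * u ^ i * v ^ (p - 1 - i)) • (π ^ i * ρ ^ (p - 1 - i)) := by
  have hp := H.hp.pos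
  rw [add_pow, show p - 1 + 1 = p by omega]
  refine Finset.sum_congr rfl fun i _ => ?_
  simp only [Algebra.smul_def, map_mul, map_pow, map_natCast]
  ring
end

end

section

theorem val_exists {S K : Type*} [CommRing S] [Field K] [Algebra S K] (M : Submonoid K) (q : K)
    (hM : ∀ m ∈ M, IsIntegral S m) (hq : IsIntegral S q)
    (hdis : ∀ m ∈ M, ∀ r : K, IsIntegral S r → m ≠ q * r) :
    ∃ V : ValuationSubring K, (∀ r, IsIntegral S r → V.valuation r ≤ 1) ∧
      (∀ m ∈ M, V.valuation m = 1) ∧ V.valuation q < 1 := by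
  let A : Subring K :=
    { carrier := {x | ∃ m ∈ M, IsIntegral S (m * x)}
      zero_mem' := ⟨1, one_mem _, by simpa using isIntegral_zero⟩
      one_mem' := ⟨1, one_mem _, by simpa using isIntegral_one⟩
      add_mem' := by
        rintro x y ⟨m, hm, hx⟩ ⟨n, hn, hy⟩
        refine ⟨m * n, mul_mem hm hn, ?_⟩
        rw [show m * n * (x + y) = n * (m * x) + m * (n * y) by ring]
        exact ((hM n hn).mul hx).add ((hM m hm).mul hy)
      mul_mem' := by
        rintro x y ⟨m, hm, hx⟩ ⟨n, hn, hy⟩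
        refine ⟨m * n, mul_mem hm hn, ?_⟩
        rw [show m * n * (x * y) = (m * x) * (n * y) by ring]
        exact hx.mul hy
      neg_mem' := by
        rintro x ⟨m, hm, hx⟩
        exact ⟨m, hm, by rw [mul_neg]; exact hx.neg⟩ }
  have hR : ∀ r, IsIntegral S r → r ∈ A := fun r hr => ⟨1, one_mem _, by simpa using hr⟩
  have hm0 : ∀ m ∈ M, m ≠ 0 := by
    intro m hm h0
    exact hdis m hm 0 isIntegral_zero (by simp [h0])
  have hinv : ∀ m ∈ M, m⁻¹ ∈ A := fun m hm => ⟨m, hm, by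
    rw [mul_inv_cancel₀ (hm0 m hm)]; exact isIntegral_one⟩
  let I : Ideal A := Ideal.span {⟨q, hR q hq⟩}
  have hI : I ≠ ⊤ := by
    rw [Ne, Ideal.eq_top_iff_one, Ideal.mem_span_singleton]
    rintro ⟨⟨c, m, hm, hc⟩, h⟩
    have h1 : (1 : K) = q * c := congrArg Subtype.val h
    refine hdis m hm _ hc ?_
    linear_combination m * h1
  obtain ⟨V, hAV, hIV⟩ := Ideal.image_subset_nonunits_valuationSubring I hI
  refine ⟨V, fun r hr => (V.valuation_le_one_iff r).2 (hAV (hR r hr)), ?_, ?_⟩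
  · intro m hm
    apply le_antisymm ((V.valuation_le_one_iff m).2 (hAV (hR m (hM m hm))))
    have h1 := (V.valuation_le_one_iff _).2 (hAV (hinv m hm))
    rw [map_inv₀] at h1
    exact (inv_le_one₀ (zero_lt_iff.2 ((map_ne_zero _).2 (hm0 m hm)))).1 h1
  · rw [← ValuationSubring.mem_nonunits_iff]
    exact hIV ⟨⟨q, hR q hq⟩, Ideal.mem_span_singleton_self _, rfl⟩

theorem artin_int {S K : Type*} [CommRing S] [Field K] [Algebra S K] (n : ℕ) (hn : 2 ≤ n) (τ c e : K)
    (hc : IsIntegral S c) (he : IsIntegral S e) (h : τ ^ n = c * τ + e) : IsIntegral S τ := by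
  let R := integralClosure S K
  have : IsIntegral R τ := by
    refine ⟨Polynomial.X ^ n - (Polynomial.C (⟨c, hc⟩ : R) * Polynomial.X + Polynomial.C (⟨e, he⟩ : R)), ?_, ?_⟩
    · apply Polynomial.monic_X_pow_sub
      refine lt_of_le_of_lt Polynomial.degree_linear_le ?_
      exact_mod_cast hn
    · simp only [Polynomial.eval₂_sub, Polynomial.eval₂_add, Polynomial.eval₂_mul, Polynomial.eval₂_C,
        Polynomial.eval₂_X, Polynomial.eval₂_X_pow]
      rw [h]
      exact sub_self _
  exact isIntegral_trans (A := R) τ this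

theorem mono_int {S K : Type*} [CommRing S] [Field K] [Algebra S K] (p : ℕ) (hp : 0 < p) (q : K) (hq : q ≠ 0)
    (hqi : IsIntegral S q) (x y z x' y' z' : K)
    (hx' : IsIntegral S x') (hy' : IsIntegral S y') (hz' : IsIntegral S z')
    (hx : x ^ p = q * x') (hy : y ^ p = q * y') (hz : z ^ p = q * z') (i j k : ℕ) (h : p ≤ i + j + k) :
    ∃ r, IsIntegral S r ∧ x ^ i * y ^ j * z ^ k = q * r := by
  refine ⟨x ^ i * y ^ j * z ^ k / q, ?_, by field_simp⟩
  apply IsIntegral.of_pow hp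
  have : (x ^ i * y ^ j * z ^ k / q) ^ p = q ^ (i + j + k - p) * (x' ^ i * y' ^ j * z' ^ k) := by
    rw [div_pow, div_eq_iff (pow_ne_zero _ hq)]
    have e1 : q ^ (i + j + k - p) * q ^ p = q ^ i * q ^ j * q ^ k := by
      rw [← pow_add, ← pow_add, ← pow_add]; congr 1; omega
    calc (x ^ i * y ^ j * z ^ k) ^ p = (x ^ p) ^ i * (y ^ p) ^ j * (z ^ p) ^ k := by ring
      _ = (q ^ i * q ^ j * q ^ k) * (x' ^ i * y' ^ j * z' ^ k) := by rw [hx, hy, hz]; ring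
      _ = _ := by rw [← e1]; ring
  rw [this]
  exact (hqi.pow _).mul (((hx'.pow _).mul (hy'.pow _)).mul (hz'.pow _))

/-- membership in `pR` -/
def InP (S : Type*) {K : Type*} [CommRing S] [Field K] [Algebra S K] (p : ℕ) (x : K) : Prop :=
  ∃ r : K, IsIntegral S r ∧ x = (p : K) * r

section InP
variable {S K : Type*} [CommRing S] [Field K] [Algebra S K] {p : ℕ}

theorem InP.add {x y : K} (hx : InP S p x) (hy : InP S p y) : InP S p (x + y) := by
  obtain ⟨r, hr, rfl⟩ := hx
  obtain ⟨t, ht, rfl⟩ := hy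
  exact ⟨r + t, hr.add ht, by ring⟩

theorem InP.mul {x y : K} (hx : IsIntegral S x) (hy : InP S p y) : InP S p (x * y) := by
  obtain ⟨t, ht, rfl⟩ := hy
  exact ⟨x * t, hx.mul ht, by ring⟩

theorem InP.neg {x : K} (hx : InP S p x) : InP S p (-x) := by
  obtain ⟨t, ht, rfl⟩ := hx
  exact ⟨-t, ht.neg, by ring⟩

theorem InP.sub {x y : K} (hx : InP S p x) (hy : InP S p y) : InP S p (x - y) := by
  rw [sub_eq_add_neg]; exact hx.add hy.neg

theorem InP.zero : InP S p (0 : K) := ⟨0, isIntegral_zero, by simp⟩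

theorem InP.smul {x : K} (t : S) (hx : InP S p x) : InP S p (t • x) := by
  rw [Algebra.smul_def]
  exact hx.mul isIntegral_algebraMap

theorem InP.of_dvd {x : K} (t : S) (ht : (p : S) ∣ t) (hx : IsIntegral S x) : InP S p (t • x) := by
  obtain ⟨u, rfl⟩ := ht
  refine ⟨u • x, hx.smul u, ?_⟩
  rw [mul_smul, Algebra.smul_def (p : S), map_natCast]

theorem InP.sum {ι : Type*} (F : Finset ι) (x : ι → K) (h : ∀ i ∈ F, InP S p (x i)) :
    InP S p (∑ i ∈ F, x i) := by
  classical
  induction F using Finset.induction_on with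
  | empty => exact InP.zero
  | insert a F ha ih =>
    rw [Finset.sum_insert ha]
    exact (h a (by simp)).add (ih fun i hi => h i (by simp [hi]))
end InP

section
variable {S K : Type*} [CommRing S] [IsDomain S] [Field K] [Algebra S K]
    {p : ℕ} {h₁ h₂ y : S} {c₁ c₂ : ℕ → S} {π ρ s : K}

theorem Core.q0 (H : Core S K p h₁ h₂ y c₁ c₂ π ρ s) : (p : K) ≠ 0 := by
  rw [← map_natCast (algebraMap S K), Ne, map_eq_zero_iff _ H.inj]
  exact H.hpS.ne_zero

theorem int_nat (S : Type*) {K : Type*} [CommRing S] [Field K] [Algebra S K] (p : ℕ) : IsIntegral S (p : K) := by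
  rw [← map_natCast (algebraMap S K)]; exact isIntegral_algebraMap

theorem Core.D_int (H : Core S K p h₁ h₂ y c₁ c₂ π ρ s) (m : ℕ) (x : K) (hx : x ∈ DD S p π ρ m) :
    IsIntegral S x := by
  have hx0 := DD_anti _ _ _ 0 m (Nat.zero_le _) hx
  have hfg : (DD S p π ρ 0).FG := by
    apply Submodule.fg_span
    apply Set.Finite.union
    · apply Set.Finite.subset (((Set.finite_Iio p).prod (Set.finite_Iio p)).image
        (fun ij : ℕ × ℕ => (p : S) • (π ^ ij.1 * ρ ^ ij.2)))
      rintro x ⟨i, hi, j, hj, rfl⟩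
      exact ⟨(i, j), ⟨hi, hj⟩, rfl⟩
    · apply Set.Finite.subset (((Set.finite_Iio p).prod (Set.finite_Iio p)).image
        (fun ij : ℕ × ℕ => (π ^ ij.1 * ρ ^ ij.2)))
      rintro x ⟨i, hi, j, hj, -, rfl⟩
      exact ⟨(i, j), ⟨hi, hj⟩, rfl⟩
  have : FaithfulSMul S K := (faithfulSMul_iff_algebraMap_injective S K).2 H.inj
  refine isIntegral_of_smul_mem_submodule (DD S p π ρ 0) ?_ hfg x ?_
  · rw [Submodule.ne_bot_iff]
    exact ⟨1, H.D_one, one_ne_zero⟩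
  · intro n hn
    have h := H.D_mul (m := 0) (n := 0) hx0 hn
    rw [Nat.zero_add] at h
    exact h

theorem Core.int_pi (H : Core S K p h₁ h₂ y c₁ c₂ π ρ s) : IsIntegral S π := H.D_int 1 _ H.D_pi1
theorem Core.int_rho (H : Core S K p h₁ h₂ y c₁ c₂ π ρ s) : IsIntegral S ρ := H.D_int 1 _ H.D_rho1

theorem int_sum {S K : Type*} [CommRing S] [Field K] [Algebra S K] (n : ℕ) (c : ℕ → S) (x : K)
    (hx : IsIntegral S x) : IsIntegral S (∑ k ∈ Finset.range n, c k • x ^ k) :=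
  IsIntegral.sum _ fun k _ => (hx.pow k).smul (c k)

theorem Core.pip (H : Core S K p h₁ h₂ y c₁ c₂ π ρ s) : π ^ p = (p : K) * ∑ k ∈ Finset.range p, c₁ k • π ^ k := by
  rw [H.hπ, Algebra.smul_def, map_natCast]

theorem Core.rhop (H : Core S K p h₁ h₂ y c₁ c₂ π ρ s) : ρ ^ p = (p : K) * ∑ k ∈ Finset.range p, c₂ k • ρ ^ k := by
  rw [H.hρ, Algebra.smul_def, map_natCast]

theorem Core.mono (H : Core S K p h₁ h₂ y c₁ c₂ π ρ s) (i j : ℕ) (h : p ≤ i + j) :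
    InP S p (π ^ i * ρ ^ j) := by
  obtain ⟨r, hr, h⟩ := mono_int p H.hp.pos (p : K) H.q0 (int_nat S p) π ρ π _ _ _
    (int_sum p c₁ π H.int_pi) (int_sum p c₂ ρ H.int_rho) (int_sum p c₁ π H.int_pi) H.pip H.rhop H.pip i j 0 (by omega)
  exact ⟨r, hr, by rw [← h]; simp⟩

theorem Core.ell1 (H : Core S K p h₁ h₂ y c₁ c₂ π ρ s) (u v : S) : u • π + v • ρ ∈ DD S p π ρ 1 :=
  add_mem (Submodule.smul_mem _ _ H.D_pi1) (Submodule.smul_mem _ _ H.D_rho1)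

theorem Core.pirho (H : Core S K p h₁ h₂ y c₁ c₂ π ρ s) : π * ρ ∈ DD S p π ρ 2 :=
  H.D_mul (m := 1) (n := 1) H.D_pi1 H.D_rho1

theorem Core.z1 (H : Core S K p h₁ h₂ y c₁ c₂ π ρ s) : h₂ • π + h₁ • ρ + π * ρ ∈ DD S p π ρ 1 :=
  add_mem (H.ell1 _ _) (DD_anti _ _ _ 1 2 (by omega) H.pirho)

theorem pow_add_mod {K : Type*} [CommRing K] (R : Subring K) (q x : K) (y : K) (hx : x ∈ R) (hy : y ∈ R) (hq : q ∈ R)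
    (n : ℕ) : ∃ r ∈ R, (q * x + y) ^ n = y ^ n + q * r := by
  induction n with
  | zero => exact ⟨0, zero_mem _, by simp⟩
  | succ n ih =>
    obtain ⟨r, hr, h⟩ := ih
    refine ⟨x * y ^ n + r * (q * x + y), add_mem (mul_mem hx (pow_mem hy _)) (mul_mem hr (add_mem (mul_mem hq hx) hy)), ?_⟩
    rw [pow_succ, h]; ring

theorem Core.tau (H : Core S K p h₁ h₂ y c₁ c₂ π ρ s) : ∃ τ γ : K, IsIntegral S τ ∧
    γ ∈ DD S p π ρ 0 ∧ γ - (-((h₁ * h₂) ^ (p - 1)) • (1 : K)) ∈ DD S p π ρ 1 ∧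
    (h₂ • π + h₁ • ρ + π * ρ) ^ (p - 1) = (p : K) * τ ∧
    (h₂ • π + h₁ • ρ + π * ρ) * τ = (p : K) * algebraMap S K y + (h₂ • π + h₁ • ρ + π * ρ) * γ := by
  have hz1 := H.z1
  have hz := H.hz
  set z : K := h₂ • π + h₁ • ρ + π * ρ with hzdef
  set γ : K := (-((h₁ * h₂) ^ (p - 1)) • (1 : K) - z * s) with hγ
  have hq := H.q0
  have hzs : z * s ∈ DD S p π ρ 1 := H.D_mul (m := 1) (n := 0) hz1 (H.adjoin_le _ H.hs)
  have hγ0 : γ ∈ DD S p π ρ 0 :=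
    sub_mem (Submodule.smul_mem _ _ H.D_one) (DD_anti _ _ _ 0 1 (by omega) hzs)
  have hzp : z ^ p = (p : K) ^ 2 * algebraMap S K y + (p : K) * (z * γ) := by
    rw [hz]
    simp only [Algebra.smul_def, map_mul, map_pow, map_natCast, mul_one]
  have hpp : z ^ p = z ^ (p - 1) * z := by
    rw [← pow_succ, Nat.sub_add_cancel H.hp.pos]
  have hzint := H.D_int _ _ hz1
  have hγint := H.D_int _ _ hγ0
  refine ⟨z ^ (p - 1) / p, γ, ?_, hγ0, ?_, by field_simp, ?_⟩
  · obtain ⟨r, hr, h⟩ := pow_add_mod (integralClosure S K).toSubring (p : K) (algebraMap S K y) (z * γ)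
      isIntegral_algebraMap (hzint.mul hγint) (int_nat S p) (p - 1)
    refine artin_int p H.hp.two_le _ (γ ^ (p - 1)) r (hγint.pow _) hr ?_
    have h1 : z ^ p = p * (p * algebraMap S K y + z * γ) := by rw [hzp]; ring
    have h2 : (p : K) ^ p = p ^ (p - 1) * p := by rw [← pow_succ, Nat.sub_add_cancel H.hp.pos]
    rw [div_pow, ← pow_mul, mul_comm, pow_mul, h1, mul_pow, h, h2]
    field_simp
    ring
  · rw [hγ, sub_sub_cancel_left]
    exact neg_mem hzs
  · have : z * (z ^ (p - 1) / p) = z ^ p / p := by rw [hpp]; ring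
    rw [this, hzp]
    field_simp

theorem Core.disj (H : Core S K p h₁ h₂ y c₁ c₂ π ρ s) (τ γ : K) (hτ : IsIntegral S τ)
    (hγ : γ ∈ DD S p π ρ 0) (hγ1 : γ - (-((h₁ * h₂) ^ (p - 1)) • (1 : K)) ∈ DD S p π ρ 1)
    (hz : (h₂ • π + h₁ • ρ + π * ρ) * τ = (p : K) * algebraMap S K y + (h₂ • π + h₁ • ρ + π * ρ) * γ)
    (t : S) (ht : ¬ (p : S) ∣ t) (n : ℕ) : ¬ InP S p (algebraMap S K t * τ ^ n) := by
  intro hin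
  have hz1 := H.z1
  set z : K := h₂ • π + h₁ • ρ + π * ρ with hzdef
  have hγint := H.D_int _ _ hγ
  have hzint := H.D_int _ _ hz1
  have h1 : ∀ n, InP S p (z * τ ^ n - z * γ ^ n) := by
    intro n
    induction n with
    | zero => simpa using InP.zero
    | succ n ih =>
      have : z * τ ^ (n + 1) - z * γ ^ (n + 1) = τ * (z * τ ^ n - z * γ ^ n) +
          γ ^ n * ((p : K) * algebraMap S K y) := by
        linear_combination γ ^ n * hz
      rw [this]
      exact (InP.mul hτ ih).add (InP.mul (hγint.pow _) ⟨_, isIntegral_algebraMap, rfl⟩)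
  have h2 : InP S p (algebraMap S K t * (z * γ ^ n)) := by
    have : algebraMap S K t * (z * γ ^ n) = z * (algebraMap S K t * τ ^ n) -
      algebraMap S K t * (z * τ ^ n - z * γ ^ n) := by ring
    rw [this]
    exact (InP.mul hzint hin).sub (InP.mul isIntegral_algebraMap (h1 n))
  obtain ⟨r, hr, h3⟩ := h2
  obtain ⟨α, hα⟩ := H.den (r ^ (p - 1)) (hr.pow _)
  have hp3 := H.hp3
  have h4 : (algebraMap S K t * (z * γ ^ n)) ^ (p - 1) ∈ DD S p π ρ p := by
    have e : (algebraMap S K t * (z * γ ^ n)) ^ (p - 1) = (p : S) • (((p : S) ^ (p - 3)) • ((p : S) • r ^ (p - 1))) := by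
      rw [h3, mul_pow, ← mul_smul, ← mul_smul, Algebra.smul_def]
      congr 1
      rw [← pow_succ', ← pow_succ]
      simp only [map_pow, map_natCast]
      congr 1
      omega
    rw [e, hα]
    refine DD_p p π ρ 0 p _ (Submodule.smul_mem _ _ ?_)
    exact evK_mem p π ρ 0 α (by intros; omega)
  let c : S := -((h₁ * h₂) ^ (p - 1))
  let N := n * (p - 1)
  have h5 : (h₂ • π + h₁ • ρ) ^ (p - 1) * (c • (1 : K)) ^ N ∈ DD S p π ρ (p - 1) := by
    have := H.D_mul (H.pow_mem 1 (p - 1) _ (H.ell1 h₂ h₁)) (H.pow_mem 0 N _ (Submodule.smul_mem _ c H.D_one))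
    simpa using this
  have h6 : z ^ (p - 1) * γ ^ N - (h₂ • π + h₁ • ρ) ^ (p - 1) * (c • (1 : K)) ^ N ∈ DD S p π ρ p := by
    have e : z ^ (p - 1) * γ ^ N - (h₂ • π + h₁ • ρ) ^ (p - 1) * (c • (1 : K)) ^ N =
      (z ^ (p - 1) - (h₂ • π + h₁ • ρ) ^ (p - 1)) * γ ^ N + (h₂ • π + h₁ • ρ) ^ (p - 1) * (γ ^ N - (c • (1 : K)) ^ N) := by ring
    rw [e]
    refine add_mem ?_ ?_
    · have a1 := H.pow_sub_mem 1 (p - 1) z (h₂ • π + h₁ • ρ) hz1 (H.ell1 _ _) (by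
        rw [hzdef, add_sub_cancel_left]; exact H.pirho)
      exact DD_anti _ _ _ _ _ (by simp; omega) (H.D_mul a1 (H.pow_mem 0 N _ hγ))
    · have a1 := H.pow_sub_mem 0 N γ (c • (1 : K)) hγ (Submodule.smul_mem _ _ H.D_one) hγ1
      exact DD_anti _ _ _ _ _ (by simp; omega) (H.D_mul (H.pow_mem 1 (p - 1) _ (H.ell1 h₂ h₁)) a1)
  have h7 : (t ^ (p - 1) * c ^ N) • (h₂ • π + h₁ • ρ) ^ (p - 1) ∈ DD S p π ρ p := by
    have e : (t ^ (p - 1) * c ^ N) • (h₂ • π + h₁ • ρ) ^ (p - 1) = (algebraMap S K t * (z * γ ^ n)) ^ (p - 1)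
      - t ^ (p - 1) • (z ^ (p - 1) * γ ^ N - (h₂ • π + h₁ • ρ) ^ (p - 1) * (c • (1 : K)) ^ N) := by
      simp only [N, mul_pow, ← pow_mul]
      rw [Algebra.smul_def, Algebra.smul_def c, Algebra.smul_def (t ^ (p - 1))]
      simp only [map_mul, map_pow]
      ring
    rw [e]
    exact sub_mem h4 (Submodule.smul_mem _ _ h6)
  rw [H.ell_pow, ← evK_anti, ← evK_smul] at h7
  have h8 := H.mem_coeff p _ h7 (p - 1) (by omega) 0 (by omega) (by omega)
  simp only [add_zero, if_true, Nat.choose_self, Nat.cast_one, one_mul, Nat.sub_self, pow_zero, mul_one] at h8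
  have hP := H.hpS
  rcases hP.dvd_or_dvd h8 with h8 | h8
  · rcases hP.dvd_or_dvd h8 with h8 | h8
    · exact ht (hP.dvd_of_dvd_pow h8)
    · have h9 := hP.dvd_of_dvd_pow h8
      simp only [c, dvd_neg] at h9
      rcases hP.dvd_or_dvd (hP.dvd_of_dvd_pow h9) with h9 | h9
      · exact H.h1 h9
      · exact H.h2 h9
  · exact H.h2 (hP.dvd_of_dvd_pow h8)
end

end

section

section
variable {S K : Type*} [CommRing S] [IsDomain S] [Field K] [Algebra S K]
    {p : ℕ} {h₁ h₂ y : S} {c₁ c₂ : ℕ → S} {π ρ s : K}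

theorem Core.val (H : Core S K p h₁ h₂ y c₁ c₂ π ρ s) : ∃ V : ValuationSubring K,
    (∀ r, IsIntegral S r → V.valuation r ≤ 1) ∧
    (∀ t : S, ¬ (p : S) ∣ t → V.valuation (algebraMap S K t) = 1) ∧ V.valuation (p : K) < 1 ∧
    V.valuation (h₂ • π + h₁ • ρ + π * ρ) ^ (p - 1) = V.valuation (p : K) := by
  obtain ⟨τ, γ, hτ, hγ, hγ1, hz1, hz⟩ := H.tau
  let M : Submonoid K :=
    { carrier := {x | ∃ t : S, ∃ n : ℕ, ¬ (p : S) ∣ t ∧ x = algebraMap S K t * τ ^ n}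
      one_mem' := ⟨1, 0, fun h => H.hpS.not_isUnit (isUnit_of_dvd_one h), by simp⟩
      mul_mem' := by
        rintro _ _ ⟨t, n, ht, rfl⟩ ⟨u, m, hu, rfl⟩
        refine ⟨t * u, n + m, fun h => (H.hpS.dvd_or_dvd h).elim ht hu, ?_⟩
        rw [map_mul]; ring }
  obtain ⟨V, h1, h2, h3⟩ := val_exists (S := S) M (p : K)
    (by rintro _ ⟨t, n, ht, rfl⟩; exact isIntegral_algebraMap.mul (hτ.pow n)) (int_nat S p)
    (by rintro _ ⟨t, n, ht, rfl⟩ r hr he; exact H.disj τ γ hτ hγ hγ1 hz t ht n ⟨r, hr, he⟩)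
  refine ⟨V, h1, fun t ht => h2 _ ⟨t, 0, ht, by simp⟩, h3, ?_⟩
  rw [← map_pow, hz1, map_mul, h2 τ ⟨1, 1, fun h => H.hpS.not_isUnit (isUnit_of_dvd_one h), by simp⟩, mul_one]

theorem val_root {S K : Type*} [CommRing S] [Field K] [Algebra S K] {p : ℕ} (hp : 0 < p) (V : ValuationSubring K)
    (h1 : ∀ r, IsIntegral S r → V.valuation r ≤ 1) (hq : V.valuation (p : K) < 1)
    (c : ℕ → S) (π : K) (hπi : IsIntegral S π) (hc : V.valuation (algebraMap S K (c 0)) = 1)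
    (hπ : π ^ p = (p : K) * ∑ k ∈ Finset.range p, c k • π ^ k) : V.valuation π ^ p = V.valuation (p : K) := by
  have hs := h1 _ (int_sum p c π hπi)
  have hlt : V.valuation π < 1 := by
    by_contra hcon
    have : V.valuation π = 1 := le_antisymm (h1 _ hπi) (not_lt.1 hcon)
    have h2 : V.valuation (π ^ p) < 1 := by
      rw [hπ, map_mul]
      exact mul_lt_one_of_lt_of_le hq hs
    rw [map_pow, this, one_pow] at h2
    exact lt_irrefl _ h2
  rw [← map_pow, hπ, map_mul]
  have : V.valuation (∑ k ∈ Finset.range p, c k • π ^ k) = 1 := by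
    obtain ⟨n, rfl⟩ : ∃ n, p = n + 1 := ⟨p - 1, by omega⟩
    rw [Finset.sum_range_succ', Valuation.map_add_eq_of_lt_right]
    · simpa [Algebra.smul_def] using hc
    · rw [pow_zero, Algebra.smul_def, mul_one, hc]
      apply Valuation.map_sum_lt _ one_ne_zero
      intro k _
      rw [Algebra.smul_def, map_mul, map_pow]
      exact lt_of_le_of_lt (mul_le_of_le_one_left' (h1 _ isIntegral_algebraMap)) (pow_lt_one₀ zero_le hlt (by omega))
  rw [this, mul_one]

theorem Core.val2 (H : Core S K p h₁ h₂ y c₁ c₂ π ρ s) : ∃ V : ValuationSubring K,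
    (∀ r, IsIntegral S r → V.valuation r ≤ 1) ∧
    (∀ t : S, ¬ (p : S) ∣ t → V.valuation (algebraMap S K t) = 1) ∧
    V.valuation π ^ p = V.valuation (p : K) ∧ π ≠ 0 ∧
    ∃ η : K, η * π = h₂ • π + h₁ • ρ ∧ V.valuation η < 1 ∧ η ≠ 0 ∧ V.valuation η ^ (p - 1) = V.valuation π := by
  obtain ⟨V, h1, h2, h3, h4⟩ := H.val
  have hp3 := H.hp3
  have hpi := val_root H.hp.pos V h1 h3 c₁ π H.int_pi (h2 _ H.c1) H.pip
  have hrho := val_root H.hp.pos V h1 h3 c₂ ρ H.int_rho (h2 _ H.c2) H.rhop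
  have hq0 : V.valuation (p : K) ≠ 0 := (map_ne_zero _).2 H.q0
  have heq : V.valuation ρ = V.valuation π :=
    (pow_left_inj₀ zero_le zero_le H.hp.ne_zero).1 (by rw [hpi, hrho])
  have hpi0 : V.valuation π ≠ 0 := by
    intro h; rw [h, zero_pow H.hp.ne_zero] at hpi; exact hq0 hpi.symm
  have hlt : V.valuation π < 1 := by
    by_contra hcon
    have : V.valuation π = 1 := le_antisymm (h1 _ H.int_pi) (not_lt.1 hcon)
    rw [this, one_pow] at hpi
    exact h3.ne hpi.symm
  have hpi0' : π ≠ 0 := (map_ne_zero V.valuation).1 hpi0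
  have hlt2 : V.valuation (π * ρ) < V.valuation (h₂ • π + h₁ • ρ + π * ρ) := by
    by_contra hcon
    rw [not_lt, map_mul, heq, ← sq] at hcon
    have := pow_le_pow_left₀ zero_le hcon (p - 1)
    rw [h4, ← hpi, ← pow_mul] at this
    exact absurd this (not_le.2 (pow_lt_pow_right_of_lt_one₀ (zero_lt_iff.2 hpi0) hlt (by omega)))
  have hell : V.valuation (h₂ • π + h₁ • ρ) = V.valuation (h₂ • π + h₁ • ρ + π * ρ) := by
    have := Valuation.map_sub_eq_of_lt_left V.valuation hlt2
    rwa [add_sub_cancel_right] at this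
  have hη : V.valuation ((h₂ • π + h₁ • ρ) / π) ^ (p - 1) = V.valuation π := by
    rw [map_div₀, hell, div_pow, h4, ← hpi, div_eq_iff (pow_ne_zero _ hpi0), ← pow_succ',
      Nat.sub_add_cancel H.hp.pos]
  refine ⟨V, h1, h2, hpi, hpi0', (h₂ • π + h₁ • ρ) / π, by field_simp, ?_, ?_, hη⟩
  · by_contra hcon
    have := one_le_pow₀ (n := p - 1) (not_lt.1 hcon)
    rw [hη] at this
    exact absurd hlt (not_lt.2 this)
  · intro h0
    rw [h0, map_zero, zero_pow (by omega)] at hη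
    exact hpi0 hη.symm

theorem val_lowest {S K : Type*} [CommRing S] [Field K] [Algebra S K] {p : ℕ} (hp : 2 ≤ p) (V : ValuationSubring K)
    (h1 : ∀ r, IsIntegral S r → V.valuation r ≤ 1)
    (h2 : ∀ t : S, ¬ (p : S) ∣ t → V.valuation (algebraMap S K t) = 1)
    (η : K) (hη0 : η ≠ 0) (hη : V.valuation η < 1) (hηp : V.valuation (p : K) = V.valuation η ^ ((p - 1) * p))
    (ψ : ℕ → S) (h : V.valuation (∑ j ∈ Finset.range p, ψ j • η ^ j) ≤ V.valuation η ^ (p - 1)) :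
    ∀ j < p - 1, (p : S) ∣ ψ j := by
  intro j
  induction j using Nat.strong_induction_on with
  | _ j ih =>
    intro hj
    by_contra hcon
    have hpos : 0 < V.valuation η := zero_lt_iff.2 ((map_ne_zero _).2 hη0)
    have hlt : ∀ m, j < m → V.valuation η ^ m < V.valuation η ^ j := fun m hm =>
      pow_lt_pow_right_of_lt_one₀ hpos hη hm
    have e : ψ j • η ^ j = (∑ j ∈ Finset.range p, ψ j • η ^ j) - ∑ k ∈ (Finset.range p).erase j, ψ k • η ^ k := by
      rw [← Finset.add_sum_erase (Finset.range p) _ (Finset.mem_range.2 (show j < p by omega)), add_sub_cancel_right]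
    have hv : V.valuation (ψ j • η ^ j) = V.valuation η ^ j := by
      rw [Algebra.smul_def, map_mul, h2 _ hcon, one_mul, map_pow]
    have hn0 : V.valuation η ^ j ≠ 0 := (pow_pos hpos _).ne'
    have : V.valuation (ψ j • η ^ j) < V.valuation η ^ j := by
      rw [e]
      apply Valuation.map_sub_lt
      · exact lt_of_le_of_lt h (hlt _ hj)
      · apply Valuation.map_sum_lt _ hn0
        intro k hk
        rw [Finset.mem_erase, Finset.mem_range] at hk
        rcases lt_or_gt_of_ne hk.1 with hkj | hkj
        · obtain ⟨t, ht⟩ := ih k hkj (by omega)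
          rw [ht, Algebra.smul_def, map_mul, map_mul, map_natCast, map_mul, hηp, map_pow, mul_assoc]
          refine lt_of_le_of_lt (mul_le_of_le_one_right' ?_) (hlt _ ?_)
          · refine mul_le_one' (h1 _ isIntegral_algebraMap) (pow_le_one₀ zero_le hη.le)
          · calc j < p - 1 := hj
              _ ≤ (p - 1) * p := Nat.le_mul_of_pos_right _ (by omega)
        · rw [Algebra.smul_def, map_mul, map_pow]
          exact lt_of_le_of_lt (mul_le_of_le_one_left' (h1 _ isIntegral_algebraMap)) (hlt _ hkj)
    rw [hv] at this
    exact lt_irrefl _ this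

open Polynomial in
theorem Core.form (H : Core S K p h₁ h₂ y c₁ c₂ π ρ s) (φ : ℕ → S)
    (hF : InP S p (∑ i ∈ Finset.range p, φ i • (π ^ i * ρ ^ (p - 1 - i)))) :
    ∃ t : S, ∀ i < p, (p : S) ∣ h₁ ^ (p - 1) * φ i - t * ((p - 1).choose i * h₂ ^ i * h₁ ^ (p - 1 - i)) := by
  obtain ⟨V, h1, h2, hpi, hpi0, η, hη, hη1, hη0, hηp⟩ := H.val2
  have hp3 := H.hp3
  let ψ : S[X] := ∑ i ∈ Finset.range p, C (φ i * h₁ ^ i) * (X - C h₂) ^ (p - 1 - i)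
  have hdeg : ψ.natDegree < p := by
    have : ψ.natDegree ≤ p - 1 := by
      refine natDegree_sum_le_of_forall_le _ _ fun i _ => ?_
      refine (natDegree_C_mul_le _ _).trans ?_
      refine (natDegree_pow_le).trans ?_
      calc (p - 1 - i) * (X - C h₂).natDegree ≤ (p - 1 - i) * 1 := Nat.mul_le_mul_left _ (natDegree_X_sub_C_le _)
        _ ≤ p - 1 := by omega
    omega
  have hev : aeval η ψ * π ^ (p - 1) = algebraMap S K (h₁ ^ (p - 1)) *
      ∑ i ∈ Finset.range p, φ i • (π ^ i * ρ ^ (p - 1 - i)) := by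
    simp only [ψ, map_sum, Finset.sum_mul, Finset.mul_sum]
    refine Finset.sum_congr rfl fun i hi => ?_
    rw [Finset.mem_range] at hi
    simp only [map_mul, map_pow, map_sub, aeval_C, aeval_X, Algebra.smul_def] at hη ⊢
    have e1 : (η - algebraMap S K h₂) * π = algebraMap S K h₁ * ρ := by linear_combination hη
    have e2 : π ^ (p - 1) = π ^ (p - 1 - i) * π ^ i := by rw [← pow_add]; congr 1; omega
    have e3 : algebraMap S K h₁ ^ (p - 1) = algebraMap S K h₁ ^ (p - 1 - i) * algebraMap S K h₁ ^ i := by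
      rw [← pow_add]; congr 1; omega
    have e4 := congrArg (· ^ (p - 1 - i)) e1
    simp only [mul_pow] at e4
    rw [e2, e3]
    linear_combination (algebraMap S K (φ i) * algebraMap S K h₁ ^ i * π ^ i) * e4
  have hvq : V.valuation (p : K) = V.valuation η ^ ((p - 1) * p) := by rw [pow_mul, hηp, hpi]
  have hv : V.valuation (∑ j ∈ Finset.range p, ψ.coeff j • η ^ j) ≤ V.valuation η ^ (p - 1) := by
    rw [← aeval_eq_sum_range' hdeg, hηp]
    have hpos : 0 < V.valuation π ^ (p - 1) := pow_pos (zero_lt_iff.2 ((_root_.map_ne_zero _).2 hpi0)) _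
    rw [← mul_le_mul_iff_left₀ hpos]
    obtain ⟨r, hr, hF⟩ := hF
    rw [← map_pow, ← map_mul, hev, hF, map_mul, map_mul, ← hpi, map_pow V.valuation, ← pow_succ', Nat.sub_add_cancel H.hp.pos, mul_left_comm]
    exact mul_le_of_le_one_right' (mul_le_one' (h1 _ isIntegral_algebraMap) (h1 _ hr))
  have hlow := val_lowest H.hp.two_le V h1 h2 η hη0 hη1 hvq ψ.coeff hv
  refine ⟨ψ.coeff (p - 1), ?_⟩
  have hdvd : C (p : S) ∣ ψ - C (ψ.coeff (p - 1)) * X ^ (p - 1) := by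
    rw [C_dvd_iff_dvd_coeff]
    intro j
    rw [coeff_sub, coeff_C_mul, coeff_X_pow]
    rcases lt_trichotomy j (p - 1) with hj | hj | hj
    · rw [if_neg hj.ne, mul_zero, sub_zero]; exact hlow j hj
    · rw [if_pos hj, hj]; simp
    · rw [if_neg hj.ne', coeff_eq_zero_of_natDegree_lt (by omega)]; simp
  have hd2 := map_dvd (compRingHom (C h₂ + C h₁ * X)) hdvd
  have e1 : compRingHom (C h₂ + C h₁ * X) (ψ - C (ψ.coeff (p - 1)) * X ^ (p - 1)) =
      (∑ i ∈ Finset.range p, C (h₁ ^ (p - 1) * φ i) * X ^ (p - 1 - i)) -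
        C (ψ.coeff (p - 1)) * (C h₂ + C h₁ * X) ^ (p - 1) := by
    simp only [coe_compRingHom_apply, sub_comp, mul_comp, C_comp, pow_comp, X_comp]
    congr 1
    simp only [ψ, sum_comp, mul_comp, C_comp, pow_comp, X_comp, sub_comp, add_sub_cancel_left]
    refine Finset.sum_congr rfl fun i hi => ?_
    rw [Finset.mem_range] at hi
    have e3 : h₁ ^ (p - 1) = h₁ ^ (p - 1 - i) * h₁ ^ i := by
      rw [← pow_add]; congr 1; omega
    rw [e3]
    simp only [map_mul, map_pow]
    ring
  rw [e1] at hd2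
  simp only [coe_compRingHom_apply, C_comp] at hd2
  rw [C_dvd_iff_dvd_coeff] at hd2
  intro i hi
  have h5 := hd2 (p - 1 - i)
  rw [coeff_sub, finsetSum_coeff, Finset.sum_eq_single i, coeff_C_mul, coeff_X_pow, if_pos rfl, mul_one, coeff_C_mul] at h5
  · convert h5 using 3
    rw [add_comm, add_pow, finsetSum_coeff, Finset.sum_eq_single (p - 1 - i)]
    · have : (C h₁ * X) ^ (p - 1 - i) * C h₂ ^ (p - 1 - (p - 1 - i)) * (((p - 1).choose (p - 1 - i) : ℕ) : S[X])
        = C (h₁ ^ (p - 1 - i) * h₂ ^ i * ((p - 1).choose i : S)) * X ^ (p - 1 - i) := by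
        rw [show p - 1 - (p - 1 - i) = i by omega, Nat.choose_symm (by omega)]
        simp only [map_mul, map_pow, map_natCast]
        ring
      rw [this, coeff_C_mul, coeff_X_pow, if_pos rfl]
      ring
    · intro k hk hki
      have : (C h₁ * X) ^ k * C h₂ ^ (p - 1 - k) * (((p - 1).choose k : ℕ) : S[X])
        = C (h₁ ^ k * h₂ ^ (p - 1 - k) * ((p - 1).choose k : S)) * X ^ k := by
        simp only [map_mul, map_pow, map_natCast]
        ring
      rw [this, coeff_C_mul, coeff_X_pow, if_neg hki.symm, mul_zero]
    · intro h; exfalso; apply h; simp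
  · intro k hk hki
    rw [Finset.mem_range] at hk
    rw [coeff_C_mul, coeff_X_pow, if_neg (by omega), mul_zero]
  · intro h; exact absurd (Finset.mem_range.2 hi) h
end

end

section

section
variable {S K : Type*} [CommRing S] [IsDomain S] [Field K] [Algebra S K]
    {p : ℕ} {h₁ h₂ y : S} {c₁ c₂ : ℕ → S} {π ρ s : K}

theorem Core.red (H : Core S K p h₁ h₂ y c₁ c₂ π ρ s) (m : ℕ) (hm : m ≤ p - 1) (r : K) (hr : IsIntegral S r)
    (α : ℕ → ℕ → S) (hα : (p : S) • r = evK p π ρ α)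
    (hlow : ∀ i < p, ∀ j < p, i + j < m → (p : S) ∣ α i j) :
    InP S p (∑ k ∈ Finset.range p, (if p - 1 - m ≤ k then α (k - (p - 1 - m)) (p - 1 - k) else 0) •
      (π ^ k * ρ ^ (p - 1 - k))) := by
  have hp3 := H.hp3
  obtain ⟨N, hN⟩ : ∃ N, N = p - 1 - m := ⟨_, rfl⟩
  rw [← hN]
  have e : evK p π ρ α = evK p π ρ (fun i j => if i + j = m then 0 else α i j) +
      evK p π ρ (fun i j => if i + j = m then α i j else 0) := by
    rw [← evK_add]; congr 1; ext i j; split_ifs <;> simp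
  have e2 : (∑ k ∈ Finset.range p, (if N ≤ k then α (k - N) (p - 1 - k) else 0) •
      (π ^ k * ρ ^ (p - 1 - k))) = π ^ N * evK p π ρ (fun i j => if i + j = m then α i j else 0) := by
    have s1 : ∀ F : ℕ → K, (∀ k < N, F k = 0) → ∑ k ∈ Finset.range p, F k = ∑ i ∈ Finset.range (m + 1), F (N + i) := by
      intro F hF
      conv_lhs => rw [show p = N + (m + 1) by omega]
      rw [Finset.sum_range_add, Finset.sum_eq_zero, zero_add]
      intro k hk; exact hF k (Finset.mem_range.1 hk)
    have s2 : ∀ F : ℕ → K, (∀ k < p, m < k → F k = 0) → ∑ k ∈ Finset.range p, F k = ∑ i ∈ Finset.range (m + 1), F i := by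
      intro F hF
      symm
      apply Finset.sum_subset
      · intro k hk; rw [Finset.mem_range] at *; omega
      · intro k hk hk2; rw [Finset.mem_range] at *; exact hF k hk (by omega)
    rw [s1, evK, Finset.mul_sum, s2]
    · refine Finset.sum_congr rfl fun i hi => ?_
      rw [Finset.mem_range] at hi
      rw [Finset.sum_eq_single (m - i)]
      · rw [if_pos (by omega), if_pos (by omega), show N + i - N = i by omega, show p - 1 - (N + i) = m - i by omega,
          mul_smul_comm, pow_add, mul_assoc]
      · intro j _ hj; rw [if_neg (by omega), zero_smul]
      · intro h; exfalso; apply h; rw [Finset.mem_range]; omega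
    · intro k _ hk
      rw [Finset.sum_eq_zero, mul_zero]
      intro j _
      rw [if_neg (by omega), zero_smul]
    · intro k hk
      rw [if_neg (by omega), zero_smul]
  have e3 : π ^ N * evK p π ρ (fun i j => if i + j = m then α i j else 0) = π ^ N * ((p : S) • r) -
      π ^ N * evK p π ρ (fun i j => if i + j = m then 0 else α i j) := by
    rw [hα, e]; ring
  rw [e2, e3]
  refine InP.sub (InP.mul (H.int_pi.pow _) (InP.of_dvd _ dvd_rfl hr)) ?_
  rw [evK, Finset.mul_sum]
  refine InP.sum _ _ fun i hi => ?_
  rw [Finset.mul_sum]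
  refine InP.sum _ _ fun j hj => ?_
  rw [Finset.mem_range] at hi hj
  by_cases hij : i + j = m
  · simpa [hij] using InP.zero
  rw [if_neg hij, mul_smul_comm, ← mul_assoc, ← pow_add]
  by_cases hlt : i + j < m
  · exact InP.of_dvd _ (hlow i hi j hj hlt) ((H.int_pi.pow _).mul (H.int_rho.pow _))
  · exact InP.smul _ (H.mono _ _ (by omega))

theorem Core.str1 (H : Core S K p h₁ h₂ y c₁ c₂ π ρ s) (r : K) (hr : IsIntegral S r)
    (α : ℕ → ℕ → S) (hα : (p : S) • r = evK p π ρ α) (m : ℕ) (hm : m < p - 1) :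
    ∀ i < p, ∀ j < p, i + j = m → (p : S) ∣ α i j := by
  induction m using Nat.strong_induction_on with
  | _ m ih =>
    have hF := H.red m hm.le r hr α hα (fun i hi j hj hij => ih (i + j) hij (by omega) i hi j hj rfl)
    obtain ⟨t, ht⟩ := H.form _ hF
    have hP := H.hpS
    have hh1 : ¬ (p : S) ∣ h₁ ^ (p - 1) := fun h => H.h1 (hP.dvd_of_dvd_pow h)
    have h0 := ht 0 H.hp.pos
    rw [if_neg (by omega)] at h0
    simp only [mul_zero, zero_sub, Nat.choose_zero_right, Nat.cast_one, pow_zero, one_mul, Nat.sub_zero, dvd_neg] at h0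
    have ht0 : (p : S) ∣ t := (hP.dvd_or_dvd h0).resolve_right hh1
    intro i hi j hj hij
    have h2 := ht (i + (p - 1 - m)) (by omega)
    rw [if_pos (by omega), show i + (p - 1 - m) - (p - 1 - m) = i by omega,
      show p - 1 - (i + (p - 1 - m)) = j by omega] at h2
    rw [dvd_sub_left (ht0.mul_right _)] at h2
    exact (hP.dvd_or_dvd h2).resolve_left hh1

theorem Core.str2 (H : Core S K p h₁ h₂ y c₁ c₂ π ρ s) (d k₁ k₂ : S) (hd1 : (p : S) ∣ d * k₁ - h₁)
    (hd2 : (p : S) ∣ d * k₂ - h₂)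
    (hcop : ∀ x y, (p : S) ∣ k₁ ^ (p - 1) * x - k₂ ^ (p - 1) * y → ∃ t, (p : S) ∣ y - k₁ ^ (p - 1) * t)
    (r : K) (hr : IsIntegral S r) (α : ℕ → ℕ → S) (hα : (p : S) • r = evK p π ρ α) :
    ∃ t : S, ∀ i < p, (p : S) ∣ α i (p - 1 - i) - t * ((p - 1).choose i * k₂ ^ i * k₁ ^ (p - 1 - i)) := by
  have hF := H.red (p - 1) le_rfl r hr α hα (fun i hi j hj hij => H.str1 r hr α hα (i + j) hij i hi j hj rfl)
  obtain ⟨t, ht⟩ := H.form _ hF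
  simp only [Nat.sub_self, Nat.zero_le, if_true, Nat.sub_zero] at ht
  have hPr : (Ideal.span {(p : S)}).IsPrime := (Ideal.span_singleton_prime H.hpS.ne_zero).2 H.hpS
  let q := Ideal.Quotient.mk (Ideal.span {(p : S)})
  have hq : ∀ x, (p : S) ∣ x ↔ q x = 0 := fun x => by
    rw [Ideal.Quotient.eq_zero_iff_mem, Ideal.mem_span_singleton]
  have h10 : q h₁ ≠ 0 := fun h => H.h1 ((hq _).2 h)
  have e1 : q h₁ = q d * q k₁ := by
    have := (hq _).1 hd1
    rw [map_sub, map_mul, sub_eq_zero] at this; exact this.symm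
  have e2 : q h₂ = q d * q k₂ := by
    have := (hq _).1 hd2
    rw [map_sub, map_mul, sub_eq_zero] at this; exact this.symm
  have hd0 : q d ≠ 0 := fun h => h10 (by rw [e1, h, zero_mul])
  have hk0 : q k₁ ≠ 0 := fun h => h10 (by rw [e1, h, mul_zero])
  have ht2 : ∀ i < p, q k₁ ^ (p - 1) * q (α i (p - 1 - i)) =
      q t * (((p - 1).choose i : ℕ) * q k₂ ^ i * q k₁ ^ (p - 1 - i)) := by
    intro i hi
    have := (hq _).1 (ht i hi)
    rw [map_sub, sub_eq_zero] at this
    simp only [map_mul, map_pow, map_natCast, e1, e2] at this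
    apply mul_left_cancel₀ (pow_ne_zero (p - 1) hd0)
    have e3 : q d ^ (p - 1) = q d ^ i * q d ^ (p - 1 - i) := by rw [← pow_add]; congr 1; omega
    linear_combination this + (- q t * (((p - 1).choose i : ℕ) * q k₂ ^ i * q k₁ ^ (p - 1 - i))) * e3
  have hp := H.hp.pos
  have hl := ht2 (p - 1) (by omega)
  simp only [Nat.choose_self, Nat.cast_one, one_mul, Nat.sub_self, pow_zero, mul_one] at hl
  obtain ⟨u, hu⟩ := hcop (α (p - 1) 0) t (by
    rw [hq, map_sub, sub_eq_zero]; simp only [map_mul, map_pow]; rw [hl]; ring)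
  have hu2 : q t = q k₁ ^ (p - 1) * q u := by
    have := (hq _).1 hu
    rw [map_sub, sub_eq_zero] at this
    simpa only [map_mul, map_pow] using this
  refine ⟨u, fun i hi => ?_⟩
  rw [hq, map_sub, sub_eq_zero]
  simp only [map_mul, map_pow, map_natCast]
  apply mul_left_cancel₀ (pow_ne_zero (p - 1) hk0)
  rw [ht2 i hi, hu2]; ring
end

end

section

section
variable {S K : Type*} [CommRing S] [IsDomain S] [Field K] [Algebra S K]
    {p : ℕ} {h₁ h₂ y : S} {c₁ c₂ : ℕ → S} {π ρ s : K}

theorem Core.zp (H : Core S K p h₁ h₂ y c₁ c₂ π ρ s) : ∃ z', IsIntegral S z' ∧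
    (h₂ • π + h₁ • ρ + π * ρ) ^ p = (p : K) * z' := by
  obtain ⟨τ, γ, hτ, -, -, hz, -⟩ := H.tau
  refine ⟨τ * (h₂ • π + h₁ • ρ + π * ρ), hτ.mul (H.D_int _ _ H.z1), ?_⟩
  rw [← mul_assoc, ← hz, ← pow_succ, Nat.sub_add_cancel H.hp.pos]

theorem Core.ellpow_in (H : Core S K p h₁ h₂ y c₁ c₂ π ρ s) : InP S p ((h₂ • π + h₁ • ρ) ^ (p - 1)) := by
  obtain ⟨z', hz', hzp⟩ := H.zp
  obtain ⟨τ, γ, hτ, -, -, hz, -⟩ := H.tau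
  have hzi := H.D_int _ _ H.z1
  have hp3 := H.hp3
  have e : h₂ • π + h₁ • ρ = (-(π * ρ)) + (h₂ • π + h₁ • ρ + π * ρ) := by ring
  rw [e]
  set z := h₂ • π + h₁ • ρ + π * ρ
  rw [add_pow]
  refine InP.sum _ _ fun k hk => ?_
  rw [Finset.mem_range] at hk
  by_cases hk0 : k = 0
  · subst hk0
    refine ⟨τ, hτ, ?_⟩
    simp [hz]
  · obtain ⟨r, hr, h⟩ := mono_int p H.hp.pos (p : K) H.q0 (int_nat S p) z π ρ _ _ _ hz'
      (int_sum p c₁ π H.int_pi) (int_sum p c₂ ρ H.int_rho) hzp H.pip H.rhop (p - 1 - k) k k (by omega)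
    have e : (-(π * ρ)) ^ k * z ^ (p - 1 - k) * ((p - 1).choose k : K) =
      ((-1) ^ k * ((p - 1).choose k : K)) * (z ^ (p - 1 - k) * π ^ k * ρ ^ k) := by
      rw [neg_pow, mul_pow]; ring
    rw [e]
    exact InP.mul (((isIntegral_one.neg).pow k).mul (int_nat S _)) ⟨r, hr, h⟩

theorem Core.w_int1 (H : Core S K p h₁ h₂ y c₁ c₂ π ρ s) (d k₁ k₂ : S) (hd1 : (p : S) ∣ d * k₁ - h₁)
    (hd2 : (p : S) ∣ d * k₂ - h₂) :
    IsIntegral S (algebraMap S K (d ^ (p - 1)) * ((k₂ • π + k₁ • ρ) ^ (p - 1) / p)) := by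
  obtain ⟨u, hu⟩ := hd1
  obtain ⟨v, hv⟩ := hd2
  have e : algebraMap S K d * (k₂ • π + k₁ • ρ) = (p : K) * (v • π + u • ρ) + (h₂ • π + h₁ • ρ) := by
    have hu' := congrArg (algebraMap S K) hu
    have hv' := congrArg (algebraMap S K) hv
    simp only [Algebra.smul_def, map_mul, map_sub, map_natCast] at *
    linear_combination ρ * hu' + π * hv'
  obtain ⟨r, hr, h⟩ := pow_add_mod (integralClosure S K).toSubring (p : K) (v • π + u • ρ) (h₂ • π + h₁ • ρ)
    (H.D_int _ _ (H.ell1 _ _)) (H.D_int _ _ (H.ell1 _ _)) (int_nat S p) (p - 1)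
  obtain ⟨r', hr', h'⟩ := H.ellpow_in
  have : algebraMap S K (d ^ (p - 1)) * ((k₂ • π + k₁ • ρ) ^ (p - 1) / p) = r' + r := by
    have hq := H.q0
    rw [map_pow, mul_div_assoc', ← mul_pow, e, h, h', div_eq_iff hq]; ring
  rw [this]
  exact hr'.add hr

theorem Core.w_int2 (H : Core S K p h₁ h₂ y c₁ c₂ π ρ s) (k₁ k₂ : S) :
    IsIntegral S (algebraMap S K (p : S) * ((k₂ • π + k₁ • ρ) ^ (p - 1) / p)) := by
  have hq := H.q0
  rw [map_natCast, mul_div_cancel₀ _ hq]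
  exact (H.D_int _ _ (H.ell1 _ _)).pow _

theorem evK_congr {S K : Type*} [CommRing S] [Field K] [Algebra S K] (p : ℕ) (π ρ : K)
    (α β : ℕ → ℕ → S) (h : ∀ i < p, ∀ j < p, α i j = β i j) : evK p π ρ α = evK p π ρ β := by
  refine Finset.sum_congr rfl fun i hi => Finset.sum_congr rfl fun j hj => ?_
  rw [h i (Finset.mem_range.1 hi) j (Finset.mem_range.1 hj)]

theorem Core.pres (H : Core S K p h₁ h₂ y c₁ c₂ π ρ s) (d k₁ k₂ : S) (hd1 : (p : S) ∣ d * k₁ - h₁)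
    (hd2 : (p : S) ∣ d * k₂ - h₂)
    (hcop : ∀ x y, (p : S) ∣ k₁ ^ (p - 1) * x - k₂ ^ (p - 1) * y → ∃ t, (p : S) ∣ y - k₁ ^ (p - 1) * t)
    (hw : IsIntegral S ((k₂ • π + k₁ • ρ) ^ (p - 1) / (p : K))) :
    ∃ (ι : Type) (_ : Fintype ι) (rel : ι → S) (ψ : (ι → S) →ₗ[S] (integralClosure S K)) (i0 i1 i2 : ι),
      Function.Surjective ψ ∧ (∀ x, ψ x = 0 ↔ ∃ u : S, x = u • rel) ∧ rel i0 = -(p : S) ∧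
      rel i1 = k₁ ^ (p - 1) ∧ rel i2 = k₂ ^ (p - 1) ∧ (∀ i, i ≠ i0 → k₁ ∣ rel i ∨ k₂ ∣ rel i) := by
  have hq := H.q0
  have hp3 := H.hp3
  have hP := H.hpS
  set w : K := (k₂ • π + k₁ • ρ) ^ (p - 1) / (p : K) with hwd
  let c : ℕ → S := fun i => (p - 1).choose i * k₂ ^ i * k₁ ^ (p - 1 - i)
  let anti : ℕ → ℕ → S := fun i j => if i + j = p - 1 then c i else 0
  have hpw : (p : K) * w = evK p π ρ anti := by
    rw [hwd, mul_div_cancel₀ _ hq, H.ell_pow, ← evK_anti]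
  have hk1 : ¬ (p : S) ∣ k₁ := by
    intro h
    have := dvd_sub (h.mul_left d) hd1
    rw [sub_sub_cancel] at this
    exact H.h1 this
  have heps : ∀ i j, ∃ e : K, IsIntegral S e ∧ (p : K) * e = if p ≤ i + j then π ^ i * ρ ^ j else (p : K) * (π ^ i * ρ ^ j) := by
    intro i j
    by_cases h : p ≤ i + j
    · obtain ⟨r, hr, h'⟩ := H.mono i j h
      exact ⟨r, hr, by rw [if_pos h, h']⟩
    · exact ⟨π ^ i * ρ ^ j, (H.int_pi.pow _).mul (H.int_rho.pow _), by rw [if_neg h]⟩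
  choose ε hεi hε using heps
  let v : Option (Fin p × Fin p) → integralClosure S K := fun o =>
    o.elim ⟨w, hw⟩ (fun ij => ⟨ε ij.1 ij.2, hεi _ _⟩)
  let rel : Option (Fin p × Fin p) → S := fun o => o.elim (-(p : S)) (fun ij => anti ij.1 ij.2)
  let ψ : (Option (Fin p × Fin p) → S) →ₗ[S] (integralClosure S K) := Fintype.linearCombination S v
  have hψ : ∀ x, ((ψ x : integralClosure S K) : K) = x none • w + ∑ i : Fin p, ∑ j : Fin p, x (some (i, j)) • ε i j := by
    intro x
    simp only [ψ, Fintype.linearCombination_apply, Fintype.sum_option, v, Fintype.sum_prod_type]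
    simp
  -- the key computation
  have key : ∀ (a : ℕ → ℕ → S) (t : S), (p : K) * (t • w + ∑ i : Fin p, ∑ j : Fin p, a i j • ε i j) =
      evK p π ρ (fun i j => t * anti i j + (if p ≤ i + j then a i j else p * a i j)) := by
    intro a t
    rw [evK_add, evK_smul, mul_add, mul_smul_comm, hpw]
    congr 1
    rw [Fin.sum_univ_eq_sum_range (fun i => ∑ j : Fin p, a i j • ε i j), evK, Finset.mul_sum]
    refine Finset.sum_congr rfl fun i _ => ?_
    rw [Fin.sum_univ_eq_sum_range (fun j => a i j • ε i j), Finset.mul_sum]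
    refine Finset.sum_congr rfl fun j _ => ?_
    rw [mul_smul_comm, hε]
    split_ifs
    · rfl
    · simp only [Algebra.smul_def, map_mul, map_natCast]; ring
  have hψ2 : ∀ x, (p : K) * ((ψ x : integralClosure S K) : K) =
      evK p π ρ (fun i j => x none * anti i j + (if p ≤ i + j then (if h : i < p ∧ j < p then x (some (⟨i, h.1⟩, ⟨j, h.2⟩)) else 0)
        else p * (if h : i < p ∧ j < p then x (some (⟨i, h.1⟩, ⟨j, h.2⟩)) else 0))) := by
    intro x
    rw [← key, hψ]
    simp
  refine ⟨_, inferInstance, rel, ψ, none, some (⟨0, by omega⟩, ⟨p - 1, by omega⟩),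
    some (⟨p - 1, by omega⟩, ⟨0, by omega⟩), ?_, ?_, rfl, ?_, ?_, ?_⟩
  · rintro ⟨r, hr⟩
    obtain ⟨α, hα⟩ := H.den r hr
    obtain ⟨t, ht⟩ := H.str2 d k₁ k₂ hd1 hd2 hcop r hr α hα
    have hs1 : ∀ i j, ∃ b : S, i < p → j < p → α i j = t * anti i j + (if p ≤ i + j then b else p * b) := by
      intro i j
      rcases lt_trichotomy (i + j) (p - 1) with h | h | h
      · by_cases hi : i < p ∧ j < p
        · obtain ⟨b, hb⟩ := H.str1 r hr α hα (i + j) h i hi.1 j hi.2 rfl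
          refine ⟨b, fun _ _ => ?_⟩
          rw [if_neg (by omega)]
          simp only [anti]
          rw [if_neg (by omega), hb]; ring
        · exact ⟨0, fun a b => absurd ⟨a, b⟩ hi⟩
      · obtain ⟨b, hb⟩ := ht i (by omega)
        refine ⟨b, fun _ _ => ?_⟩
        rw [if_neg (by omega)]
        simp only [anti]
        rw [if_pos h, ← hb, show j = p - 1 - i by omega]; ring
      · refine ⟨α i j, fun _ _ => ?_⟩
        rw [if_pos (by omega)]
        simp only [anti]
        rw [if_neg (by omega)]; ring
    choose b hb using hs1
    refine ⟨fun o => o.elim t (fun ij => b ij.1 ij.2), ?_⟩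
    apply Subtype.ext
    apply mul_left_cancel₀ hq
    rw [hψ]
    simp only [Option.elim]
    rw [key]
    have : (p : K) * r = (p : S) • r := by rw [Algebra.smul_def, map_natCast]
    change _ = (p : K) * r
    rw [this, hα]
    exact (evK_congr p π ρ _ _ (fun i hi j hj => hb i j hi hj)).symm
  · intro x
    have hz : ψ x = 0 ↔ (p : K) * ((ψ x : integralClosure S K) : K) = 0 := by
      rw [mul_eq_zero_iff_left hq]; exact (ZeroMemClass.coe_eq_zero).symm
    rw [hz, hψ2]
    constructor
    · intro h0
      have h1 := H.indep _ h0
      have h2 : (p : S) ∣ x none := by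
        have := h1 0 (by omega) (p - 1) (by omega)
        rw [if_neg (by omega)] at this
        simp only [anti, c] at this
        rw [if_pos (by omega)] at this
        simp only [Nat.choose_zero_right, Nat.cast_one, pow_zero, one_mul, Nat.sub_zero] at this
        have h3 : (p : S) ∣ x none * k₁ ^ (p - 1) := by
          rw [eq_neg_of_add_eq_zero_left this, dvd_neg]; exact dvd_mul_right _ _
        exact (hP.dvd_or_dvd h3).resolve_right fun h => hk1 (hP.dvd_of_dvd_pow h)
      obtain ⟨u, hu⟩ := h2
      refine ⟨-u, ?_⟩
      ext o
      rcases o with _ | ⟨i, j⟩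
      · simp only [Pi.smul_apply, smul_eq_mul, rel, Option.elim]
        rw [hu]; ring
      · simp only [Pi.smul_apply, smul_eq_mul, rel, Option.elim]
        have := h1 i i.2 j j.2
        rw [hu, dif_pos ⟨i.2, j.2⟩] at this
        split_ifs at this with h
        · have ha : anti i j = 0 := by simp only [anti]; rw [if_neg (by omega)]
          rw [ha] at this ⊢
          simpa using this
        · apply mul_left_cancel₀ hP.ne_zero
          linear_combination this
    · rintro ⟨u, rfl⟩
      unfold evK
      refine Finset.sum_eq_zero fun i hi => Finset.sum_eq_zero fun j hj => ?_
      rw [Finset.mem_range] at hi hj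
      beta_reduce
      rw [dif_pos (And.intro hi hj)]
      simp only [Pi.smul_apply, smul_eq_mul, rel, Option.elim]
      split_ifs with h
      · have ha : anti i j = 0 := by simp only [anti]; rw [if_neg (by omega)]
        rw [ha]; simp
      · convert zero_smul S _
        ring
  · simp only [rel, Option.elim, anti, c]
    rw [if_pos (by omega)]; simp
  · simp only [rel, Option.elim, anti, c]
    rw [if_pos (by omega)]; simp
  · rintro (_ | ⟨i, j⟩) ho
    · exact absurd rfl ho
    · simp only [rel, Option.elim, anti, c]
      split_ifs with h
      · by_cases hi : (i : ℕ) = 0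
        · left
          exact Dvd.dvd.mul_left (dvd_pow_self _ (by omega)) _
        · right
          exact Dvd.dvd.mul_right (Dvd.dvd.mul_left (dvd_pow_self _ hi) _) _
      · simp
end

end

section

section
open Polynomial

theorem trace_den {B E K : Type*} [CommRing B] [IsDomain B] [IsIntegrallyClosed B] [Field E] [Field K] [CharZero E]
    [Algebra B E] [IsFractionRing B E] [Algebra E K] [Algebra B K] [IsScalarTower B E K]
    (n : ℕ) (hn : 0 < n) (μ : K) (g : B) (hμ : μ ^ n = algebraMap B K g)
    (hind : LinearIndependent B (fun j : Fin n => μ ^ (j : ℕ)))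
    (htop : Algebra.adjoin E ({μ} : Set K) = ⊤) (r : K) (hr : IsIntegral B r) :
    (n : K) * algebraMap B K g * r ∈ Algebra.adjoin B ({μ} : Set K) := by
  have hindE := (LinearIndependent.iff_fractionRing B E).1 hind
  have hμi : IsIntegral B μ := IsIntegral.of_pow hn (by rw [hμ]; exact isIntegral_algebraMap)
  have hμE : IsIntegral E μ := hμi.tower_top
  have hfd : FiniteDimensional E K := by
    have := hμE.fg_adjoin_singleton
    rw [htop] at this
    exact ⟨this⟩
  have hmin : minpoly E μ = X ^ n - C (algebraMap B E g) := by
    symm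
    apply minpoly.unique E μ (monic_X_pow_sub_C _ hn.ne')
    · simp [hμ, ← IsScalarTower.algebraMap_apply]
    · intro q hq hqr
      by_contra hlt
      rw [not_le, degree_X_pow_sub_C hn] at hlt
      have hnd : q.natDegree < n := (natDegree_lt_iff_degree_lt hq.ne_zero).2 hlt
      rw [aeval_eq_sum_range' hnd] at hqr
      rw [← Fin.sum_univ_eq_sum_range (fun i => q.coeff i • μ ^ i)] at hqr
      have h0 := Fintype.linearIndependent_iff.1 hindE (fun i => q.coeff i) hqr ⟨q.natDegree, hnd⟩
      have h1 : q.coeff q.natDegree = 1 := hq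
      rw [h1] at h0
      exact one_ne_zero h0
  have hdual : r ∈ (Algebra.traceForm E K).dualSubmodule (Subalgebra.toSubmodule (Algebra.adjoin B {μ})) := by
    rw [LinearMap.BilinForm.mem_dualSubmodule]
    intro x hx
    have hxi : IsIntegral B x := (adjoin_le_integralClosure hμi) hx
    rw [Algebra.traceForm_apply]
    obtain ⟨b, hb⟩ := IsIntegrallyClosed.algebraMap_eq_of_integral (Algebra.isIntegral_trace (L := E) (hr.mul hxi))
    rw [Submodule.mem_one]
    exact ⟨b, hb⟩
  rw [traceForm_dualSubmodule_adjoin B E htop hμi, hmin] at hdual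
  obtain ⟨x, hx, hxr⟩ := hdual
  have hx : x ∈ Algebra.adjoin B ({μ} : Set K) := hx
  simp only [derivative_sub, derivative_X_pow, derivative_C, sub_zero, map_mul, aeval_C, map_natCast, map_pow, aeval_X] at hxr
  have hxr : ((n : K) * μ ^ (n - 1))⁻¹ * x = r := hxr
  by_cases h0 : μ = 0
  · rw [← hμ, h0, zero_pow hn.ne']; simp
  have : CharZero K := charZero_of_injective_algebraMap (algebraMap E K).injective
  have hn0 : (n : K) ≠ 0 := by exact_mod_cast hn.ne'
  have e : (n : K) * algebraMap B K g * r = μ * x := by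
    rw [← hxr, ← hμ]
    obtain ⟨m, rfl⟩ : ∃ m, n = m + 1 := ⟨n - 1, by omega⟩
    simp only [Nat.add_sub_cancel]
    field_simp
    ring
  rw [e]
  exact mul_mem (Algebra.self_mem_adjoin_singleton B μ) hx

theorem minpoly_scale {L K : Type*} [Field L] [Field K] [Algebra L K] (x : K) (hx : IsIntegral L x) (c : L) (hc : c ≠ 0) :
    minpoly L (algebraMap L K c * x) = (minpoly L x).scaleRoots c := by
  have key : ∀ (x : K) (hx : IsIntegral L x) (c : L), (minpoly L (algebraMap L K c * x)).natDegree ≤ (minpoly L x).natDegree := by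
    intro x hx c
    have h1 : minpoly L (algebraMap L K c * x) ∣ (minpoly L x).scaleRoots c :=
      minpoly.dvd _ _ (scaleRoots_aeval_eq_zero (minpoly.aeval _ _))
    have h2 := natDegree_le_of_dvd h1 (scaleRoots_ne_zero (minpoly.ne_zero hx) c)
    rwa [natDegree_scaleRoots] at h2
  have hcx : IsIntegral L (algebraMap L K c * x) := isIntegral_algebraMap.mul hx
  have h1 : minpoly L (algebraMap L K c * x) ∣ (minpoly L x).scaleRoots c :=
    minpoly.dvd _ _ (scaleRoots_aeval_eq_zero (minpoly.aeval _ _))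
  symm
  apply eq_of_monic_of_dvd_of_natDegree_le (minpoly.monic hcx) ((monic_scaleRoots_iff c).2 (minpoly.monic hx)) h1
  rw [natDegree_scaleRoots]
  have := key _ hcx c⁻¹
  rwa [← mul_assoc, ← map_mul, inv_mul_cancel₀ hc, map_one, one_mul] at this

theorem int_of_two {S L K : Type*} [CommRing S] [IsDomain S] [IsIntegrallyClosed S] [Field L] [Algebra S L] [IsFractionRing S L]
    [Field K] [Algebra L K] [Algebra S K] [IsScalarTower S L K] (q e : S) (hq : Prime q) (he : ¬ q ∣ e) (x : K)
    (h1 : IsIntegral S (algebraMap S K q * x)) (h2 : IsIntegral S (algebraMap S K e * x)) : IsIntegral S x := by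
  have hinj := IsFractionRing.injective S L
  have he0 : e ≠ 0 := fun h => he (h ▸ dvd_zero q)
  have hq' : algebraMap S L q ≠ 0 := (map_ne_zero_iff _ hinj).2 hq.ne_zero
  have he' : algebraMap S L e ≠ 0 := (map_ne_zero_iff _ hinj).2 he0
  have hxL : IsIntegral L x := by
    have h3 : IsIntegral L (algebraMap L K (algebraMap S L q)⁻¹ * (algebraMap S K q * x)) :=
      isIntegral_algebraMap.mul h1.tower_top
    rwa [IsScalarTower.algebraMap_apply S L K, ← mul_assoc, ← map_mul, inv_mul_cancel₀ hq', map_one, one_mul] at h3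
  have hc : ∀ c : S, c ≠ 0 → IsIntegral S (algebraMap S K c * x) → ∀ i, ∃ s : S, algebraMap S L s =
      (minpoly L x).coeff i * algebraMap S L c ^ ((minpoly L x).natDegree - i) := by
    intro c hc0 hci i
    have e1 := minpoly.isIntegrallyClosed_eq_field_fractions' L hci
    rw [IsScalarTower.algebraMap_apply S L K, minpoly_scale x hxL _ ((map_ne_zero_iff _ hinj).2 hc0)] at e1
    have e2 := congrArg (fun P => P.coeff i) e1
    simp only [coeff_scaleRoots, coeff_map] at e2
    exact ⟨_, e2.symm⟩
  have hlift : minpoly L x ∈ lifts (algebraMap S L) := by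
    rw [lifts_iff_coeff_lifts]
    intro i
    obtain ⟨u, hu⟩ := hc q hq.ne_zero h1 i
    obtain ⟨v, hv⟩ := hc e he0 h2 i
    set m := (minpoly L x).natDegree - i
    have huv : u * e ^ m = q ^ m * v := by
      apply hinj
      simp only [map_mul, map_pow, hu, hv]; ring
    have hd : q ^ m ∣ u := hq.pow_dvd_of_dvd_mul_right m (fun h => he (hq.dvd_of_dvd_pow h)) (by rw [huv]; exact dvd_mul_right _ _)
    obtain ⟨t, ht⟩ := hd
    refine ⟨t, ?_⟩
    rw [ht, map_mul, map_pow, mul_comm] at hu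
    exact mul_right_cancel₀ (pow_ne_zero m hq') hu
  obtain ⟨P, hP1, -, hP2⟩ := lifts_and_natDegree_eq_and_monic hlift (minpoly.monic hxL)
  refine ⟨P, hP2, ?_⟩
  have := minpoly.aeval L x
  rw [← hP1, aeval_map_algebraMap] at this
  exact this

theorem mem_of_ic {S K : Type*} [CommRing S] [Field K] [Algebra S K] (B : Subalgebra S K) [IsIntegrallyClosed B]
    (x c y : K) (hx : x ∈ B) (hc : c ∈ B) (hc0 : c ≠ 0) (h : c * y = x) (hy : IsIntegral S y) : y ∈ B := by
  have : FaithfulSMul B K := (faithfulSMul_iff_algebraMap_injective B K).2 Subtype.val_injective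
  letI := FractionRing.liftAlgebra B K
  have := FractionRing.isScalarTower_liftAlgebra B K
  let y' : FractionRing B := algebraMap B _ ⟨x, hx⟩ / algebraMap B _ ⟨c, hc⟩
  have e1 : algebraMap (FractionRing B) K y' = y := by
    simp only [y', map_div₀, ← IsScalarTower.algebraMap_apply]
    change x / c = y
    rw [← h]; field_simp
  have hyB : IsIntegral B (IsScalarTower.toAlgHom B (FractionRing B) K y') := by
    change IsIntegral B (algebraMap (FractionRing B) K y')
    rw [e1]; exact hy.tower_top
  rw [isIntegral_algHom_iff _ (algebraMap (FractionRing B) K).injective] at hyB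
  obtain ⟨b, hb⟩ := IsIntegrallyClosed.algebraMap_eq_of_integral hyB
  have : algebraMap B K b = y := by rw [IsScalarTower.algebraMap_apply B (FractionRing B) K, hb, e1]
  rw [← this]; exact b.2
end

end

section

theorem adjoin_mem_of {R K : Type*} [CommRing R] [CommRing K] [Algebra R K] (M : Submodule R K) (s : Set K)
    (h1 : (1 : K) ∈ M) (h : ∀ x ∈ s, ∀ m ∈ M, x * m ∈ M) (x : K) (hx : x ∈ Algebra.adjoin R s) : x ∈ M := by
  let A : Subalgebra R K :=
    { carrier := {x | ∀ m ∈ M, x * m ∈ M}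
      mul_mem' := fun {a b} ha hb m hm => by rw [mul_assoc]; exact ha _ (hb _ hm)
      add_mem' := fun {a b} ha hb m hm => by rw [add_mul]; exact add_mem (ha _ hm) (hb _ hm)
      algebraMap_mem' := fun r m hm => by rw [← Algebra.smul_def]; exact M.smul_mem r hm }
  have hA : Algebra.adjoin R s ≤ A := Algebra.adjoin_le h
  have := hA hx 1 h1
  rwa [mul_one] at this

theorem mem_pow_span {R K : Type*} [CommRing R] [CommRing K] [Algebra R K] (n : ℕ) (hn : 0 < n) (π : K)
    (hπ : ∃ c : ℕ → R, π ^ n = ∑ k ∈ Finset.range n, c k • π ^ k) (x : K) (hx : x ∈ Algebra.adjoin R {π}) :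
    x ∈ Submodule.span R (Set.range fun i : Fin n => π ^ (i : ℕ)) := by
  refine adjoin_mem_of _ {π} ?_ ?_ x hx
  · exact Submodule.subset_span ⟨⟨0, hn⟩, by simp⟩
  · rintro _ rfl m hm
    induction hm using Submodule.span_induction with
    | mem x hx =>
      obtain ⟨i, rfl⟩ := hx
      beta_reduce
      rw [← pow_succ']
      by_cases h : (i : ℕ) + 1 < n
      · exact Submodule.subset_span ⟨⟨i + 1, h⟩, rfl⟩
      · have : (i : ℕ) + 1 = n := by omega
        obtain ⟨c, hc⟩ := hπ
        rw [this, hc]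
        exact Submodule.sum_mem _ fun k hk => Submodule.smul_mem _ _
          (Submodule.subset_span ⟨⟨k, Finset.mem_range.1 hk⟩, rfl⟩)
    | zero => rw [mul_zero]; exact zero_mem _
    | add x y _ _ hx hy => rw [mul_add]; exact add_mem hx hy
    | smul a x _ hx => rw [mul_smul_comm]; exact Submodule.smul_mem _ _ hx

theorem mem_pow_span' {R K : Type*} [CommRing R] [CommRing K] [Algebra R K] (n : ℕ) (hn : 0 < n) (π : K)
    (hπ : ∃ c : ℕ → R, π ^ n = ∑ k ∈ Finset.range n, c k • π ^ k) (x : K) (hx : x ∈ Algebra.adjoin R {π}) :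
    ∃ α : ℕ → R, x = ∑ k ∈ Finset.range n, α k • π ^ k := by
  obtain ⟨c, hc⟩ := (Submodule.mem_span_range_iff_exists_fun R).1 (mem_pow_span n hn π hπ x hx)
  refine ⟨fun k => if h : k < n then c ⟨k, h⟩ else 0, ?_⟩
  rw [← hc, ← Fin.sum_univ_eq_sum_range (fun k => (if h : k < n then c ⟨k, h⟩ else 0) • π ^ k)]
  simp

theorem mem_pow_span2 {R K : Type*} [CommRing R] [CommRing K] [Algebra R K] (n : ℕ) (hn : 0 < n) (π ρ : K)
    (hπ : ∃ c : ℕ → R, π ^ n = ∑ k ∈ Finset.range n, c k • π ^ k)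
    (hρ : ∃ c : ℕ → R, ρ ^ n = ∑ k ∈ Finset.range n, c k • ρ ^ k) (x : K) (hx : x ∈ Algebra.adjoin R {π, ρ}) :
    x ∈ Submodule.span R (Set.range fun i : Fin n × Fin n => π ^ (i.1 : ℕ) * ρ ^ (i.2 : ℕ)) := by
  refine adjoin_mem_of _ {π, ρ} ?_ ?_ x hx
  · exact Submodule.subset_span ⟨(⟨0, hn⟩, ⟨0, hn⟩), by simp⟩
  · intro u hu m hm
    induction hm using Submodule.span_induction with
    | mem x hx =>
      obtain ⟨⟨i, j⟩, rfl⟩ := hx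
      rcases hu with rfl | rfl
      · change u * (u ^ (i : ℕ) * ρ ^ (j : ℕ)) ∈ _
        rw [← mul_assoc, ← pow_succ']
        by_cases h : (i : ℕ) + 1 < n
        · exact Submodule.subset_span ⟨(⟨i + 1, h⟩, j), rfl⟩
        · have : (i : ℕ) + 1 = n := by omega
          obtain ⟨c, hc⟩ := hπ
          rw [this, hc, Finset.sum_mul]
          exact Submodule.sum_mem _ fun k hk => by
            rw [smul_mul_assoc]
            exact Submodule.smul_mem _ _ (Submodule.subset_span ⟨(⟨k, Finset.mem_range.1 hk⟩, j), rfl⟩)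
      · change u * (π ^ (i : ℕ) * u ^ (j : ℕ)) ∈ _
        rw [mul_left_comm, ← pow_succ']
        by_cases h : (j : ℕ) + 1 < n
        · exact Submodule.subset_span ⟨(i, ⟨j + 1, h⟩), rfl⟩
        · have : (j : ℕ) + 1 = n := by omega
          obtain ⟨c, hc⟩ := hρ
          rw [this, hc, Finset.mul_sum]
          exact Submodule.sum_mem _ fun k hk => by
            rw [mul_smul_comm]
            exact Submodule.smul_mem _ _ (Submodule.subset_span ⟨(i, ⟨k, Finset.mem_range.1 hk⟩), rfl⟩)
    | zero => rw [mul_zero]; exact zero_mem _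
    | add x y _ _ hx hy => rw [mul_add]; exact add_mem hx hy
    | smul a x _ hx => rw [mul_smul_comm]; exact Submodule.smul_mem _ _ hx

theorem mem_pow_span2' {R K : Type*} [CommRing R] [CommRing K] [Algebra R K] (n : ℕ) (hn : 0 < n) (π ρ : K)
    (hπ : ∃ c : ℕ → R, π ^ n = ∑ k ∈ Finset.range n, c k • π ^ k)
    (hρ : ∃ c : ℕ → R, ρ ^ n = ∑ k ∈ Finset.range n, c k • ρ ^ k) (x : K) (hx : x ∈ Algebra.adjoin R {π, ρ}) :
    ∃ α : ℕ → ℕ → R, x = ∑ i ∈ Finset.range n, ∑ j ∈ Finset.range n, α i j • (π ^ i * ρ ^ j) := by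
  obtain ⟨c, hc⟩ := (Submodule.mem_span_range_iff_exists_fun R).1 (mem_pow_span2 n hn π ρ hπ hρ x hx)
  refine ⟨fun k l => if h : k < n ∧ l < n then c (⟨k, h.1⟩, ⟨l, h.2⟩) else 0, ?_⟩
  rw [← hc, Fintype.sum_prod_type, ← Fin.sum_univ_eq_sum_range (fun k => ∑ l ∈ Finset.range n, (if h : k < n ∧ l < n then c (⟨k, h.1⟩, ⟨l, h.2⟩) else 0) • (π ^ k * ρ ^ l))]
  refine Finset.sum_congr rfl fun k _ => ?_
  rw [← Fin.sum_univ_eq_sum_range (fun l => (if h : (k : ℕ) < n ∧ l < n then c (⟨k, h.1⟩, ⟨l, h.2⟩) else 0) • (π ^ (k : ℕ) * ρ ^ l))]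
  simp

theorem indep2 {S L K : Type*} [CommRing S] [IsDomain S] [Field L] [Algebra S L] [IsFractionRing S L]
    [Field K] [Algebra L K] [Algebra S K] [IsScalarTower S L K] (n : ℕ) (hn : 0 < n) (π ρ : K)
    (hπ : ∃ c : ℕ → S, π ^ n = ∑ k ∈ Finset.range n, c k • π ^ k)
    (hρ : ∃ c : ℕ → S, ρ ^ n = ∑ k ∈ Finset.range n, c k • ρ ^ k)
    (htop : Algebra.adjoin L ({π, ρ} : Set K) = ⊤) (hdeg : Module.finrank L K = n ^ 2)
    (α : ℕ → ℕ → S) (h0 : ∑ i ∈ Finset.range n, ∑ j ∈ Finset.range n, α i j • (π ^ i * ρ ^ j) = 0) :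
    ∀ i < n, ∀ j < n, α i j = 0 := by
  have up : ∀ x : K, (∃ c : ℕ → S, x ^ n = ∑ k ∈ Finset.range n, c k • x ^ k) →
      ∃ c : ℕ → L, x ^ n = ∑ k ∈ Finset.range n, c k • x ^ k := by
    rintro x ⟨c, hc⟩
    exact ⟨fun k => algebraMap S L (c k), by simpa only [algebraMap_smul] using hc⟩
  have hli : LinearIndependent L (fun i : Fin n × Fin n => π ^ (i.1 : ℕ) * ρ ^ (i.2 : ℕ)) := by
    apply linearIndependent_of_top_le_span_of_card_eq_finrank
    · intro x _
      exact mem_pow_span2 n hn π ρ (up _ hπ) (up _ hρ) x (htop ▸ Algebra.mem_top)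
    · simp [hdeg, sq]
  rw [Fintype.linearIndependent_iff] at hli
  intro i hi j hj
  have := hli (fun k => algebraMap S L (α k.1 k.2)) (by
    rw [Fintype.sum_prod_type, ← h0, ← Fin.sum_univ_eq_sum_range (fun k => ∑ l ∈ Finset.range n, α k l • (π ^ k * ρ ^ l))]
    refine Finset.sum_congr rfl fun k _ => ?_
    rw [← Fin.sum_univ_eq_sum_range (fun l => α k l • (π ^ (k : ℕ) * ρ ^ l))]
    simp only [algebraMap_smul]) (⟨i, hi⟩, ⟨j, hj⟩)
  exact (map_eq_zero_iff _ (IsFractionRing.injective S L)).1 this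

theorem choose_p (p : ℕ) (hp : p.Prime) (k : ℕ) (h0 : 0 < k) (h : k < p) : p * (p.choose k / p) = p.choose k :=
  Nat.mul_div_cancel' (hp.dvd_choose_self h0.ne' h)

theorem root_eq {S K : Type*} [CommRing S] [CommRing K] [Algebra S K] (p : ℕ) (hp : p.Prime) (h a f : S)
    (hf : f = h ^ p + a * (p : S)) (ω : K) (hω : ω ^ p = algebraMap S K f) :
    ∃ c : ℕ → S, c 0 = a ∧ (ω - algebraMap S K h) ^ p = (p : S) • ∑ k ∈ Finset.range p, c k • (ω - algebraMap S K h) ^ k := by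
  refine ⟨fun k => if k = 0 then a else -((p.choose k / p : ℕ) : S) * h ^ (p - k), by simp, ?_⟩
  set u := ω - algebraMap S K h with hu
  have e1 : ω = u + algebraMap S K h := by rw [hu]; ring
  obtain ⟨n, rfl⟩ : ∃ n, p = n + 1 := ⟨p - 1, by have := hp.pos; omega⟩
  rw [e1, add_pow, Finset.sum_range_succ, Finset.sum_range_succ'] at hω
  rw [Finset.sum_range_succ', smul_add, Finset.smul_sum]
  have e2 : ∀ k ∈ Finset.range n, ((n + 1 : ℕ) : S) • ((if k + 1 = 0 then a else -(((n+1).choose (k+1) / (n+1) : ℕ) : S) * h ^ (n + 1 - (k+1))) • u ^ (k+1))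
     = - (u ^ (k + 1) * algebraMap S K h ^ (n + 1 - (k + 1)) * ((n+1).choose (k+1) : ℕ)) := by
    intro k hk
    have := choose_p (n+1) hp (k+1) (by omega) (by have := Finset.mem_range.1 hk; omega)
    generalize (n+1).choose (k+1) / (n+1) = q at this ⊢
    rw [if_neg (by omega), ← this]
    simp only [Algebra.smul_def, map_mul, map_neg, map_pow, map_natCast, Nat.cast_mul]
    ring
  rw [Finset.sum_congr rfl e2, Finset.sum_neg_distrib]
  simp only [hf, map_add, map_mul, map_pow, map_natCast, Algebra.smul_def, if_true, pow_zero, Nat.sub_self, Nat.choose_self, Nat.choose_zero_right, Nat.sub_zero, Nat.cast_one, mul_one, one_mul] at hω ⊢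
  linear_combination hω

theorem binom_eq {S K : Type*} [CommRing S] [CommRing K] [Algebra S K] (p : ℕ) (hp : p.Prime) (hp3 : 3 ≤ p) (A : Subalgebra S K)
    (h : S) (u : K) (hu : u ∈ A) : ∃ s ∈ A, (algebraMap S K h + u) ^ p = algebraMap S K h ^ p + u ^ p +
      p * (u * (algebraMap S K h ^ (p - 1) + u * s)) := by
  refine ⟨∑ k ∈ Finset.range (p - 2), ((p.choose (k + 2) / p : ℕ) : K) * u ^ k * algebraMap S K h ^ (p - 2 - k), ?_, ?_⟩
  · exact sum_mem fun k _ => mul_mem (mul_mem (natCast_mem A _) (pow_mem hu _)) (pow_mem (A.algebraMap_mem h) _)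
  obtain ⟨n, rfl⟩ : ∃ n, p = n + 2 := ⟨p - 2, by omega⟩
  rw [add_comm (algebraMap S K h) u, add_pow, Finset.sum_range_succ, Finset.sum_range_succ', Finset.sum_range_succ']
  have e2 : ∀ k ∈ Finset.range n, u ^ (k + 1 + 1) * algebraMap S K h ^ (n + 2 - (k + 1 + 1)) * ((n+2).choose (k+1+1) : ℕ)
     = ((n + 2 : ℕ) : K) * u ^ 2 * ((((n+2).choose (k + 2) / (n+2) : ℕ) : K) * u ^ k * algebraMap S K h ^ (n + 2 - 2 - k)) := by
    intro k hk
    have := choose_p (n+2) hp (k+2) (by omega) (by have := Finset.mem_range.1 hk; omega)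
    rw [show k + 1 + 1 = k + 2 from rfl]
    generalize (n+2).choose (k+2) / (n+2) = q at this ⊢
    rw [← this, show n + 2 - (k+2) = n + 2 - 2 - k by omega]
    push_cast
    ring
  rw [Finset.sum_congr rfl e2, ← Finset.mul_sum]
  simp only [pow_zero, Nat.sub_self, Nat.choose_self, Nat.choose_zero_right, Nat.sub_zero, Nat.cast_one, mul_one, one_mul, Nat.choose_one_right, zero_add, Nat.add_sub_cancel, pow_one]
  ring

end

section

theorem adjoin_shift1 {R K : Type*} [CommRing R] [CommRing K] [Algebra R K] (ω : K) (h : R) :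
    Algebra.adjoin R {ω} ≤ Algebra.adjoin R ({ω - algebraMap R K h} : Set K) := by
  apply Algebra.adjoin_le
  set A := Algebra.adjoin R ({ω - algebraMap R K h} : Set K)
  have h1 : ω - algebraMap R K h ∈ A := Algebra.subset_adjoin (by simp)
  intro x hx
  rw [Set.mem_singleton_iff.1 hx, ← sub_add_cancel ω (algebraMap R K h)]; exact add_mem h1 (A.algebraMap_mem h)

theorem adjoin_shift2 {R K : Type*} [CommRing R] [CommRing K] [Algebra R K] (ω μ : K) (h k : R) :
    Algebra.adjoin R {ω, μ} ≤ Algebra.adjoin R ({ω - algebraMap R K h, μ - algebraMap R K k} : Set K) := by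
  apply Algebra.adjoin_le
  set A := Algebra.adjoin R ({ω - algebraMap R K h, μ - algebraMap R K k} : Set K)
  have h1 : ω - algebraMap R K h ∈ A := Algebra.subset_adjoin (by simp)
  have h2 : μ - algebraMap R K k ∈ A := Algebra.subset_adjoin (by simp)
  intro x hx
  rcases hx with hx | hx
  · rw [hx, ← sub_add_cancel ω (algebraMap R K h)]; exact add_mem h1 (A.algebraMap_mem h)
  · rw [Set.mem_singleton_iff.1 hx, ← sub_add_cancel μ (algebraMap R K k)]; exact add_mem h2 (A.algebraMap_mem k)

theorem tau_int {S K : Type*} [CommRing S] [Field K] [Algebra S K] (p : ℕ) (hp : p.Prime) (hq : (p : K) ≠ 0)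
    (z y γ : K) (hz : IsIntegral S z) (hy : IsIntegral S y) (hγ : IsIntegral S γ)
    (h : z ^ p = (p : K) ^ 2 * y + p * (z * γ)) : IsIntegral S (z ^ (p - 1) / p) := by
  obtain ⟨r, hr, h'⟩ := pow_add_mod (integralClosure S K).toSubring (p : K) y (z * γ)
    hy (hz.mul hγ) (int_nat S p) (p - 1)
  refine artin_int p hp.two_le _ (γ ^ (p - 1)) r (hγ.pow _) hr ?_
  have h1 : z ^ p = p * (p * y + z * γ) := by rw [h]; ring
  have h2 : (p : K) ^ p = p ^ (p - 1) * p := by rw [← pow_succ, Nat.sub_add_cancel hp.pos]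
  rw [div_pow, ← pow_mul, mul_comm, pow_mul, h1, mul_pow, h', h2]
  field_simp
  ring

theorem not_dvd_a {S K : Type*} [CommRing S] [IsDomain S] [Field K] [Algebra S K]
    (p : ℕ) (hp : p.Prime) (hp3 : 3 ≤ p) (hpS : Prime (p : S)) (inj : Function.Injective (algebraMap S K))
    (h a f : S) (hf : f = h ^ p + a * (p : S)) (ω : K) (hω : ω ^ p = algebraMap S K f)
    (hic : IsIntegrallyClosed (Algebra.adjoin S ({ω} : Set K)))
    (hind : ∀ α : ℕ → S, ∑ i ∈ Finset.range p, α i • (ω - algebraMap S K h) ^ i = 0 → ∀ i < p, α i = 0) :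
    ¬ (p : S) ∣ a := by
  rintro ⟨a', rfl⟩
  have hq : (p : K) ≠ 0 := by
    rw [← map_natCast (algebraMap S K), Ne, map_eq_zero_iff _ inj]; exact hpS.ne_zero
  obtain ⟨c, -, hc⟩ := root_eq p hp h _ f hf ω hω
  set u := ω - algebraMap S K h with hu
  set B := Algebra.adjoin S ({ω} : Set K)
  have hωB : ω ∈ B := Algebra.self_mem_adjoin_singleton S ω
  have huB : u ∈ B := sub_mem hωB (B.algebraMap_mem h)
  have hωi : IsIntegral S ω := IsIntegral.of_pow hp.pos (by rw [hω]; exact isIntegral_algebraMap)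
  have hBi : ∀ x ∈ B, IsIntegral S x := fun x hx => (adjoin_le_integralClosure hωi) hx
  obtain ⟨s, hs, hb⟩ := binom_eq p hp hp3 B h u huB
  have e1 : algebraMap S K h + u = ω := by rw [hu]; ring
  rw [e1, hω, hf] at hb
  simp only [map_add, map_mul, map_pow, map_natCast] at hb
  have hτ : IsIntegral S (u ^ (p - 1) / p) := by
    refine tau_int p hp hq u (algebraMap S K a') (-(algebraMap S K h ^ (p - 1) + u * s)) (hBi _ huB) isIntegral_algebraMap
      (hBi _ (neg_mem (add_mem (pow_mem (B.algebraMap_mem h) _) (mul_mem huB hs)))) ?_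
    linear_combination -hb
  have hτB := mem_of_ic B (u ^ (p - 1)) p _ (pow_mem huB _) (natCast_mem B p) hq (by field_simp) hτ
  obtain ⟨α, hα⟩ := mem_pow_span' p hp.pos u ⟨fun k => (p : S) * c k, by
    rw [hc, Finset.smul_sum]; simp only [mul_smul]⟩ _ (adjoin_shift1 ω h hτB)
  have h0 := hind (fun i => (p : S) * α i - if i = p - 1 then 1 else 0) (by
    simp only [sub_smul, Finset.sum_sub_distrib, ite_smul, zero_smul, one_smul, Finset.sum_ite_eq', mul_smul, ← Finset.smul_sum]
    rw [← hα, if_pos (Finset.mem_range.2 (by have := hp.pos; omega)), Algebra.smul_def, map_natCast]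
    field_simp
    ring) (p - 1) (by have := hp.pos; omega)
  simp only [if_true] at h0
  exact hpS.not_isUnit (IsUnit.of_mul_eq_one _ (sub_eq_zero.1 h0))

theorem heightOne_span {S : Type*} [CommRing S] [IsDomain S] [IsNoetherianRing S] (q : S) (hq : Prime q) :
    IsHeightOnePrime (Ideal.span {q}) := by
  have hP : (Ideal.span {q}).IsPrime := (Ideal.span_singleton_prime hq.ne_zero).2 hq
  refine ⟨hP, ?_⟩
  rw [← PrimeSpectrum.height_eq_orderHeight]
  change (Ideal.span {q}).height = 1
  exact Ideal.height_span_singleton_eq_one_of_mem_nonZeroDivisors (mem_nonZeroDivisors_of_ne_zero hq.ne_zero) hq.not_isUnit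

theorem not_dvd_h {S : Type*} [CommRing S] [IsDomain S] [IsNoetherianRing S] [IsLocalRing S]
    (p : ℕ) (hp : p.Prime) (hpS : Prime (p : S)) (f g h₁ a : S) (hf : f = h₁ ^ p + a * (p : S))
    (hfg : SatisfiesA1 f g ∨ IsUnit f) (ha : ¬ (p : S) ∣ a)
    (hfg1 : ∃ x y : S, f * g = x ^ p + y * (p : S) ^ 2) : ¬ (p : S) ∣ h₁ := by
  intro hd
  have hpf : (p : S) ∣ f := by
    rw [hf]; exact dvd_add (dvd_pow hd hp.ne_zero) (dvd_mul_left _ _)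
  rcases hfg with hA | hu
  · obtain ⟨x, y, hxy⟩ := hfg1
    have hpg : ¬ (p : S) ∣ g := fun hg => hA _ (heightOne_span _ hpS)
      ⟨Ideal.mem_span_singleton.2 hpf, Ideal.mem_span_singleton.2 hg⟩
    have hpx : (p : S) ∣ x := by
      apply hpS.dvd_of_dvd_pow (n := p)
      rw [eq_sub_of_add_eq hxy.symm]
      exact dvd_sub (hpf.mul_right _) (dvd_mul_of_dvd_right (dvd_pow_self _ two_ne_zero) _)
    have h2 : ∀ t : S, (p : S) ∣ t → (p : S) ^ 2 ∣ t ^ p := fun t ht =>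
      (pow_dvd_pow_of_dvd ht 2).trans (pow_dvd_pow _ hp.two_le)
    have h3 : (p : S) ^ 2 ∣ f := hpS.pow_dvd_of_dvd_mul_right 2 hpg (by
      rw [hxy]; exact dvd_add (h2 _ hpx) (dvd_mul_left _ _))
    rw [hf] at h3
    have h4 := (dvd_add_right (h2 _ hd)).1 h3
    rw [sq] at h4
    exact ha ((mul_dvd_mul_iff_right hpS.ne_zero).1 h4)
  · exact hpS.not_isUnit (isUnit_of_dvd_unit hpf hu)

theorem fg_form {S : Type*} [CommRing S] [IsDomain S]
    (p : ℕ) (hp : p.Prime) (hpS : Prime (p : S)) (f g h₁ h₂ a b : S) (hf : f = h₁ ^ p + a * (p : S))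
    (hg : g = h₂ ^ p + b * (p : S))
    (hfg1 : ∃ x y : S, f * g = x ^ p + y * (p : S) ^ 2) : ∃ y, f * g = (h₁ * h₂) ^ p + (p : S) ^ 2 * y := by
  obtain ⟨x, y, hxy⟩ := hfg1
  have hpx : (p : S) ∣ x - h₁ * h₂ := by
    apply hpS.dvd_of_dvd_pow (n := p)
    obtain ⟨r, hr⟩ := exists_add_pow_prime_eq hp (x - h₁ * h₂) (h₁ * h₂)
    rw [sub_add_cancel] at hr
    refine ⟨h₁ ^ p * b + h₂ ^ p * a + a * b * p - y * p - (x - h₁ * h₂) * (h₁ * h₂) * r, ?_⟩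
    rw [hf, hg, hr, mul_pow] at hxy
    linear_combination -hxy
  obtain ⟨t, ht⟩ := hpx
  obtain ⟨r, hr⟩ := exists_add_pow_prime_eq hp (p * t) (h₁ * h₂)
  have e : x = p * t + h₁ * h₂ := by rw [← ht]; ring
  have e2 : (p : S) ^ p = p ^ 2 * p ^ (p - 2) := by rw [← pow_add]; congr 1; have := hp.two_le; omega
  refine ⟨p ^ (p - 2) * t ^ p + t * (h₁ * h₂) * r + y, ?_⟩
  rw [hxy, e, hr, mul_pow, e2]; ring

end

section

theorem den_half {S L K : Type*} [CommRing S] [IsDomain S] [Field L] [CharZero L] [Algebra S L] [IsFractionRing S L]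
    [Field K] [Algebra L K] [Algebra S K] [IsScalarTower S L K] (n : ℕ) (hn : 0 < n) (ω μ : K) (f g : S)
    (hω : ω ^ n = algebraMap S K f) (hμ : μ ^ n = algebraMap S K g)
    (htop : Algebra.adjoin L ({ω, μ} : Set K) = ⊤) (hdeg : Module.finrank L K = n ^ 2)
    (hic : IsIntegrallyClosed (Algebra.adjoin S ({ω} : Set K))) (r : K) (hr : IsIntegral S r) :
    (n : K) * algebraMap S K g * r ∈ Algebra.adjoin S ({ω, μ} : Set K) := by
  have cyc : ∀ (x : K) (t : S), x ^ n = algebraMap S K t → ∃ c : ℕ → S, x ^ n = ∑ k ∈ Finset.range n, c k • x ^ k := by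
    intro x t h
    refine ⟨fun k => if k = 0 then t else 0, ?_⟩
    rw [h, Finset.sum_eq_single 0]
    · simp [Algebra.smul_def]
    · intro k _ hk; simp [hk]
    · intro h; simp at h; omega
  have : CharZero K := charZero_of_injective_algebraMap (algebraMap L K).injective
  set B := Algebra.adjoin S ({ω} : Set K) with hB
  have : FaithfulSMul B K := (faithfulSMul_iff_algebraMap_injective B K).2 Subtype.val_injective
  let := FractionRing.liftAlgebra B K
  have := FractionRing.isScalarTower_liftAlgebra B K
  have : CharZero (FractionRing B) := (algebraMap (FractionRing B) K).charZero
  have hind : LinearIndependent B (fun j : Fin n => μ ^ (j : ℕ)) := by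
    rw [Fintype.linearIndependent_iff]
    intro b hb
    have hc : ∀ j : Fin n, ∃ α : ℕ → S, (b j : K) = ∑ k ∈ Finset.range n, α k • ω ^ k := fun j =>
      mem_pow_span' n hn ω (cyc ω f hω) _ (b j).2
    choose α hα using hc
    have h0 := indep2 n hn ω μ (cyc ω f hω) (cyc μ g hμ) htop hdeg
      (fun i j => if h : j < n then α ⟨j, h⟩ i else 0) (by
        rw [← hb, Finset.sum_comm, ← Fin.sum_univ_eq_sum_range (fun j => ∑ i ∈ Finset.range n, (if h : j < n then α ⟨j, h⟩ i else 0) • (ω ^ i * μ ^ j))]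
        refine Finset.sum_congr rfl fun j _ => ?_
        change _ = (b j : K) * μ ^ (j : ℕ)
        rw [hα, Finset.sum_mul]
        refine Finset.sum_congr rfl fun i _ => ?_
        simp)
    intro j
    apply Subtype.ext
    rw [hα]
    refine Finset.sum_eq_zero fun i hi => ?_
    have := h0 i (Finset.mem_range.1 hi) j j.2
    simp only [j.2, dite_true] at this
    change α j i = 0 at this
    rw [this, zero_smul]
  have htop' : Algebra.adjoin (FractionRing B) ({μ} : Set K) = ⊤ := by
    rw [eq_top_iff]
    intro x _
    set T := Algebra.adjoin (FractionRing B) ({μ} : Set K)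
    have hBT : ∀ b : K, b ∈ B → b ∈ T := fun b hb => by
      have := T.algebraMap_mem (algebraMap B (FractionRing B) ⟨b, hb⟩)
      rwa [← IsScalarTower.algebraMap_apply] at this
    let T' : Subalgebra L K :=
      { T.toSubring with
        algebraMap_mem' := fun l => by
          obtain ⟨s, t, ht, rfl⟩ := IsFractionRing.div_surjective (A := S) l
          have e : algebraMap L K (algebraMap S L s / algebraMap S L t) = algebraMap (FractionRing B) K
              (algebraMap B (FractionRing B) (algebraMap S B s) / algebraMap B (FractionRing B) (algebraMap S B t)) := by
            simp only [map_div₀, ← IsScalarTower.algebraMap_apply]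
          rw [e]
          exact T.algebraMap_mem _ }
    have : Algebra.adjoin L ({ω, μ} : Set K) ≤ T' := by
      apply Algebra.adjoin_le
      rintro y (hy | hy)
      · rw [hy]; exact hBT ω (Algebra.self_mem_adjoin_singleton S ω)
      · rw [Set.mem_singleton_iff.1 hy]; exact Algebra.self_mem_adjoin_singleton _ μ
    rw [htop] at this
    exact this (x := x) Algebra.mem_top
  have key := trace_den (B := B) (E := FractionRing B) n hn μ (algebraMap S B g)
    (by rw [hμ, ← IsScalarTower.algebraMap_apply]) hind htop' r hr.tower_top
  rw [← IsScalarTower.algebraMap_apply] at key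
  have hBA : ∀ b : K, b ∈ B → b ∈ Algebra.adjoin S ({ω, μ} : Set K) := fun b hb =>
    Algebra.adjoin_mono (by simp) hb
  generalize (n : K) * algebraMap S K g * r = w at key ⊢
  induction key using Algebra.adjoin_induction with
  | mem x hx => rw [Set.mem_singleton_iff.1 hx]; exact Algebra.subset_adjoin (by simp)
  | algebraMap b => exact hBA _ b.2
  | add x y _ _ hx hy => exact add_mem hx hy
  | mul x y _ _ hx hy => exact mul_mem hx hy

theorem core_exists {S L K : Type*} [CommRing S] [IsDomain S] [IsNoetherianRing S] [IsLocalRing S]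
    [UniqueFactorizationMonoid S] [Field L] [CharZero L] [Algebra S L] [IsFractionRing S L]
    [Field K] [Algebra L K] [Algebra S K] [IsScalarTower S L K]
    {p : ℕ} (hp : p.Prime) (hp3 : 3 ≤ p) (hpS : Prime ((p : ℕ) : S))
    {f g h₁ h₂ a b : S} (hf : f = h₁ ^ p + a * (p : S)) (hg : g = h₂ ^ p + b * (p : S))
    (hfg : SatisfiesA1 f g ∨ (IsUnit f ∧ IsUnit g))
    {ω μ : K} (hω : ω ^ p = algebraMap S K f) (hμ : μ ^ p = algebraMap S K g)
    (hKgen : Algebra.adjoin L ({ω, μ} : Set K) = ⊤)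
    (hdeg : Module.finrank L K = p ^ 2)
    (hicω : IsIntegrallyClosed (Algebra.adjoin S ({ω} : Set K)))
    (hicμ : IsIntegrallyClosed (Algebra.adjoin S ({μ} : Set K)))
    (hfg1 : ∃ x y : S, f * g = x ^ p + y * (p : S) ^ 2) :
    ∃ (y : S) (c₁ c₂ : ℕ → S) (s : K), Core S K p h₁ h₂ y c₁ c₂ (ω - algebraMap S K h₁) (μ - algebraMap S K h₂) s := by
  have inj : Function.Injective (algebraMap S K) := by
    rw [IsScalarTower.algebraMap_eq S L K]
    exact (algebraMap L K).injective.comp (IsFractionRing.injective S L)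
  obtain ⟨c₁, hc1, hπ⟩ := root_eq p hp h₁ a f hf ω hω
  obtain ⟨c₂, hc2, hρ⟩ := root_eq p hp h₂ b g hg μ hμ
  set π := ω - algebraMap S K h₁ with hπd
  set ρ := μ - algebraMap S K h₂ with hρd
  have hπ' : ∃ c : ℕ → S, π ^ p = ∑ k ∈ Finset.range p, c k • π ^ k := ⟨fun k => (p : S) * c₁ k, by
    rw [hπ, Finset.smul_sum]; simp only [mul_smul]⟩
  have hρ' : ∃ c : ℕ → S, ρ ^ p = ∑ k ∈ Finset.range p, c k • ρ ^ k := ⟨fun k => (p : S) * c₂ k, by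
    rw [hρ, Finset.smul_sum]; simp only [mul_smul]⟩
  have htop : Algebra.adjoin L ({π, ρ} : Set K) = ⊤ := by
    rw [eq_top_iff, ← hKgen]
    have := adjoin_shift2 (R := L) ω μ (algebraMap S L h₁) (algebraMap S L h₂)
    rwa [← IsScalarTower.algebraMap_apply, ← IsScalarTower.algebraMap_apply] at this
  have hind := indep2 p hp.pos π ρ hπ' hρ' htop hdeg
  have ha : ¬ (p : S) ∣ a := by
    refine not_dvd_a p hp hp3 hpS inj h₁ a f hf ω hω hicω fun α h i hi => ?_
    have := hind (fun i j => if j = 0 then α i else 0) (by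
      rw [← h]
      refine Finset.sum_congr rfl fun i _ => ?_
      rw [Finset.sum_eq_single 0]
      · simp [hπd]
      · intro k _ hk; simp [hk]
      · intro h; simp at h; exact absurd h hp.ne_zero) i hi 0 hp.pos
    simpa using this
  have hb : ¬ (p : S) ∣ b := by
    refine not_dvd_a p hp hp3 hpS inj h₂ b g hg μ hμ hicμ fun α h i hi => ?_
    have := hind (fun i j => if i = 0 then α j else 0) (by
      rw [← h, Finset.sum_comm]
      refine Finset.sum_congr rfl fun i _ => ?_
      rw [Finset.sum_eq_single 0]
      · simp [hρd]
      · intro k _ hk; simp [hk]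
      · intro h; simp at h; exact absurd h hp.ne_zero) 0 hp.pos i hi
    simpa using this
  have hh1 : ¬ (p : S) ∣ h₁ := not_dvd_h p hp hpS f g h₁ a hf (hfg.imp id And.left) ha hfg1
  have hh2 : ¬ (p : S) ∣ h₂ := by
    refine not_dvd_h p hp hpS g f h₂ b hg (hfg.imp (fun h P hP hh => h P hP hh.symm) And.right) hb ?_
    rwa [mul_comm g f]
  have hf0 : f ≠ 0 := by
    rintro rfl
    apply hh1
    apply hpS.dvd_of_dvd_pow (n := p)
    exact ⟨-a, by linear_combination -hf⟩
  have hg0 : g ≠ 0 := by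
    rintro rfl
    apply hh2
    apply hpS.dvd_of_dvd_pow (n := p)
    exact ⟨-b, by linear_combination -hg⟩
  have hrel : IsRelPrime g f := by
    rcases hfg with hA | ⟨hu, -⟩
    · rw [UniqueFactorizationMonoid.isRelPrime_iff_no_prime_factors hg0]
      intro d hdg hdf hd
      exact hA _ (heightOne_span d hd) ⟨Ideal.mem_span_singleton.2 hdf, Ideal.mem_span_singleton.2 hdg⟩
    · exact hu.isRelPrime_right
  obtain ⟨y, hy⟩ := fg_form p hp hpS f g h₁ h₂ a b hf hg hfg1
  have hπA : π ∈ Algebra.adjoin S ({π, ρ} : Set K) := Algebra.subset_adjoin (by simp)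
  have hρA : ρ ∈ Algebra.adjoin S ({π, ρ} : Set K) := Algebra.subset_adjoin (by simp)
  obtain ⟨s, hs, hbin⟩ := binom_eq p hp hp3 (Algebra.adjoin S ({π, ρ} : Set K)) (h₁ * h₂) (h₂ • π + h₁ • ρ + π * ρ)
    (add_mem (add_mem (Subalgebra.smul_mem _ hπA _) (Subalgebra.smul_mem _ hρA _)) (mul_mem hπA hρA))
  refine ⟨y, c₁, c₂, s, hp, hp3, hpS, inj, hh1, hh2, hc1 ▸ ha, hc2 ▸ hb, hπ, hρ, hs, ?_, hind, ?_⟩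
  · have e : algebraMap S K (h₁ * h₂) + (h₂ • π + h₁ • ρ + π * ρ) = ω * μ := by
      rw [hπd, hρd]; simp only [Algebra.smul_def, map_mul]; ring
    rw [e, mul_pow, hω, hμ, ← map_mul, hy] at hbin
    set z := h₂ • π + h₁ • ρ + π * ρ
    simp only [Algebra.smul_def, map_mul, map_pow, map_add, map_natCast, map_neg, mul_one] at hbin ⊢
    linear_combination -hbin
  · intro r hr
    have hA := adjoin_shift2 ω μ h₁ h₂
    obtain ⟨α, hα⟩ := mem_pow_span2' p hp.pos π ρ hπ' hρ' _ (hA (den_half (L := L) p hp.pos ω μ f g hω hμ hKgen hdeg hicω r hr))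
    have h2 := den_half (L := L) p hp.pos μ ω g f hμ hω (by rwa [Set.pair_comm]) hdeg hicμ r hr
    rw [Set.pair_comm] at h2
    obtain ⟨β, hβ⟩ := mem_pow_span2' p hp.pos π ρ hπ' hρ' _ (hA h2)
    have h3 := hind (fun i j => f * α i j - g * β i j) (by
      simp only [sub_smul, Finset.sum_sub_distrib, mul_smul, ← Finset.smul_sum]
      rw [← hα, ← hβ]
      simp only [Algebra.smul_def]; ring)
    have h4 : ∀ i j, ∃ t, i < p → j < p → α i j = g * t := by
      intro i j
      by_cases hij : i < p ∧ j < p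
      · have h5 : g ∣ f * α i j := ⟨β i j, sub_eq_zero.1 (h3 i hij.1 j hij.2)⟩
        obtain ⟨t, ht⟩ := hrel.dvd_of_dvd_mul_left h5
        exact ⟨t, fun _ _ => ht⟩
      · exact ⟨0, fun h h' => absurd ⟨h, h'⟩ hij⟩
    choose t ht using h4
    refine ⟨t, ?_⟩
    have hg0' : algebraMap S K g ≠ 0 := (map_ne_zero_iff _ inj).2 hg0
    apply mul_left_cancel₀ hg0'
    rw [Finset.mul_sum]
    have e : algebraMap S K g * (p : S) • r = ∑ i ∈ Finset.range p, ∑ j ∈ Finset.range p, α i j • (π ^ i * ρ ^ j) := by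
      rw [← hα, Algebra.smul_def, map_natCast]; ring
    rw [e]
    refine Finset.sum_congr rfl fun i hi => ?_
    rw [Finset.mul_sum]
    refine Finset.sum_congr rfl fun j hj => ?_
    rw [ht i j (Finset.mem_range.1 hi) (Finset.mem_range.1 hj), mul_smul, Algebra.smul_def g]

end

section

theorem height_le_under {S R : Type*} [CommRing S] [CommRing R] [Algebra S R] [Algebra.IsIntegral S R]
    (Q : Ideal R) [hQ : Q.IsPrime] : Q.height ≤ (Q.comap (algebraMap S R)).height := by
  have h := Order.height_le_height_apply_of_strictMono (PrimeSpectrum.comap (algebraMap S R))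
    (fun I J h => by
      have := I.2
      exact Ideal.IsIntegral.comap_lt_comap (I := I.asIdeal) (J := J.asIdeal) h) ⟨Q, hQ⟩
  rw [← PrimeSpectrum.height_eq_orderHeight, ← PrimeSpectrum.height_eq_orderHeight] at h
  exact h

theorem ht_add_dim {S : Type*} [CommRing S] (q : Ideal S) [hq : q.IsPrime] :
    (q.height : WithBot ℕ∞) + ringKrullDim (S ⧸ q) ≤ ringKrullDim S := by
  have hne : Nonempty (PrimeSpectrum S) := ⟨⟨q, hq⟩⟩
  have h1 : ringKrullDim (S ⧸ q) = (Order.coheight (⟨q, hq⟩ : PrimeSpectrum S) : ℕ∞) := by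
    rw [ringKrullDim_quotient, Order.coheight_eq_krullDim_Ici]
    congr 1
  have h2 : q.height = Order.height (⟨q, hq⟩ : PrimeSpectrum S) := by
    rw [← PrimeSpectrum.height_eq_orderHeight]
  rw [h1, h2, ringKrullDim, Order.krullDim_eq_iSup_height_add_coheight_of_nonempty, ← WithBot.coe_add, WithBot.coe_le_coe]
  exact le_iSup (fun a : PrimeSpectrum S => Order.height a + Order.coheight a) _

theorem depth_le_dim (A : Type*) [CommRing A] [IsLocalRing A] [IsNoetherianRing A] :
    (modDepth A A : WithBot ℕ∞) ≤ ringKrullDim A := by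
  rw [← IsLocalRing.maximalIdeal_height_eq_ringKrullDim, WithBot.coe_le_coe]
  apply sSup_le
  rintro n ⟨rs, rfl, hmem, hreg⟩
  have h := ringKrullDim_add_length_eq_ringKrullDim_of_isRegular rs hreg
  rw [← IsLocalRing.maximalIdeal_height_eq_ringKrullDim (R := A)] at h
  have hnt : Nontrivial (A ⧸ Ideal.ofList rs) := by
    rw [Ideal.Quotient.nontrivial_iff]
    intro h
    have h1 : Ideal.ofList rs ≤ IsLocalRing.maximalIdeal A := Ideal.span_le.2 hmem
    rw [h] at h1
    exact (IsLocalRing.maximalIdeal.isMaximal A).ne_top (top_le_iff.1 h1)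
  have h0 : (0 : WithBot ℕ∞) ≤ ringKrullDim (A ⧸ Ideal.ofList rs) := ringKrullDim_nonneg_of_nontrivial
  rw [← WithBot.coe_le_coe, ← h]
  calc ((rs.length : ℕ∞) : WithBot ℕ∞) = 0 + (rs.length : WithBot ℕ∞) := by rw [zero_add]; rfl
    _ ≤ _ := by gcongr

theorem cm_of_flat {S R : Type*} [CommRing S] [IsLocalRing S] [IsNoetherianRing S] [CommRing R] [Algebra S R]
    [Module.Finite S R] [Module.Flat S R] (d : ℕ) (hS : RegD S d) (hd : ringKrullDim S = d) : IsCMRing R := by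
  intro Q hQ
  have : IsNoetherianRing R := isNoetherian_of_isNoetherianRing_of_finite S R |> fun h => isNoetherian_of_tower S h
  apply le_antisymm (depth_le_dim _)
  rw [IsLocalization.AtPrime.ringKrullDim_eq_height Q, WithBot.coe_le_coe]
  have hq : (Q.comap (algebraMap S R)).IsPrime := inferInstance
  refine (height_le_under (S := S) Q).trans ?_
  set q := Q.comap (algebraMap S R) with hqd
  have hsum := ht_add_dim q
  rw [hd] at hsum
  have hne : Nontrivial (S ⧸ q) := Ideal.Quotient.nontrivial_iff.2 hq.ne_top
  obtain ⟨e, he⟩ : ∃ e : ℕ∞, ringKrullDim (S ⧸ q) = e := by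
    obtain ⟨e, he⟩ := WithBot.ne_bot_iff_exists.1 (fun h => by
      have h0 : (0 : WithBot ℕ∞) ≤ ringKrullDim (S ⧸ q) := ringKrullDim_nonneg_of_nontrivial
      rw [h] at h0
      exact absurd h0 (by simp) : ringKrullDim (S ⧸ q) ≠ ⊥)
    exact ⟨e, he.symm⟩
  rw [he, ← WithBot.coe_add] at hsum
  have hsum : q.height + e ≤ (d : ℕ∞) := by exact_mod_cast hsum
  obtain ⟨t, ht⟩ := ENat.ne_top_iff_exists.1 (ne_top_of_le_ne_top (ENat.natCast_ne_top d) (le_self_add.trans hsum))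
  obtain ⟨e', he'⟩ := ENat.ne_top_iff_exists.1 (ne_top_of_le_ne_top (ENat.natCast_ne_top d) (le_add_self.trans hsum))
  rw [← ht, ← he'] at hsum
  obtain ⟨rs, hl, hmem, hr⟩ := d_grade q (IsLocalRing.le_maximalIdeal hq.ne_top) e' (by rw [he, ← he']; rfl) t S d
    (regD_regular d S hS) (by exact_mod_cast hsum)
  have hfl : Module.Flat S (Localization.AtPrime Q) := Module.Flat.trans S R _
  have hw := hr.of_flat (S := Localization.AtPrime Q)
  have hm : ∀ r ∈ rs.map (algebraMap S (Localization.AtPrime Q)), r ∈ IsLocalRing.maximalIdeal (Localization.AtPrime Q) := by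
    intro r hr
    obtain ⟨s, hs, rfl⟩ := List.mem_map.1 hr
    rw [IsScalarTower.algebraMap_apply S R, ← Localization.AtPrime.map_eq_maximalIdeal]
    exact Ideal.mem_map_of_mem _ (hmem s hs)
  apply le_sSup
  refine ⟨rs.map (algebraMap S (Localization.AtPrime Q)), by simp [hl, ht], hm, ?_⟩
  exact (IsLocalRing.isRegular_iff_isWeaklyRegular_of_subset_maximalIdeal hm).2 hw

end

section

universe u

open RingTheory.Sequence IsLocalRing in
theorem dim_quot_le {T : Type u} [CommRing T] [IsLocalRing T] [IsNoetherianRing T] (I P : Ideal T) [hP : P.IsPrime]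
    (hI : maximalIdeal T ∈ I.minimalPrimes) (s : Finset T) (hs : ∀ x ∈ s, x ∈ maximalIdeal T)
    (h : I ≤ P ⊔ Ideal.span s) : ringKrullDim (T ⧸ P) ≤ s.card := by
  classical
  have : IsLocalRing (T ⧸ P) := IsLocalRing.of_surjective' (Ideal.Quotient.mk P) Ideal.Quotient.mk_surjective
  have hloc : IsLocalHom (Ideal.Quotient.mk P) := IsLocalHom.of_surjective _ Ideal.Quotient.mk_surjective
  set s' : Finset (T ⧸ P) := s.image (Ideal.Quotient.mk P)
  have h1 := ringKrullDim_le_ringKrullDim_quotient_add_card s' (by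
    rw [IsLocalRing.ringJacobson_eq_maximalIdeal]
    intro y hy
    obtain ⟨x, hx, rfl⟩ := Finset.mem_image.1 (Finset.mem_coe.1 hy)
    exact (IsLocalRing.mem_maximalIdeal _).2 (fun hu => (IsLocalRing.mem_maximalIdeal _).1 (hs x hx) (hloc.map_nonunit x hu)))
  have h0 : ringKrullDim ((T ⧸ P) ⧸ Ideal.span (s' : Set (T ⧸ P))) ≤ 0 := by
    have : Ring.KrullDimLE 0 ((T ⧸ P) ⧸ Ideal.span (s' : Set (T ⧸ P))) := by
      rw [Ring.krullDimLE_zero_iff]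
      intro J hJ
      let F : T →+* ((T ⧸ P) ⧸ Ideal.span (s' : Set (T ⧸ P))) := (Ideal.Quotient.mk _).comp (Ideal.Quotient.mk P)
      have hF : Function.Surjective F := Ideal.Quotient.mk_surjective.comp Ideal.Quotient.mk_surjective
      have hJp : (J.comap F).IsPrime := inferInstance
      have hle : I ≤ J.comap F := by
        refine h.trans (sup_le ?_ (Ideal.span_le.2 ?_))
        · intro x hx
          have : F x = 0 := by
            change Ideal.Quotient.mk _ (Ideal.Quotient.mk P x) = 0
            rw [Ideal.Quotient.eq_zero_iff_mem.2 hx, map_zero]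
          rw [Ideal.mem_comap, this]; exact zero_mem _
        · intro x hx
          have : F x = 0 := by
            change Ideal.Quotient.mk _ (Ideal.Quotient.mk P x) = 0
            rw [Ideal.Quotient.eq_zero_iff_mem]
            exact Ideal.subset_span (Finset.mem_coe.2 (Finset.mem_image_of_mem _ hx))
          change F x ∈ J
          rw [this]; exact zero_mem _
      have hm : J.comap F = maximalIdeal T :=
        le_antisymm (le_maximalIdeal hJp.ne_top) (hI.2 ⟨hJp, hle⟩ (le_maximalIdeal hJp.ne_top))
      have := Ideal.map_comap_of_surjective F hF J
      rw [hm] at this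
      rcases Ideal.map_eq_top_or_isMaximal_of_surjective F hF (maximalIdeal.isMaximal T) with h | h
      · rw [this] at h; exact absurd h hJ.ne_top
      · rwa [this] at h
    exact (Ring.krullDimLE_iff).1 this
  calc _ ≤ _ := h1
    _ ≤ 0 + (s.card : WithBot ℕ∞) := by
      gcongr
      exact Finset.card_image_le
    _ = _ := zero_add _

open RingTheory.Sequence IsLocalRing in
theorem reg_step {T : Type u} [CommRing T] [IsLocalRing T] [IsNoetherianRing T] (M : Type u) [AddCommGroup M] [Module T M]
    [Module.Finite T M] (I J : Ideal T)
    (hI : maximalIdeal T ∈ I.minimalPrimes) (s : Finset T) (hs : ∀ x ∈ s, x ∈ maximalIdeal T)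
    (hJ : ∀ j ∈ J, ∀ m : M, j • m = 0) (x : T)
    (h : I ≤ J ⊔ Ideal.span {x} ⊔ Ideal.span s) (n : ℕ) (hn : s.card ≤ n)
    (hreg : ∃ rs : List T, rs.length = n + 1 ∧ (∀ r ∈ rs, r ∈ maximalIdeal T) ∧ IsRegular M rs) : IsSMulRegular M x := by
  by_contra hcon
  have hx : x ∈ ⋃ P ∈ associatedPrimes T M, (P : Set T) := by
    rw [biUnion_associatedPrimes_eq_compl_regular]; exact hcon
  simp only [Set.mem_iUnion] at hx
  obtain ⟨P, hP, hxP⟩ := hx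
  obtain ⟨rs, hl, hm, hr⟩ := hreg
  have h1 := d_ass_depth rs M hm hr.toIsWeaklyRegular P hP
  have hPp : P.IsPrime := hP.1
  have hJP : J ≤ P := by
    refine le_trans ?_ (IsAssociatedPrime.annihilator_le hP)
    intro j hj
    rw [Module.mem_annihilator]
    exact fun m => Subtype.ext (hJ j hj m)
  have h2 := dim_quot_le I P hI s hs (h.trans (sup_le_sup_right (sup_le hJP (by
    rw [Ideal.span_singleton_le_iff_mem]; exact hxP)) _))
  have h3 := h1.trans h2
  rw [hl] at h3
  have h4 : n + 1 ≤ s.card := by exact_mod_cast h3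
  omega

open RingTheory.Sequence IsLocalRing in
theorem sop_regular {T : Type u} [CommRing T] [IsDomain T] [IsLocalRing T] [IsNoetherianRing T]
    (hreg : ∃ rs : List T, rs.length = 3 ∧ (∀ r ∈ rs, r ∈ maximalIdeal T) ∧ IsRegular T rs)
    (x y z w : T) (hx : x ∈ maximalIdeal T) (hy : y ∈ maximalIdeal T) (hz : z ∈ maximalIdeal T) (hx0 : x ≠ 0)
    (hI : maximalIdeal T ∈ (Ideal.span {x, y, z}).minimalPrimes) (hw : z * w ∈ Ideal.span {x, y}) :
    w ∈ Ideal.span {x, y} := by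
  have r1 : IsSMulRegular T x := fun a b h => mul_left_cancel₀ hx0 h
  have d1 := d_exchange T 2 hreg x hx r1
  have k1 : ∀ m : QuotSMulTop x T, x • m = 0 := by
    intro m
    obtain ⟨t, rfl⟩ := Submodule.mkQ_surjective _ m
    rw [← map_smul, Submodule.mkQ_apply, Submodule.Quotient.mk_eq_zero]
    exact Submodule.smul_mem_pointwise_smul _ _ _ trivial
  have r2 : IsSMulRegular (QuotSMulTop x T) y := by
    refine reg_step _ _ (Ideal.span {x}) hI {z} (by simpa using hz) ?_ y ?_ 1 (by simp) d1
    · intro j hj m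
      obtain ⟨c, rfl⟩ := Ideal.mem_span_singleton'.1 hj
      rw [mul_smul, k1, smul_zero]
    · rw [Finset.coe_singleton, ← Ideal.span_union, ← Ideal.span_union]
      apply Ideal.span_mono
      rintro a (h | h | h) <;> simp_all
  have d2 := d_exchange _ 1 d1 y hy r2
  have k2 : ∀ m : QuotSMulTop y (QuotSMulTop x T), x • m = 0 ∧ y • m = 0 := by
    intro m
    obtain ⟨t, rfl⟩ := Submodule.mkQ_surjective _ m
    constructor
    · rw [← map_smul, k1, map_zero]
    rw [← map_smul, Submodule.mkQ_apply, Submodule.Quotient.mk_eq_zero]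
    exact Submodule.smul_mem_pointwise_smul _ _ _ trivial
  have r3 : IsSMulRegular (QuotSMulTop y (QuotSMulTop x T)) z := by
    refine reg_step _ _ (Ideal.span {x, y}) hI ∅ (by simp) ?_ z ?_ 0 (by simp) d2
    · intro j hj m
      obtain ⟨c, e, rfl⟩ := Ideal.mem_span_pair.1 hj
      rw [add_smul, mul_smul, mul_smul, (k2 m).1, (k2 m).2, smul_zero, smul_zero, add_zero]
    · rw [Finset.coe_empty, ← Ideal.span_union, ← Ideal.span_union]
      apply Ideal.span_mono
      rintro a (h | h | h) <;> simp_all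
  let π : T →ₗ[T] QuotSMulTop y (QuotSMulTop x T) := (Submodule.mkQ _).comp (Submodule.mkQ _)
  have kπ : ∀ a, π a = 0 → a ∈ Ideal.span {x, y} := by
    intro a ha
    change Submodule.Quotient.mk (Submodule.Quotient.mk a) = _ at ha
    rw [Submodule.Quotient.mk_eq_zero, Submodule.mem_smul_pointwise_iff_exists] at ha
    obtain ⟨b, -, hb⟩ := ha
    obtain ⟨b, rfl⟩ := Submodule.Quotient.mk_surjective _ b
    rw [← Submodule.Quotient.mk_smul, Submodule.Quotient.eq, Submodule.mem_smul_pointwise_iff_exists] at hb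
    obtain ⟨c, -, hc⟩ := hb
    rw [Ideal.mem_span_pair]
    refine ⟨-c, b, ?_⟩
    simp only [smul_eq_mul] at hc
    linear_combination -hc
  apply kπ
  apply r3
  change z • π w = z • 0
  rw [smul_zero, ← map_smul, smul_eq_mul]
  obtain ⟨c, e, h⟩ := Ideal.mem_span_pair.1 hw
  rw [← h, map_add, mul_comm c, mul_comm e, ← smul_eq_mul, ← smul_eq_mul, map_smul, map_smul, (k2 _).1, (k2 _).2, add_zero]

end

section

theorem pres_projective {S M ι : Type*} [CommRing S] [AddCommGroup M] [Module S M] [Fintype ι]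
    (rel : ι → S) (ψ : (ι → S) →ₗ[S] M) (hs : Function.Surjective ψ)
    (hk : ∀ x, ψ x = 0 ↔ ∃ u : S, x = u • rel) (i : ι) (hi : IsUnit (rel i)) : Module.Projective S M := by
  obtain ⟨v, hv⟩ := hi.exists_left_inv
  let φ : (ι → S) →ₗ[S] (ι → S) := LinearMap.id - ((v • LinearMap.proj (R := S) (φ := fun _ : ι => S) i).smulRight rel)
  have hφ : ∀ x, φ x = x - (v * x i) • rel := fun x => rfl
  have hker : LinearMap.ker ψ ≤ LinearMap.ker φ := by
    intro x hx
    obtain ⟨u, rfl⟩ := (hk x).1 hx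
    rw [LinearMap.mem_ker, hφ]
    have : v * (u • rel) i = u := by
      simp only [Pi.smul_apply, smul_eq_mul]
      linear_combination u * hv
    rw [this, sub_self]
  let σ : M →ₗ[S] (ι → S) := ((LinearMap.ker ψ).liftQ φ hker).comp (ψ.quotKerEquivOfSurjective hs).symm.toLinearMap
  refine Module.Projective.of_split σ ψ ?_
  ext m
  obtain ⟨x, rfl⟩ := hs m
  have h1 : (ψ.quotKerEquivOfSurjective hs).symm (ψ x) = Submodule.Quotient.mk x := by
    rw [LinearEquiv.symm_apply_eq]; rfl
  change ψ ((LinearMap.ker ψ).liftQ φ hker ((ψ.quotKerEquivOfSurjective hs).symm (ψ x))) = ψ x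
  rw [h1, Submodule.liftQ_apply, hφ, map_sub, sub_eq_self]
  exact (hk _).2 ⟨_, rfl⟩

theorem pres_freeRes {S M ι : Type*} [CommRing S] [IsDomain S] [AddCommGroup M] [Module S M] [Fintype ι]
    (rel : ι → S) (ψ : (ι → S) →ₗ[S] M) (hs : Function.Surjective ψ)
    (hk : ∀ x, ψ x = 0 ↔ ∃ u : S, x = u • rel) (i : ι) (hi : rel i ≠ 0) : HasFreeResLengthLE1 S M := by
  let e := Fintype.equivFin ι
  let E : (Fin (Fintype.card ι) → S) ≃ₗ[S] (ι → S) := LinearEquiv.funCongrLeft S S e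
  let φ₀ : (Fin 1 → S) →ₗ[S] (ι → S) := (LinearMap.proj (R := S) (φ := fun _ : Fin 1 => S) 0).smulRight rel
  have h0 : ∀ u, φ₀ u = u 0 • rel := fun u => rfl
  refine ⟨1, Fintype.card ι, E.symm.toLinearMap.comp φ₀, ψ.comp E.toLinearMap, ?_, hs.comp E.surjective, ?_⟩
  · refine E.symm.injective.comp ?_
    intro u v h
    rw [h0, h0] at h
    have := congrFun h i
    simp only [Pi.smul_apply, smul_eq_mul] at this
    funext j
    rw [Subsingleton.elim j 0]
    exact mul_right_cancel₀ hi this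
  · ext x
    rw [LinearMap.mem_range, LinearMap.mem_ker]
    change _ ↔ ψ (E x) = 0
    rw [hk]
    constructor
    · rintro ⟨u, rfl⟩
      exact ⟨u 0, by change E (E.symm (φ₀ u)) = _; rw [E.apply_symm_apply, h0]⟩
    · rintro ⟨u, hu⟩
      refine ⟨fun _ => u, ?_⟩
      change E.symm (φ₀ _) = x
      rw [h0, ← hu, E.symm_apply_apply]

theorem ht3 {S : Type*} [CommRing S] [IsDomain S] [IsNoetherianRing S] (p k₁ k₂ : S) (hp : Prime p)
    [IsDomain (S ⧸ Ideal.span {p})] [UniqueFactorizationMonoid (S ⧸ Ideal.span {p})]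
    (hk1 : Ideal.Quotient.mk (Ideal.span {p}) k₁ ≠ 0)
    (hrel : IsRelPrime (Ideal.Quotient.mk (Ideal.span {p}) k₁) (Ideal.Quotient.mk (Ideal.span {p}) k₂))
    (q : Ideal S) [hq : q.IsPrime] (hpq : p ∈ q) (h1q : k₁ ∈ q) (h2q : k₂ ∈ q) : 3 ≤ q.height := by
  set T := S ⧸ Ideal.span {p}
  set m := Ideal.Quotient.mk (Ideal.span {p})
  have hms : Function.Surjective m := Ideal.Quotient.mk_surjective
  have hker : RingHom.ker m ≤ q := by
    rw [Ideal.mk_ker, Ideal.span_singleton_le_iff_mem]; exact hpq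
  have hQ : (q.map m).IsPrime := Ideal.map_isPrime_of_surjective hms hker
  have hcm : (q.map m).comap m = q := by
    rw [Ideal.comap_map_of_surjective' m hms]
    exact sup_eq_left.2 hker
  obtain ⟨π, hπq, hπ⟩ := Ideal.IsPrime.exists_mem_prime_of_ne_bot hQ (by
    intro h
    have := Ideal.mem_map_of_mem m h1q
    rw [h] at this
    exact hk1 this)
  have hπp : (Ideal.span {π}).IsPrime := (Ideal.span_singleton_prime hπ.ne_zero).2 hπ
  have l1 : Ideal.span {π} < q.map m := by
    refine lt_of_le_of_ne ((Ideal.span_singleton_le_iff_mem _).2 hπq) fun h => ?_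
    have a1 := Ideal.mem_map_of_mem m h1q
    have a2 := Ideal.mem_map_of_mem m h2q
    rw [← h, Ideal.mem_span_singleton] at a1 a2
    exact hπ.not_isUnit (hrel a1 a2)
  have hA : ((Ideal.span {π}).comap m).IsPrime := inferInstance
  have hB : (Ideal.span {p}).IsPrime := (Ideal.span_singleton_prime hp.ne_zero).2 hp
  have L1 : (Ideal.span {π}).comap m < q := by
    rw [← hcm]
    refine lt_of_le_of_ne (Ideal.comap_mono l1.le) fun h => l1.ne ?_
    exact Ideal.comap_injective_of_surjective m hms h
  have L2 : Ideal.span {p} < (Ideal.span {π}).comap m := by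
    obtain ⟨x, hx⟩ := hms π
    refine lt_of_le_of_ne ?_ ?_
    · rw [Ideal.span_singleton_le_iff_mem, Ideal.mem_comap]
      have : m p = 0 := Ideal.Quotient.eq_zero_iff_mem.2 (Ideal.mem_span_singleton_self p)
      rw [this]; exact zero_mem _
    · intro h
      have : x ∈ (Ideal.span {π}).comap m := by
        rw [Ideal.mem_comap, hx]; exact Ideal.mem_span_singleton_self _
      rw [← h] at this
      exact hπ.ne_zero (hx ▸ Ideal.Quotient.eq_zero_iff_mem.2 this)
  have L3 : (⊥ : Ideal S) < Ideal.span {p} := bot_lt_iff_ne_bot.2 (by simpa using hp.ne_zero)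
  have hbot : (⊥ : Ideal S).IsPrime := Ideal.isPrime_bot
  have s1 := Ideal.height_add_one_le_of_lt_of_isPrime L3
  have s2 := Ideal.height_add_one_le_of_lt_of_isPrime L2
  have s3 := Ideal.height_add_one_le_of_lt_of_isPrime L1
  have s0 : (0 : ℕ∞) ≤ (⊥ : Ideal S).height := bot_le
  calc (3 : ℕ∞) = 0 + 1 + 1 + 1 := by norm_num
    _ ≤ (⊥ : Ideal S).height + 1 + 1 + 1 := by gcongr
    _ ≤ (Ideal.span {p}).height + 1 + 1 := by gcongr
    _ ≤ ((Ideal.span {π}).comap m).height + 1 := by gcongr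
    _ ≤ _ := s3

end

section

open RingTheory.Sequence IsLocalRing in
theorem depth_take (A : Type*) [CommRing A] [IsLocalRing A] (n : ℕ) (h : ((n + 1 : ℕ) : ℕ∞) ≤ modDepth A A) :
    ∃ rs : List A, rs.length = n + 1 ∧ (∀ r ∈ rs, r ∈ maximalIdeal A) ∧ IsRegular A rs := by
  have h1 : (n : ℕ∞) < modDepth A A := lt_of_lt_of_le (by exact_mod_cast Nat.lt_succ_self n) h
  obtain ⟨_, ⟨rs, rfl, hm, hr⟩, hl⟩ := lt_sSup_iff.1 h1
  have hl' : n < rs.length := by exact_mod_cast hl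
  have hm' : ∀ r ∈ rs.take (n + 1), r ∈ maximalIdeal A := fun r hr => hm r (List.mem_of_mem_take hr)
  refine ⟨rs.take (n + 1), by rw [List.length_take]; omega, hm', ?_⟩
  rw [IsLocalRing.isRegular_iff_isWeaklyRegular_of_subset_maximalIdeal hm']
  have := hr.toIsWeaklyRegular
  rw [← List.take_append_drop (n + 1) rs, isWeaklyRegular_append_iff] at this
  exact this.1

open RingTheory.Sequence IsLocalRing in
theorem cm_clear {S R : Type*} [CommRing S] [IsDomain S] [IsNoetherianRing S] [IsIntegrallyClosed S]
    [CommRing R] [IsDomain R] [Algebra S R] [Module.Finite S R] [FaithfulSMul S R] (hCM : IsCMRing R)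
    (p k₁ k₂ : S) (q : Ideal S) (hq : q ∈ (Ideal.span {k₁, k₂, p}).minimalPrimes) (hht : 3 ≤ q.height)
    (hk : k₁ ≠ 0) (w : R)
    (hw : algebraMap S R p * w ∈ Ideal.span {algebraMap S R k₁, algebraMap S R k₂}) :
    ∃ s : S, s ∉ q ∧ algebraMap S R s * w ∈ Ideal.span {algebraMap S R k₁, algebraMap S R k₂} := by
  have : IsNoetherianRing R := isNoetherian_of_isNoetherianRing_of_finite S R |> fun h => isNoetherian_of_tower S h
  set I : Ideal R := Ideal.span {algebraMap S R k₁, algebraMap S R k₂} with hI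
  have hqp : q.IsPrime := hq.1.1
  let J : Ideal R := Submodule.comap (LinearMap.toSpanSingleton R R w) I
  have hJ : ∀ r, r ∈ J ↔ r * w ∈ I := fun r => Iff.rfl
  by_contra hcon
  push Not at hcon
  obtain ⟨Q, hJQ, hQ, hQq⟩ := Ideal.exists_ideal_over_prime_of_isIntegral q J (by
    intro s hs
    by_contra h
    exact hcon s h hs)
  have : Q.LiesOver q := ⟨hQq.symm⟩
  have hhtQ : 3 ≤ Q.height := by
    rw [Ideal.height_eq_height_add_of_liesOver_of_hasGoingDown q Q]
    exact hht.trans (le_self_add)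
  set A := Localization.AtPrime Q
  have hCMQ := hCM Q hQ
  rw [IsLocalization.AtPrime.ringKrullDim_eq_height Q, WithBot.coe_inj] at hCMQ
  have hreg := depth_take A 2 (by rw [hCMQ]; exact hhtQ)
  have hmemq : ∀ x ∈ ({k₁, k₂, p} : Set S), algebraMap S R x ∈ Q := by
    intro x hx
    have := hq.1.2 (Ideal.subset_span hx)
    rw [← hQq] at this
    exact this
  have hmemA : ∀ x ∈ Q, algebraMap R A x ∈ maximalIdeal A := fun x hx =>
    (IsLocalization.AtPrime.to_map_mem_maximal_iff A Q x).2 hx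
  have hinj : Function.Injective (algebraMap R A) := IsLocalization.injective A (Ideal.primeCompl_le_nonZeroDivisors Q)
  have key := sop_regular hreg (algebraMap R A (algebraMap S R k₁)) (algebraMap R A (algebraMap S R k₂))
    (algebraMap R A (algebraMap S R p)) (algebraMap R A w)
    (hmemA _ (hmemq _ (by simp))) (hmemA _ (hmemq _ (by simp))) (hmemA _ (hmemq _ (by simp)))
    (by
      rw [Ne, map_eq_zero_iff _ hinj, map_eq_zero_iff _ (FaithfulSMul.algebraMap_injective S R)]
      exact hk)
    (by
      have e : Ideal.span {algebraMap R A (algebraMap S R k₁), algebraMap R A (algebraMap S R k₂), algebraMap R A (algebraMap S R p)} =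
          Ideal.map (algebraMap R A) (Ideal.map (algebraMap S R) (Ideal.span {k₁, k₂, p})) := by
        simp [Ideal.map_span, Set.image_insert_eq]
      rw [e, IsLocalization.minimalPrimes_map Q.primeCompl A, Set.mem_preimage]
      rw [IsLocalization.AtPrime.under_maximalIdeal A Q]
      refine ⟨⟨hQ, ?_⟩, ?_⟩
      · rw [Ideal.map_le_iff_le_comap, hQq]; exact hq.1.2
      · rintro P ⟨hP, hle⟩ hPQ
        by_contra hne
        have hlt := Ideal.IsIntegral.comap_lt_comap (R := S) (lt_of_le_not_ge hPQ hne)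
        rw [hQq] at hlt
        exact not_le_of_gt hlt (hq.2 ⟨inferInstance, Ideal.map_le_iff_le_comap.1 hle⟩ hlt.le))
    (by
      have := Ideal.mem_map_of_mem (algebraMap R A) hw
      rw [hI, Ideal.map_span, map_mul] at this
      simpa [Set.image_insert_eq] using this)
  have key' : algebraMap R A w ∈ I.map (algebraMap R A) := by
    rw [hI, Ideal.map_span]
    simpa [Set.image_insert_eq] using key
  obtain ⟨t, ht, htw⟩ := (IsLocalization.algebraMap_mem_map_algebraMap_iff Q.primeCompl A I w).1 key'
  exact ht (hJQ ((hJ t).2 htw))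

end

section

theorem pres_not_cm {S R ι : Type*} [CommRing S] [IsDomain S] [IsNoetherianRing S] [IsIntegrallyClosed S]
    [CommRing R] [IsDomain R] [Algebra S R] [Module.Finite S R] [FaithfulSMul S R] (hCM : IsCMRing R)
    [Fintype ι] (p k₁ k₂ : S) (hp : Prime p)
    [IsDomain (S ⧸ Ideal.span {p})] [UniqueFactorizationMonoid (S ⧸ Ideal.span {p})]
    (hk1 : Ideal.Quotient.mk (Ideal.span {p}) k₁ ≠ 0)
    (hrel : IsRelPrime (Ideal.Quotient.mk (Ideal.span {p}) k₁) (Ideal.Quotient.mk (Ideal.span {p}) k₂))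
    (hne : Ideal.span {k₁, k₂, p} ≠ ⊤)
    (rel : ι → S) (ψ : (ι → S) →ₗ[S] R) (hs : Function.Surjective ψ)
    (hk : ∀ x, ψ x = 0 ↔ ∃ u : S, x = u • rel) (i0 : ι) (h0 : rel i0 = -p)
    (hdvd : ∀ i, i ≠ i0 → k₁ ∣ rel i ∨ k₂ ∣ rel i) : False := by
  classical
  obtain ⟨q, hq⟩ := Ideal.nonempty_minimalPrimes hne
  have hqp : q.IsPrime := hq.1.1
  have hm : ∀ x ∈ ({k₁, k₂, p} : Set S), x ∈ q := fun x hx => hq.1.2 (Ideal.subset_span hx)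
  have hht := ht3 p k₁ k₂ hp hk1 hrel q (hm _ (by simp)) (hm _ (by simp)) (hm _ (by simp))
  have hk0 : k₁ ≠ 0 := fun h => hk1 (by rw [h, map_zero])
  set w := ψ (Pi.single i0 1) with hw
  have hrel0 : ∑ i, rel i • ψ (Pi.single i 1) = 0 := by
    have h1 : ψ rel = 0 := (hk rel).2 ⟨1, (one_smul _ _).symm⟩
    rw [← h1]
    conv_rhs => rw [pi_eq_sum_univ' rel]
    rw [map_sum]
    refine Finset.sum_congr rfl fun i _ => ?_
    rw [map_smul]
  obtain ⟨s, hsq, hsw⟩ := cm_clear hCM p k₁ k₂ q hq hht hk0 w (by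
    rw [← Finset.add_sum_erase _ _ (Finset.mem_univ i0), h0, ← hw] at hrel0
    have : algebraMap S R p * w = ∑ x ∈ Finset.univ.erase i0, rel x • ψ (Pi.single x 1) := by
      rw [← Algebra.smul_def]
      rw [neg_smul] at hrel0
      linear_combination -hrel0
    rw [this]
    refine Ideal.sum_mem _ fun i hi => ?_
    rw [Algebra.smul_def]
    refine Ideal.mul_mem_right _ _ ?_
    rcases hdvd i (Finset.ne_of_mem_erase hi) with h | h
    · exact Ideal.mem_of_dvd _ (map_dvd (algebraMap S R) h) (Ideal.subset_span (by simp))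
    · exact Ideal.mem_of_dvd _ (map_dvd (algebraMap S R) h) (Ideal.subset_span (by simp)))
  obtain ⟨r₁, r₂, hr⟩ := Ideal.mem_span_pair.1 hsw
  obtain ⟨x₁, rfl⟩ := hs r₁
  obtain ⟨x₂, rfl⟩ := hs r₂
  obtain ⟨u, hu⟩ := (hk (s • Pi.single i0 1 - k₁ • x₁ - k₂ • x₂)).1 (by
    rw [map_sub, map_sub, map_smul, map_smul, map_smul, Algebra.smul_def, Algebra.smul_def, Algebra.smul_def, ← hw, ← hr]
    ring)
  have hc := congrFun hu i0
  simp only [Pi.sub_apply, Pi.smul_apply, Pi.single_eq_same, smul_eq_mul, mul_one, h0] at hc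
  apply hsq
  have : s = k₁ * x₁ i0 + k₂ * x₂ i0 - p * u := by linear_combination hc
  rw [this]
  exact q.sub_mem (q.add_mem (q.mul_mem_right _ (hm _ (by simp))) (q.mul_mem_right _ (hm _ (by simp)))) (q.mul_mem_right _ (hm _ (by simp)))

open IsLocalRing in
theorem two_gen_iff {S : Type*} [CommRing S] [IsDomain S] [IsLocalRing S] (p h₁ h₂ d k₁ k₂ : S)
    (hp : Prime p) (hpm : p ∈ maximalIdeal S) (hpm2 : p ∉ maximalIdeal S ^ 2)
    [IsDomain (S ⧸ Ideal.span {p})] [IsLocalRing (S ⧸ Ideal.span {p})]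
    (hd0 : Ideal.Quotient.mk (Ideal.span {p}) d ≠ 0)
    (hrel : IsRelPrime (Ideal.Quotient.mk (Ideal.span {p}) k₁) (Ideal.Quotient.mk (Ideal.span {p}) k₂))
    (hd1 : p ∣ d * k₁ - h₁) (hd2 : p ∣ d * k₂ - h₂) :
    ((∃ x y : S, Ideal.span {p, h₁, h₂} = Ideal.span {x, y}) ∨ Ideal.span {p, h₁, h₂} = ⊤) ↔ IsUnit k₁ ∨ IsUnit k₂ := by
  set m := Ideal.Quotient.mk (Ideal.span {p}) with hmd
  have e1 : m d * m k₁ = m h₁ := by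
    rw [← map_mul, Ideal.Quotient.eq, Ideal.mem_span_singleton]; exact hd1
  have e2 : m d * m k₂ = m h₂ := by
    rw [← map_mul, Ideal.Quotient.eq, Ideal.mem_span_singleton]; exact hd2
  have mp : m p = 0 := Ideal.Quotient.eq_zero_iff_mem.2 (Ideal.mem_span_singleton_self p)
  have hunit : ∀ x, IsUnit (m x) → IsUnit x := by
    intro x hx
    by_contra hxm
    have hle : Ideal.span {p} ≤ maximalIdeal S := (Ideal.span_singleton_le_iff_mem _).2 hpm
    obtain ⟨y, hy⟩ := hx.exists_right_inv
    obtain ⟨y, rfl⟩ := Ideal.Quotient.mk_surjective y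
    rw [← hmd, ← map_mul, ← map_one m, Ideal.Quotient.eq] at hy
    have h2 := hle hy
    have h3 : x * y ∈ maximalIdeal S := Ideal.mul_mem_right _ _ ((mem_maximalIdeal x).2 hxm)
    have := (maximalIdeal S).sub_mem h3 h2
    rw [sub_sub_cancel] at this
    exact (mem_maximalIdeal _).1 this isUnit_one
  have hgen : ∀ y, Ideal.span {p, h₁, h₂} = Ideal.span {p, y} → IsUnit k₁ ∨ IsUnit k₂ := by
    intro y hy
    have hmap : Ideal.span {m h₁, m h₂} = Ideal.span {m y} := by
      have := congrArg (Ideal.map m) hy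
      simp only [Ideal.map_span, Set.image_insert_eq, Set.image_singleton, mp] at this
      simpa using this
    have m1 : m y ∣ m h₁ := Ideal.mem_span_singleton.1 (hmap ▸ Ideal.subset_span (by simp))
    have m2 : m y ∣ m h₂ := Ideal.mem_span_singleton.1 (hmap ▸ Ideal.subset_span (by simp))
    have m3 : m y ∈ Ideal.span {m h₁, m h₂} := hmap ▸ Ideal.mem_span_singleton_self _
    obtain ⟨u, v, huv⟩ := Ideal.mem_span_pair.1 m3
    set e := u * m k₁ + v * m k₂ with he
    have hye : m y = m d * e := by rw [← huv, he, ← e1, ← e2]; ring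
    rw [hye, ← e1] at m1
    rw [hye, ← e2] at m2
    have heu : IsUnit e := hrel ((mul_dvd_mul_iff_left hd0).1 m1) ((mul_dvd_mul_iff_left hd0).1 m2)
    rcases isUnit_or_isUnit_of_isUnit_add heu with h | h
    · exact Or.inl (hunit _ (isUnit_of_mul_isUnit_right h))
    · exact Or.inr (hunit _ (isUnit_of_mul_isUnit_right h))
  have hsw : ∀ x y : S, (∃ α β : S, α * x + β * y = p ∧ IsUnit α) → Ideal.span {x, y} = Ideal.span {p, y} := by
    rintro x y ⟨α, β, hp', hα⟩
    obtain ⟨v, hv⟩ := hα.exists_left_inv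
    apply le_antisymm
    · rw [Ideal.span_le, Set.insert_subset_iff, Set.singleton_subset_iff]
      refine ⟨Ideal.mem_span_pair.2 ⟨v, -(v * β), ?_⟩, Ideal.subset_span (by simp)⟩
      linear_combination (-v) * hp' + x * hv
    · rw [Ideal.span_le, Set.insert_subset_iff, Set.singleton_subset_iff]
      exact ⟨Ideal.mem_span_pair.2 ⟨α, β, hp'⟩, Ideal.subset_span (by simp)⟩
  constructor
  · intro h
    by_cases htop : Ideal.span {p, h₁, h₂} = ⊤
    · refine hgen 1 ?_
      rw [htop, eq_comm, Ideal.eq_top_iff_one]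
      exact Ideal.subset_span (by simp)
    · rcases h with ⟨x, y, hxy⟩ | h
      · have hle := le_maximalIdeal htop
        rw [hxy] at hle
        have hx : x ∈ maximalIdeal S := hle (Ideal.subset_span (by simp))
        have hy : y ∈ maximalIdeal S := hle (Ideal.subset_span (by simp))
        have hpxy : p ∈ Ideal.span {x, y} := hxy ▸ Ideal.subset_span (by simp)
        obtain ⟨α, β, hab⟩ := Ideal.mem_span_pair.1 hpxy
        by_cases hα : IsUnit α
        · exact hgen y (hxy.trans (hsw x y ⟨α, β, hab, hα⟩))
        by_cases hβ : IsUnit β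
        · refine hgen x (hxy.trans ?_)
          rw [Set.pair_comm x y]
          exact hsw y x ⟨β, α, by rw [← hab]; ring, hβ⟩
        exfalso
        apply hpm2
        rw [← hab, pow_two]
        exact Ideal.add_mem _ (Ideal.mul_mem_mul ((mem_maximalIdeal α).2 hα) hx) (Ideal.mul_mem_mul ((mem_maximalIdeal β).2 hβ) hy)
      · exact absurd h htop
  · intro h
    left
    refine ⟨p, d, ?_⟩
    obtain ⟨u, hu⟩ := hd1
    obtain ⟨v, hv⟩ := hd2
    apply le_antisymm
    · rw [Ideal.span_le, Set.insert_subset_iff, Set.insert_subset_iff, Set.singleton_subset_iff]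
      refine ⟨Ideal.subset_span (by simp), Ideal.mem_span_pair.2 ⟨-u, k₁, ?_⟩, Ideal.mem_span_pair.2 ⟨-v, k₂, ?_⟩⟩
      · linear_combination hu
      · linear_combination hv
    · rw [Ideal.span_le, Set.insert_subset_iff, Set.singleton_subset_iff]
      refine ⟨Ideal.subset_span (by simp), ?_⟩
      rcases h with h | h
      · obtain ⟨t, ht⟩ := h.exists_right_inv
        refine Ideal.mem_span_insert.2 ⟨u * t, t * h₁, Ideal.mul_mem_left _ _ (Ideal.subset_span (by simp)), ?_⟩
        linear_combination t * hu - d * ht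
      · obtain ⟨t, ht⟩ := h.exists_right_inv
        refine Ideal.mem_span_insert.2 ⟨v * t, t * h₂, Ideal.mul_mem_left _ _ (Ideal.subset_span (by simp)), ?_⟩
        linear_combination t * hv - d * ht

end

theorem stmt12
    {S : Type*} [CommRing S] [IsDomain S] [IsNoetherianRing S] [IsLocalRing S]
    [IsIntegrallyClosed S]
    {L : Type*} [Field L] [CharZero L] [Algebra S L] [IsFractionRing S L]
    {K : Type*} [Field K] [Algebra L K] [Algebra S K] [IsScalarTower S L K]
    {p : ℕ} (hp : p.Prime) (hp3 : 3 ≤ p) (hpS : Prime ((p : ℕ) : S))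
    (hSmodp : IsIntegrallyClosed (S ⧸ Ideal.span {((p : ℕ) : S)}))
    (hreg : ∃ s : Finset S, Ideal.span (s : Set S) = IsLocalRing.maximalIdeal S ∧
      (s.card : WithBot ℕ∞) = ringKrullDim S)
    (hmix : ((p : ℕ) : S) ∈ IsLocalRing.maximalIdeal S ∧
      ((p : ℕ) : S) ∉ IsLocalRing.maximalIdeal S ^ 2)
    {f g h₁ h₂ a b : S} (hf : f = h₁ ^ p + a * (p : S)) (hg : g = h₂ ^ p + b * (p : S))
    (hfg : (¬IsUnit f ∧ ¬IsUnit g ∧ PaperSquarefree f ∧ PaperSquarefree g ∧ SatisfiesA1 f g) ∨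
      (IsUnit f ∧ IsUnit g ∧ (∀ x : S, x ^ p ≠ f) ∧ (∀ x : S, x ^ p ≠ g)))
    {ω μ : K} (hω : ω ^ p = algebraMap S K f) (hμ : μ ^ p = algebraMap S K g)
    (hKgen : Algebra.adjoin L ({ω, μ} : Set K) = ⊤)
    (hdeg : Module.finrank L K = p ^ 2)
    (hicω : IsIntegrallyClosed (Algebra.adjoin S ({ω} : Set K)))
    (hicμ : IsIntegrallyClosed (Algebra.adjoin S ({μ} : Set K)))
    (hh₁ : h₁ ≠ 0) (hh₂ : h₂ ≠ 0)
    (hfg1 : ∃ x y : S, f * g = x ^ p + y * (p : S) ^ 2) :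
    (IsCMRing (integralClosure S K) ↔ ((∃ x y : S, Ideal.span {((p : ℕ) : S), h₁, h₂} = Ideal.span {x, y}) ∨ Ideal.span {((p : ℕ) : S), h₁, h₂} = ⊤)) ∧
      HasFreeResLengthLE1 S (integralClosure S K) := by
  have hrd : ∃ d, RegD S d ∧ ringKrullDim S = d := by
    obtain ⟨s, hs, hc⟩ := hreg
    exact ⟨s.card, ⟨⟨s, hs, le_rfl⟩, hc.le⟩, hc.symm⟩
  obtain ⟨d0, hRd, hdim⟩ := hrd
  have hUFD : UniqueFactorizationMonoid S := regD_UFD d0 S hRd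
  have hd0 : ∃ e, d0 = e + 1 := by
    cases d0 with
    | succ e => exact ⟨e, rfl⟩
    | zero =>
      exfalso
      obtain ⟨s, hs, hc⟩ := hRd.1
      have : s = ∅ := Finset.card_eq_zero.1 (Nat.le_zero.1 hc)
      rw [this, Finset.coe_empty, Ideal.span_empty] at hs
      have h := hmix.1
      rw [← hs] at h
      exact hpS.ne_zero h
  obtain ⟨e0, rfl⟩ := hd0
  have hTl : IsLocalRing (S ⧸ Ideal.span {(p : S)}) := quot_local hmix.1
  have hTp : (Ideal.span {(p : S)}).IsPrime := (Ideal.span_singleton_prime hpS.ne_zero).2 hpS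
  have hTd : IsDomain (S ⧸ Ideal.span {(p : S)}) := inferInstance
  have hTR : RegD (S ⧸ Ideal.span {(p : S)}) e0 := regD_step hRd hmix.1 hmix.2
  have hTU : UniqueFactorizationMonoid (S ⧸ Ideal.span {(p : S)}) := regD_UFD e0 _ hTR
  obtain ⟨y, c₁, c₂, s, H⟩ := core_exists (L := L) hp hp3 hpS hf hg
    (hfg.elim (fun h => Or.inl h.2.2.2.2) (fun h => Or.inr ⟨h.1, h.2.1⟩)) hω hμ hKgen hdeg hicω hicμ hfg1
  set π := ω - algebraMap S K h₁
  set ρ := μ - algebraMap S K h₂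
  set m := Ideal.Quotient.mk (Ideal.span {(p : S)}) with hm
  have hms : Function.Surjective m := Ideal.Quotient.mk_surjective
  have hmd : ∀ x y : S, m x = m y ↔ (p : S) ∣ x - y := fun x y => by
    rw [hm, Ideal.Quotient.eq, Ideal.mem_span_singleton]
  have hm0 : ∀ x : S, m x = 0 ↔ (p : S) ∣ x := fun x => by
    rw [hm, Ideal.Quotient.eq_zero_iff_mem, Ideal.mem_span_singleton]
  have hh1 : m h₁ ≠ 0 := fun h => H.h1 ((hm0 _).1 h)
  obtain ⟨k₁', k₂', d', hrel, e1, e2⟩ := UniqueFactorizationMonoid.exists_reduced_factors (m h₁) hh1 (m h₂)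
  obtain ⟨k₁, rfl⟩ := hms k₁'
  obtain ⟨k₂, rfl⟩ := hms k₂'
  obtain ⟨d, rfl⟩ := hms d'
  have hd1 : (p : S) ∣ d * k₁ - h₁ := by rw [← hmd, map_mul, e1]
  have hd2 : (p : S) ∣ d * k₂ - h₂ := by rw [← hmd, map_mul, e2]
  have hmd0 : m d ≠ 0 := by
    intro h; rw [h, zero_mul] at e1; exact hh1 e1.symm
  have hmk0 : m k₁ ≠ 0 := by
    intro h; rw [h, mul_zero] at e1; exact hh1 e1.symm
  have hw : IsIntegral S ((k₂ • π + k₁ • ρ) ^ (p - 1) / (p : K)) :=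
    int_of_two (L := L) (p : S) (d ^ (p - 1)) hpS (fun h => hmd0 ((hm0 _).2 (hpS.dvd_of_dvd_pow h))) _
      (H.w_int2 k₁ k₂) (H.w_int1 d k₁ k₂ hd1 hd2)
  obtain ⟨ι, hι, rel, ψ, i0, i1, i2, hs, hk, hr0, hr1, hr2, hdvd⟩ := H.pres d k₁ k₂ hd1 hd2 (by
    intro x z hxz
    rw [← hmd, map_mul, map_mul, map_pow, map_pow] at hxz
    have h1 : m k₁ ^ (p - 1) ∣ m k₂ ^ (p - 1) * m z := ⟨_, hxz.symm⟩
    obtain ⟨t, ht⟩ := (hrel.pow (m := p - 1) (n := p - 1)).dvd_of_dvd_mul_left h1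
    obtain ⟨t, rfl⟩ := hms t
    exact ⟨t, by rw [← hmd, map_mul, map_pow, ht]⟩) hw
  have hfin : Module.Finite S (integralClosure S K) := Module.Finite.of_surjective ψ hs
  have hfaith : FaithfulSMul S (integralClosure S K) := by
    rw [faithfulSMul_iff_algebraMap_injective]
    intro a b hab
    exact H.inj (congrArg Subtype.val hab)
  have hCk : IsCMRing (integralClosure S K) ↔ IsUnit k₁ ∨ IsUnit k₂ := by
    constructor
    · intro hCM
      by_contra hcon
      push Not at hcon
      refine pres_not_cm hCM (p : S) k₁ k₂ hpS hmk0 hrel ?_ rel ψ hs hk i0 hr0 hdvd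
      intro htop
      have : Ideal.span {k₁, k₂, (p : S)} ≤ IsLocalRing.maximalIdeal S := by
        rw [Ideal.span_le, Set.insert_subset_iff, Set.insert_subset_iff, Set.singleton_subset_iff]
        exact ⟨hcon.1, hcon.2, hmix.1⟩
      rw [htop, top_le_iff] at this
      exact Ideal.IsPrime.ne_top' this
    · intro h
      have hproj : Module.Projective S (integralClosure S K) := by
        rcases h with h | h
        · exact pres_projective rel ψ hs hk i1 (hr1 ▸ h.pow _)
        · exact pres_projective rel ψ hs hk i2 (hr2 ▸ h.pow _)
      exact cm_of_flat (S := S) (e0 + 1) hRd hdim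
  refine ⟨hCk.trans (two_gen_iff (p : S) h₁ h₂ d k₁ k₂ hpS hmix.1 hmix.2 hmd0 hrel hd1 hd2).symm, ?_⟩
  exact pres_freeRes rel ψ hs hk i0 (by rw [hr0]; exact neg_ne_zero.2 hpS.ne_zero)
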